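/- For every ε > 0 there exists α₀ > 0 such that for every α ∈ (0, α₀), every finite index set X, every map y : X → ℝ³ satisfying |y(x) − y(x')| > 1 − α for all distinct x, x' ∈ X, and every x ∈ X for which the set A(x) of ordered pairs (x', x'') of distinct elements of N(x) with ||y(x') − y(x'')| − 1| ≤ α has exactly 48 elements, the following holds: #N(x) = 12 and there exist Q ∈ {Q_co, Q_tco}, a bijection Φ : Q ∪ {0} → N(x) ∪ {x} with Φ(0) = x, and a rotation R ∈ SO(3) such that (a) for all distinct η, η' ∈ Q ∪ {0}: ||y(Φ(η)) − y(Φ(η'))| − 1| ≤ α if and only if |η − η'| = 1, and (b) |R·η + y(x) − y(Φ(η))| ≤ ε for all η ∈ Q ∪ {0}. -/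

import Mathlib

/-!
The proof reduces the statement to exact configurations of unit vectors, which are then classified.

*Compactness.* Translate `y x` to the origin. If the conclusion failed for arbitrarily small `α`,
then, there being finitely many contact graphs on a bounded number of neighbours, a limit of the
counterexamples would be a configuration of unit vectors at mutual distances at least `1`, with
forty-eight ordered pairs at distance exactly `1`, that is not near either model
(`eventually_of_exact`, `exists_bound`).

*At most twelve neighbours.* The bound `kissing` on the kissing number follows Delsarte's linear
programming method in Musin's form: the function `mus` is a nonnegative combination of Legendre
polynomials, so that its sum over all pairs of `n` points is at least `n ^ 2`, while its sum over
the points seen from a fixed one is less than `13`, because only the at most four points of a cap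
around the antipode contribute positively besides the point itself (`cap_card`, `cap_sum_lt`).

*The contact graph.* Elementary spherical geometry shows that the contact graph contains none of
a short list of patterns (`Cfg.free`): for example `K₄`, `K₂,₃`, a quadrilateral with an outside
path of length three joining opposite corners, and strips of triangles that would meet. A
pattern-free graph with `12` vertices and `24` edges is the contact graph of the cuboctahedron or
of the twisted cuboctahedron (`classify`). This is a finite search, evaluated by the kernel: dense
pattern-free graphs are generated one vertex of minimal degree at a time, each extension being
either matched with a listed graph through a certified relabelling or shown to contain a pattern.
The soundness of the search is `step_sound`.

*Rigidity.* In a touching quadrilateral `a b c d` one has `(1 + ⟪a, c⟫) * (1 + ⟪b, d⟫) = 1`, so the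
logarithms of the four corner terms add up to zero. Around each vertex, two triangles and two
quadrilaterals force the logarithms of the two corner terms to add up to at most zero, with
equality only for squares (`corner_le`). Summing over all vertices, every quadrilateral is a
square, and all the vectors are determined by one triangle (`Cfg.points_co`, `Cfg.points_tco`).
Both contact graphs have an automorphism which reverses the orientation of that triangle, so the
isometry onto the model can be taken to be a rotation (`Cfg.core`).
-/

open scoped BigOperators
open scoped Classical

noncomputable section

abbrev E3 := EuclideanSpace ℝ (Fin 3)

/-- Interpret a plain vector in `Fin 3 → ℝ` as a point of Euclidean 3-space. -/
def toE3 (v : Fin 3 → ℝ) : E3 := (WithLp.equiv 2 (Fin 3 → ℝ)).symm v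

/-- The basis vectors `b₁ = (0,1,1)/√2`, `b₂ = (1,0,1)/√2`, `b₃ = (1,1,0)/√2` of the
face-centered cubic lattice. -/
def fccB : Fin 3 → E3 := fun i =>
  (Real.sqrt 2)⁻¹ • toE3 (![![(0:ℝ),1,1], ![1,0,1], ![1,1,0]] i)

/-- The face-centered cubic lattice `L_fcc`. -/
def Lfcc : Set E3 := {x | ∃ a : Fin 3 → ℤ, x = ∑ i, (a i : ℝ) • fccB i}

/-- The extra basis vector `b̃₃ = (2√2/3)·(1,1,−1)` of the hcp lattice. -/
def tb3 : E3 := ((2 * Real.sqrt 2) / 3) • toE3 ![1, 1, -1]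

/-- The hexagonal close-packed lattice `L_hcp = {0, b₃} + (b₁ b₂ b̃₃)·ℤ³`. -/
def Lhcp : Set E3 :=
  {x | ∃ a : Fin 3 → ℤ,
    x = (a 0 : ℝ) • fccB 0 + (a 1 : ℝ) • fccB 1 + (a 2 : ℝ) • tb3 ∨
    x = fccB 2 + ((a 0 : ℝ) • fccB 0 + (a 1 : ℝ) • fccB 1 + (a 2 : ℝ) • tb3)}

/-- The cuboctahedron: the set of fcc lattice points on the unit sphere. -/
def Qco : Set E3 := Lfcc ∩ {x | ‖x‖ = 1}

/-- The twisted cuboctahedron: the set of hcp lattice points on the unit sphere. -/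
def Qtco : Set E3 := Lhcp ∩ {x | ‖x‖ = 1}

/-- The nearest neighborhood `N(x) = {x' ∈ X : x' ≠ x, ||y(x')−y(x)| − 1| ≤ α}`. -/
def nbhd {ι : Type*} (α : ℝ) (X : Finset ι) (y : ι → E3) (x : ι) : Set ι :=
  {x' | x' ∈ X ∧ x' ≠ x ∧ |‖y x' - y x‖ - 1| ≤ α}

/-- The set `A(x)` of ordered pairs of distinct nearest neighbors of `x` which are themselves
at near-unit distance. -/
def nbhdEdges {ι : Type*} (α : ℝ) (X : Finset ι) (y : ι → E3) (x : ι) : Set (ι × ι) :=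
  {p | p.1 ∈ nbhd α X y x ∧ p.2 ∈ nbhd α X y x ∧ p.1 ≠ p.2 ∧ |‖y p.1 - y p.2‖ - 1| ≤ α}

/-! ### Graph codes and the search procedure -/

/-!
Graphs on at most twelve vertices are coded by numbers: bit `12 * i + j` tells whether `i` and `j`
are adjacent. The procedures below are built from bare recursors and from operations on natural
numbers which the kernel evaluates natively, so that the search can be checked by reduction.
-/

notation "BR(" b "," t "," e ")" => Bool.rec (motive := fun _ => Bool) e t b
notation "NR(" b "," t "," e ")" => Bool.rec (motive := fun _ => ℕ) e t b

/-- `List.any`, as a bare recursor. -/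
def anyR {α : Type} (l : List α) (f : α → Bool) : Bool :=
  List.rec (motive := fun _ => Bool) false (fun x _ ih => BR(f x, true, ih)) l

/-- Bit `i` of `m`. -/
def bt (m i : ℕ) : Bool := Nat.beq (Nat.land (Nat.shiftRight m i) 1) 1

/-- The neighbours of `i` in the graph code `Y`, as a bit mask. -/
def row (Y i : ℕ) : ℕ := Nat.land (Nat.shiftRight Y (Nat.mul 12 i)) 4095

/-- The mask `m` has at least two bits. -/
def two (m : ℕ) : Bool := BR(Nat.beq (Nat.land m (Nat.sub m 1)) 0, false, true)

/-- The graph `Y` with the edge `i n` added. -/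
def addE (Y i n : ℕ) : ℕ :=
  Nat.lor Y (Nat.lor (Nat.shiftLeft 1 (Nat.add (Nat.mul 12 i) n))
    (Nat.shiftLeft 1 (Nat.add (Nat.mul 12 n) i)))

/-- Mask of the vertices adjacent to all assigned vertices whose offsets are listed in `b`. -/
def cand (Y : ℕ) (b : List ℕ) (asg : List ℕ) : ℕ :=
  List.rec (motive := fun _ => ℕ) 4095
    (fun k _ c => Nat.land c (Nat.shiftRight Y (Nat.mul 12 (asg.getD k 0)))) b

/-- Backtracking search for an embedding of the pattern `p` extending the partial embedding
`asg` (most recent vertex first), whose image has mask `used`. -/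
def emb (xs : List ℕ) (Y : ℕ) (p : List (List ℕ)) : List ℕ → ℕ → Bool :=
  List.rec (motive := fun _ => List ℕ → ℕ → Bool) (fun _ _ => true)
    (fun b _ ih asg used => anyR xs fun x =>
      BR(bt (cand Y b asg) x,
        BR(bt used x, false, ih (x :: asg) (Nat.lor used (Nat.shiftLeft 1 x))), false)) p

/-- Search for a theta graph (quadrilateral `a b c d` together with a path `a e f c`) at
the pair `a`, `c`. -/
def theta (xs : List ℕ) (Y a c : ℕ) : Bool :=
  let m := Nat.land (row Y a) (row Y c)
  BR(two m,
    let F := Nat.land (Nat.xor (row Y c) m) (Nat.xor 4095 (Nat.shiftLeft 1 a))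
    BR(Nat.beq F 0, false,
    anyR xs fun e => BR(Nat.beq e c, false, BR(bt (row Y a) e, BR(bt m e, false,
      BR(Nat.beq (Nat.land F (row Y e)) 0, false, true)), false))),
    false)

/-- Forbidden patterns searched for with their first vertex fixed. A pattern lists, for each
further vertex, its earlier neighbours by offset, `0` being the most recently placed vertex. -/
def patR : List (List (List ℕ)) :=
 [[[0], [1, 0], [2, 1, 0]],
[[0], [1, 0], [2, 1], [3, 1], [3, 1], [1], [1, 0]],
[[0], [1, 0], [1, 0], [3, 2], [2, 1], [1], [1, 0]],
[[0], [1, 0], [1, 0], [2, 0], [1, 0], [5], [1, 0]],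
[[0], [0], [1, 0], [1, 0], [2, 0], [1, 0], [6, 0]],
 [[0], [1, 0], [1], [1, 0], [1, 0], [5, 0]],
 [[0], [1, 0], [2], [1, 0], [1, 0], [4, 0]],
 [[0], [0], [1, 0], [1], [1, 0], [5, 1, 0]]]

/-- Forbidden patterns searched for without a fixed vertex. -/
def patU : List (List (List ℕ)) :=
 [[[], [0], [1, 0], [2, 0], [3, 0], [4, 0], [4, 3], [5, 0], [6, 0]],
  [[], [0], [1, 0], [1, 0], [3], [4, 0], [1, 0], [3, 0], [4, 1, 0]],
  [[], [0], [1, 0], [1, 0], [1, 0], [1, 0], [1, 0], [1, 0], [1, 0], [1, 0], [1, 0]]]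

/-- The graph `Y` contains a forbidden pattern; `n` is its newest vertex, with neighbours `S`. -/
def badP (xs : List ℕ) (n S Y : ℕ) : Bool :=
  BR(anyR xs (fun c => BR(Nat.beq n c, false, theta xs Y n c)), true,
  BR(anyR xs (fun a => BR(bt S a, anyR xs (fun c => BR(Nat.beq a c, false, theta xs Y a c)),
    false)), true,
  BR(anyR patR (fun p => emb xs Y p [n] (Nat.shiftLeft 1 n)), true,
    anyR patU (fun p => emb xs Y p [] 0))))

/-- The value at `i` of the permutation packed in base 16 into `s`. -/
def sg (s i : ℕ) : ℕ := Nat.land (Nat.shiftRight s (Nat.mul 4 i)) 15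

/-- The image of the graph `R` on the vertices `xs` under the relabelling `s`. -/
def img (xs : List ℕ) (R s : ℕ) : ℕ :=
  List.rec (motive := fun _ => ℕ) 0 (fun i _ acc =>
    Nat.lor acc (Nat.shiftLeft
     (List.rec (motive := fun _ => ℕ) 0
       (fun j _ a => NR(bt (row R i) j, Nat.lor a (Nat.shiftLeft 1 (sg s j)), a)) xs)
      (Nat.mul 12 (sg s i)))) xs

/-- The mask of the values of `s` on `xs`. -/
def surj (xs : List ℕ) (s : ℕ) : ℕ :=
  List.rec (motive := fun _ => ℕ) 0 (fun i _ acc => Nat.lor acc (Nat.shiftLeft 1 (sg s i))) xs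

/-- Either `cs` certifies that `Y` is isomorphic to a member of `nxt`, or a forbidden pattern
is found in `Y`. -/
def leaf (xs : List ℕ) (n : ℕ) (nxt : List ℕ) (cs : List (ℕ × ℕ × ℕ)) (S Y : ℕ) : Bool :=
  BR(anyR cs fun c => BR(Nat.beq c.1 S,
    BR(Nat.beq (surj xs c.2.2) (Nat.sub (Nat.shiftLeft 1 (Nat.succ n)) 1),
     Option.rec (motive := fun _ => Bool) false (fun R => Nat.beq (img xs R c.2.2) Y) nxt[c.2.1]?,
     false), false), true, badP xs n S Y)

/-- Mask of the vertices having two common neighbours with `x`. -/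
def confm (xs : List ℕ) (Y x : ℕ) : ℕ :=
  List.rec (motive := fun _ => ℕ) 0
    (fun y _ acc => NR(two (Nat.land (row Y x) (row Y y)), Nat.lor acc (Nat.shiftLeft 1 y), acc)) xs

/-- Runs through the neighbourhoods of a new vertex `n` of the graph `Y`, `r` neighbours being
still to be chosen from `ys`. `S` is the mask chosen so far, `one` and `twos` are the masks of
vertices adjacent to at least one, two members of `S`, and `Z` is the extended graph. The
neighbourhood must contain `forced` and avoid `forb`. -/
def ext (xs : List ℕ) (n forced forb : ℕ) (nxt : List ℕ) (cs : List (ℕ × ℕ × ℕ)) (Y : ℕ)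
    (ys : List ℕ) : ℕ → ℕ → ℕ → ℕ → ℕ → Bool :=
  List.rec (motive := fun _ => ℕ → ℕ → ℕ → ℕ → ℕ → Bool)
   (fun r S _ _ Z => Nat.rec (motive := fun _ => Bool) (leaf xs n nxt cs S Z) (fun _ _ => true) r)
   (fun i _ ih r S one twos Z => Nat.rec (motive := fun _ => Bool)
     (BR(Nat.beq (Nat.land S forced) forced, leaf xs n nxt cs S Z, true))
     (fun r' _ => BR(Nat.ble r' i,
        BR(BR(bt forced i, true, ih (Nat.succ r') S one twos Z),
         BR(bt forb i, true, BR(Nat.beq 0 (Nat.land twos (row Y i)),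
           BR(Nat.beq 0 (Nat.land S (confm xs Y i)),
             ih r' (Nat.lor S (Nat.shiftLeft 1 i)) (Nat.lor one (row Y i))
               (Nat.lor twos (Nat.land one (row Y i))) (addE Z i n),
             true), true)), false), true)) r) ys

/-- The degree of `i` in `Y`. -/
def deg (xs : List ℕ) (Y i : ℕ) : ℕ :=
  List.rec (motive := fun _ => ℕ) 0 (fun j _ s => NR(bt (row Y i) j, Nat.succ s, s)) xs

/-- Twice the number of edges of `Y`. -/
def edges (xs : List ℕ) (Y : ℕ) : ℕ :=
  List.rec (motive := fun _ => ℕ) 0 (fun i _ s => Nat.add (deg xs Y i) s) xs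

/-- Mask of the vertices of degree less than `d`. -/
def low (xs : List ℕ) (Y d : ℕ) : ℕ :=
  List.rec (motive := fun _ => ℕ) 0
    (fun i _ acc => NR(Nat.ble d (deg xs Y i), acc, Nat.lor acc (Nat.shiftLeft 1 i))) xs

/-- Every one-vertex extension of a graph of `cur` by a vertex of minimal degree, with at least
`need` edges and degrees at most `cap`, is isomorphic to a graph of `nxt` or contains a
forbidden pattern. The number `205163983024656`, with
hexadecimal digits `BA9876543210`, packs the identity permutation. -/
def step (xs ys : List ℕ) (n cap need : ℕ) (cur : List (ℕ × List (ℕ × ℕ × ℕ)))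
    (nxt : List ℕ) : Bool :=
  BR(anyR nxt (fun R => BR(Nat.beq (img xs R 205163983024656) R, false, true)), false,
  List.rec (motive := fun _ => Bool) true (fun c _ ih =>
    BR(anyR xs (fun d => BR(Nat.ble need (Nat.add d (Nat.div (edges ys c.1) 2)),
        BR(Nat.beq (low ys c.1 (Nat.sub d 1)) 0,
       BR(ext xs n (low ys c.1 d) (Nat.xor 4095 (low ys c.1 cap)) nxt c.2 c.1 ys d 0 0 0 c.1,
         false, true), false), false)), false, ih)) cur)

/-! ### Bit masks -/

theorem BR_eq (b t e : Bool) : BR(b, t, e) = ((b && t) || (!b && e)) := by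
  cases b <;> simp

theorem anyR_iff {α : Type} (l : List α) (f : α → Bool) :
    anyR l f = true ↔ ∃ x ∈ l, f x = true := by
  induction l with
  | nil => simp [anyR]
  | cons x l ih =>
    change BR(f x, true, anyR l f) = true ↔ _
    cases h : f x <;> simp [h, ih]

theorem bt_eq (m i : ℕ) : bt m i = m.testBit i := by
  have : Nat.land (Nat.shiftRight m i) 1 = m >>> i % 2 := Nat.and_one_is_mod _
  rw [bt, this, Nat.testBit_eq_decide_div_mod_eq, Nat.shiftRight_eq_div_pow,
    Bool.eq_iff_iff, Nat.beq_eq, decide_eq_true_iff]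

theorem testBit_row (Y i j : ℕ) : (row Y i).testBit j = (decide (j < 12) && Y.testBit (12 * i + j)) := by
  have : row Y i = (Y >>> (12 * i)) &&& (2 ^ 12 - 1) := rfl
  rw [this, Nat.testBit_and, Nat.testBit_two_pow_sub_one, Nat.testBit_shiftRight, Bool.and_comm]

theorem two_sound {m : ℕ} (h : two m = true) :
    ∃ i j, i ≠ j ∧ m.testBit i = true ∧ m.testBit j = true := by
  have h0 : m &&& (m - 1) ≠ 0 := by
    intro h0
    have : Nat.land m (Nat.sub m 1) = 0 := h0
    rw [two, this] at h
    exact absurd h (by decide)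
  obtain ⟨i, hi⟩ := Nat.exists_testBit_of_ne_zero h0
  have h1 : m &&& (m - 1) < m := by
    have := @Nat.and_le_right m (m - 1)
    have : m ≠ 0 := by rintro rfl; simp at h0
    omega
  by_contra hc
  push Not at hc
  apply h1.ne
  apply Nat.eq_of_testBit_eq
  intro j
  rw [Nat.testBit_and] at hi ⊢
  simp only [Bool.and_eq_true] at hi
  cases hj : m.testBit j with
  | false => simp
  | true =>
    by_cases hij : i = j
    · subst hij; simp [hi]
    · exact absurd hj (hc i j hij hi.1)

theorem land_ne_zero {a b : ℕ} (h : Nat.beq (Nat.land a b) 0 = false) :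
    ∃ i, a.testBit i = true ∧ b.testBit i = true := by
  have h0 : a &&& b ≠ 0 := by
    intro h0
    have : Nat.land a b = 0 := h0
    rw [this] at h
    exact absurd h (by decide)
  obtain ⟨i, hi⟩ := Nat.exists_testBit_of_ne_zero h0
  exact ⟨i, by simpa [Nat.testBit_and] using hi⟩

theorem testBit_one_shift (y i : ℕ) : (Nat.shiftLeft 1 y).testBit i = decide (i = y) := by
  change (1 <<< y).testBit i = _
  rw [Nat.one_shiftLeft, Nat.testBit_two_pow]
  simp only [eq_comm]

/-- The mask of the vertices `x` of a list with a given property. -/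
theorem testBit_mask (f : ℕ → Bool) (l : List ℕ) (i : ℕ) :
    (List.rec (motive := fun _ => ℕ) 0
      (fun y _ acc => NR(f y, Nat.lor acc (Nat.shiftLeft 1 y), acc)) l : ℕ).testBit i
      = decide (i ∈ l ∧ f i = true) := by
  induction l with
  | nil => simp
  | cons y l ih =>
    cases h : f y with
    | false =>
      simp only [h]
      rw [ih]
      by_cases hy : i = y
      · subst hy; simp [h]
      · simp [hy]
    | true =>
      simp only [h]
      change ((_ : ℕ) ||| Nat.shiftLeft 1 y).testBit i = _
      rw [Nat.testBit_or, ih, testBit_one_shift]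
      by_cases hy : i = y
      · subst hy; simp [h]
      · simp [hy]

theorem testBit_confm (xs : List ℕ) (Y x i : ℕ) :
    (confm xs Y x).testBit i = decide (i ∈ xs ∧ two (Nat.land (row Y x) (row Y i)) = true) :=
  testBit_mask (fun y => two (Nat.land (row Y x) (row Y y))) xs i

theorem testBit_low (xs : List ℕ) (Y d i : ℕ) :
    (low xs Y d).testBit i = decide (i ∈ xs ∧ deg xs Y i < d) := by
  have : low xs Y d = List.rec (motive := fun _ => ℕ) 0
      (fun y _ acc => NR(!Nat.ble d (deg xs Y y), Nat.lor acc (Nat.shiftLeft 1 y), acc)) xs := by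
    unfold low
    congr 1
    funext y _ acc
    cases Nat.ble d (deg xs Y y) <;> rfl
  rw [this, testBit_mask (fun y => !Nat.ble d (deg xs Y y))]
  congr 1
  rw [Bool.not_eq_true', ← Bool.not_eq_true, Nat.ble_eq, not_le]

theorem testBit_lor (a b i : ℕ) : (Nat.lor a b).testBit i = (a.testBit i || b.testBit i) :=
  Nat.testBit_or a b i

theorem testBit_land (a b i : ℕ) : (Nat.land a b).testBit i = (a.testBit i && b.testBit i) :=
  Nat.testBit_and a b i

theorem testBit_xor' (a b i : ℕ) : (Nat.xor a b).testBit i = (a.testBit i ^^ b.testBit i) :=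
  Nat.testBit_xor a b i

theorem testBit_addE (Y i n p : ℕ) : (addE Y i n).testBit p =
    (Y.testBit p || (decide (p = 12 * i + n) || decide (p = 12 * n + i))) := by
  rw [addE, testBit_lor, testBit_lor, testBit_one_shift, testBit_one_shift]
  rfl

theorem testBit_surj (xs : List ℕ) (s i : ℕ) :
    (surj xs s).testBit i = true ↔ ∃ j ∈ xs, sg s j = i := by
  induction xs with
  | nil => simp [surj]
  | cons y l ih =>
    change (Nat.lor (surj l s) (Nat.shiftLeft 1 (sg s y))).testBit i = true ↔ _
    rw [testBit_lor, testBit_one_shift, Bool.or_eq_true, ih]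
    simp only [List.mem_cons, exists_eq_or_imp, decide_eq_true_iff]
    rw [or_comm, eq_comm]

theorem testBit_imgrow (xs : List ℕ) (f : ℕ → Bool) (s p : ℕ) :
    (List.rec (motive := fun _ => ℕ) 0
       (fun j _ a => NR(f j, Nat.lor a (Nat.shiftLeft 1 (sg s j)), a)) xs : ℕ).testBit p = true ↔
      ∃ j ∈ xs, f j = true ∧ p = sg s j := by
  induction xs with
  | nil => simp
  | cons y l ih =>
    cases h : f y with
    | false => simp only [h]; rw [ih]; simp [h]
    | true =>
      simp only [h]
      rw [testBit_lor, testBit_one_shift, Bool.or_eq_true, ih]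
      simp only [List.mem_cons, exists_eq_or_imp, h, decide_eq_true_iff, true_and]
      rw [or_comm]

theorem testBit_img (xs : List ℕ) (R s p : ℕ) : (img xs R s).testBit p = true ↔
    ∃ i ∈ xs, ∃ j ∈ xs, (row R i).testBit j = true ∧ p = 12 * sg s i + sg s j := by
  have key : ∀ l : List ℕ, (List.rec (motive := fun _ => ℕ) 0 (fun i _ acc =>
    Nat.lor acc (Nat.shiftLeft
     (List.rec (motive := fun _ => ℕ) 0
       (fun j _ a => NR(bt (row R i) j, Nat.lor a (Nat.shiftLeft 1 (sg s j)), a)) xs)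
      (Nat.mul 12 (sg s i)))) l : ℕ).testBit p = true ↔
    ∃ i ∈ l, ∃ j ∈ xs, (row R i).testBit j = true ∧ p = 12 * sg s i + sg s j := by
    intro l
    induction l with
    | nil => simp
    | cons y l ih =>
      simp only
      rw [testBit_lor, Bool.or_eq_true, ih]
      have : ∀ m k : ℕ, (Nat.shiftLeft m (Nat.mul 12 k)).testBit p =
        (decide (p ≥ 12 * k) && m.testBit (p - 12 * k)) := fun m k => Nat.testBit_shiftLeft ..
      rw [this, Bool.and_eq_true, testBit_imgrow xs (fun j => bt (row R y) j)]
      simp only [List.mem_cons, exists_eq_or_imp, bt_eq, decide_eq_true_iff]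
      rw [or_comm]
      apply or_congr_left
      constructor
      · rintro ⟨h, j, hj, h1, h2⟩; exact ⟨j, hj, h1, by omega⟩
      · rintro ⟨j, hj, h1, h2⟩; exact ⟨by omega, j, hj, h1, by omega⟩
  exact key xs

/-! ### Soundness of the pattern search -/

/-- The partial embedding `asg` (most recent vertex first) of a pattern into the graph `A`
extends to the further pattern vertices `p`. -/
def Emb {V : Type} (A : V → V → Prop) : List (List ℕ) → List V → Prop
  | [], _ => True
  | b :: p, asg => ∃ x, x ∉ asg ∧ (∀ k ∈ b, ∀ v, asg[k]? = some v → A v x) ∧ Emb A p (x :: asg)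

/-- The graph `A` contains none of the forbidden patterns. -/
structure Free {V : Type} (A : V → V → Prop) : Prop where
  symm : ∀ a b, A a b → A b a
  irrefl : ∀ a, ¬ A a a
  k23 : ∀ a c b d e, a ≠ c → b ≠ d → b ≠ e → d ≠ e → A a b → A a d → A a e →
    A c b → A c d → A c e → False
  theta : ∀ a c b d e f, a ≠ c → b ≠ d → A a b → A c b → A a d → A c d → A a e → A c f →
    A e f → e ≠ c → f ≠ a → e ≠ b → e ≠ d → f ≠ b → f ≠ d → False
  patR : ∀ p ∈ patR, ∀ v, ¬ Emb A p [v]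
  patU : ∀ p ∈ patU, ¬ Emb A p []

/-- The list `[m - 1, …, 0]`. -/
def downTo : ℕ → List ℕ
  | 0 => []
  | m + 1 => m :: downTo m

theorem mem_downTo {m i : ℕ} : i ∈ downTo m ↔ i < m := by
  induction m with
  | zero => simp [downTo]
  | succ m ih => simp [downTo, ih]; omega

/-- The number `Y` codes the subgraph of `A` on the vertices `f 0, …, f (n - 1)`. -/
structure Codes {V : Type} (A : V → V → Prop) (f : ℕ → V) (n Y : ℕ) : Prop where
  inj : ∀ i < n, ∀ j < n, f i = f j → i = j
  adj : ∀ i j, (row Y i).testBit j = true ↔ i < n ∧ j < n ∧ A (f i) (f j)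

theorem cand_sound {Y x k : ℕ} (hx : x < 12) {b asg : List ℕ} (hk : k ∈ b)
    (h : bt (cand Y b asg) x = true) : (row Y (asg.getD k 0)).testBit x = true := by
  rw [bt_eq] at h
  induction b with
  | nil => simp at hk
  | cons l b ih =>
    change (Nat.land (cand Y b asg) (Y >>> (12 * (asg.getD l 0)))).testBit x = true at h
    rw [testBit_land, Bool.and_eq_true, Nat.testBit_shiftRight] at h
    rcases List.mem_cons.1 hk with rfl | hk
    · rw [testBit_row]; simpa [hx] using h.2
    · exact ih hk h.1

theorem emb_sound {V : Type} {A : V → V → Prop} {f : ℕ → V} {n Y : ℕ} (hn : n ≤ 12)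
    (hY : Codes A f n Y) (p : List (List ℕ)) : ∀ (asg : List ℕ) (used : ℕ),
    (∀ i ∈ asg, used.testBit i = true) → (∀ i ∈ asg, i < n) →
    emb (downTo n) Y p asg used = true → Emb A p (asg.map f) := by
  induction p with
  | nil => intros; trivial
  | cons b p ih =>
    intro asg used hu ha h
    change anyR (downTo n) (fun x => BR(bt (cand Y b asg) x,
        BR(bt used x, false, emb (downTo n) Y p (x :: asg) (Nat.lor used (Nat.shiftLeft 1 x))),
        false)) = true at h
    obtain ⟨x, hx, h⟩ := (anyR_iff _ _).1 h
    rw [mem_downTo] at hx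
    simp only [BR_eq, bt_eq used, Bool.and_false, Bool.or_false, Bool.false_or,
      Bool.and_eq_true, Bool.not_eq_true'] at h
    obtain ⟨h1, h2, h3⟩ := h
    refine ⟨f x, ?_, ?_, ?_⟩
    · intro hm
      obtain ⟨i, hi, hix⟩ := List.mem_map.1 hm
      rw [hY.inj i (ha i hi) x hx hix] at hi
      simp [hu x hi] at h2
    · intro k hk v hv
      rw [List.getElem?_map, Option.map_eq_some_iff] at hv
      obtain ⟨i, hi, rfl⟩ := hv
      have := cand_sound (by omega) hk h1
      rw [List.getD_eq_getElem?_getD, hi, Option.getD_some] at this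
      exact ((hY.adj _ _).1 this).2.2
    · refine ih (x :: asg) _ ?_ ?_ h3
      · intro i hi
        rw [testBit_lor, testBit_one_shift]
        rcases List.mem_cons.1 hi with rfl | hi
        · simp
        · simp [hu i hi]
      · intro i hi
        rcases List.mem_cons.1 hi with rfl | hi
        · exact hx
        · exact ha i hi

theorem theta_sound {V : Type} {A : V → V → Prop} {f : ℕ → V} {n Y a c : ℕ}
    (hA : Free A) (hY : Codes A f n Y) (hac : a ≠ c) (h : theta (downTo n) Y a c = true) :
    False := by
  simp only [theta, BR_eq, Bool.and_false, Bool.or_false, Bool.false_or, Bool.and_true,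
      Bool.and_eq_true, Bool.not_eq_true', anyR_iff] at h
  obtain ⟨h1, -, e, he, hec, hae, hme, h2⟩ := h
  obtain ⟨b, d, hbd, hb, hd⟩ := two_sound h1
  obtain ⟨x, hx1, hx2⟩ := land_ne_zero h2
  rw [testBit_land, Bool.and_eq_true, hY.adj, hY.adj] at hb hd
  rw [bt_eq, hY.adj] at hae
  rw [bt_eq] at hme
  rw [hY.adj] at hx2
  rw [testBit_land, Bool.and_eq_true, testBit_xor', testBit_xor', testBit_one_shift] at hx1
  obtain ⟨hx1, hx3⟩ := hx1
  have hmem : ∀ i, (Nat.land (row Y a) (row Y c)).testBit i = true ↔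
      (a < n ∧ i < n ∧ A (f a) (f i)) ∧ (c < n ∧ i < n ∧ A (f c) (f i)) := by
    intro i; rw [testBit_land, Bool.and_eq_true, hY.adj, hY.adj]
  have hcx : (row Y c).testBit x = true := by
    by_contra hcon
    rw [Bool.not_eq_true] at hcon
    rw [testBit_land, hcon] at hx1
    simp at hx1
  have hmx : (Nat.land (row Y a) (row Y c)).testBit x = false := by
    rw [hcx, Bool.true_xor, Bool.not_eq_true'] at hx1
    exact hx1
  have hxa : x ≠ a := by
    rintro rfl
    have h12 : x < 12 := by
      rw [testBit_row] at hcx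
      simp at hcx; exact hcx.1
    have : Nat.testBit 4095 x = true := by
      interval_cases x <;> decide
    simp [this] at hx3
  have hec : e ≠ c := by
    rintro rfl
    simp at hec
  rw [hY.adj] at hcx
  have an := hae.1
  have cn := hcx.1
  have bn := hb.1.2.1
  have dn := hd.1.2.1
  have en := hae.2.1
  have xn := hcx.2.1
  have ne : ∀ {i j}, i < n → j < n → i ≠ j → f i ≠ f j := fun hi hj hij hf => hij (hY.inj _ hi _ hj hf)
  have nm1 : ∀ i, (Nat.land (row Y a) (row Y c)).testBit i = true → e ≠ i := by
    rintro i hi rfl; exact absurd (hme.symm.trans hi) (by decide)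
  have nm2 : ∀ i, (Nat.land (row Y a) (row Y c)).testBit i = true → x ≠ i := by
    rintro i hi rfl; exact absurd (hmx.symm.trans hi) (by decide)
  exact hA.theta (f a) (f c) (f b) (f d) (f e) (f x) (ne an cn hac) (ne bn dn hbd)
    hb.1.2.2 hb.2.2.2 hd.1.2.2 hd.2.2.2 hae.2.2 hcx.2.2 hx2.2.2
    (ne en cn hec) (ne xn an hxa) (ne en bn (nm1 b ((hmem b).2 hb)))
    (ne en dn (nm1 d ((hmem d).2 hd))) (ne xn bn (nm2 b ((hmem b).2 hb)))
    (ne xn dn (nm2 d ((hmem d).2 hd)))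

theorem badP_sound {V : Type} {A : V → V → Prop} {f : ℕ → V} {n S Y : ℕ} (hn : n + 1 ≤ 12)
    (hA : Free A) (hY : Codes A f (n + 1) Y) (h : badP (downTo (n + 1)) n S Y = true) :
    False := by
  simp only [badP, BR_eq, Bool.and_false, Bool.or_false, Bool.false_or, Bool.and_true,
      Bool.and_eq_true, Bool.or_eq_true, Bool.not_eq_true', anyR_iff] at h
  have hne : ∀ a c, Nat.beq a c = false → a ≠ c := by
    rintro a _ h rfl; simp at h
  rcases h with ⟨c, hc, h1, h2⟩ | ⟨-, ⟨a, ha, -, c, hc, h1, h2⟩ | ⟨-, ⟨p, hp, h⟩ | ⟨-, p, hp, h⟩⟩⟩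
  · exact theta_sound hA hY (hne _ _ h1) h2
  · exact theta_sound hA hY (hne _ _ h1) h2
  · refine hA.patR p hp (f n) (emb_sound hn hY p [n] _ ?_ ?_ h)
    · intro i hi
      rw [testBit_one_shift]; simpa using hi
    · intro i hi
      have : i = n := by simpa using hi
      omega
  · exact hA.patU p hp (emb_sound hn hY p [] _ (by simp) (by simp) h)

/-- A certified relabelling turns a coding by `Z` into a coding by `R`. -/
theorem cert_sound {V : Type} {A : V → V → Prop} {f : ℕ → V} {n R s Z : ℕ} (hn : n ≤ 12)
    (hZ : Codes A f n Z) (hR : img (downTo n) R 205163983024656 = R)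
    (hs : surj (downTo n) s = 2 ^ n - 1) (hi : img (downTo n) R s = Z) :
    Codes A (f ∘ sg s) n R ∧ ∀ i < n, sg s i < n := by
  have hid : ∀ i < 12, sg 205163983024656 i = i := by
    intro i hi; interval_cases i <;> rfl
  have hsurj : ∀ i, i < n ↔ ∃ j < n, sg s j = i := by
    intro i
    have := testBit_surj (downTo n) s i
    rw [hs, Nat.testBit_two_pow_sub_one, decide_eq_true_iff] at this
    simpa [mem_downTo] using this
  have hlt : ∀ i < n, sg s i < n := fun i hi => (hsurj _).2 ⟨i, hi, rfl⟩
  have hinj : ∀ i < n, ∀ j < n, sg s i = sg s j → i = j := by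
    let g : Fin n → Fin n := fun i => ⟨sg s i, hlt i i.2⟩
    have hg : Function.Surjective g := by
      intro i
      obtain ⟨j, hj, hji⟩ := (hsurj i).1 i.2
      exact ⟨⟨j, hj⟩, Fin.ext hji⟩
    have hg' := Finite.injective_iff_surjective.2 hg
    intro i hi j hj hij
    have := @hg' ⟨i, hi⟩ ⟨j, hj⟩ (Fin.ext hij)
    exact congrArg Fin.val this
  refine ⟨⟨fun i hi j hj hij => hinj i hi j hj (hZ.inj _ (hlt i hi) _ (hlt j hj) hij), ?_⟩, hlt⟩
  intro i j
  constructor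
  · intro h
    have hij : i < n ∧ j < n := by
      have h' := h
      rw [testBit_row, Bool.and_eq_true, decide_eq_true_iff] at h'
      obtain ⟨h12, h'⟩ := h'
      rw [← hR, testBit_img] at h'
      obtain ⟨i', hi', j', hj', -, hp⟩ := h'
      rw [mem_downTo] at hi' hj'
      rw [hid i' (by omega), hid j' (by omega)] at hp
      omega
    refine ⟨hij.1, hij.2, ?_⟩
    have h1 : Z.testBit (12 * sg s i + sg s j) = true := by
      rw [← hi, testBit_img]
      exact ⟨i, mem_downTo.2 hij.1, j, mem_downTo.2 hij.2, h, rfl⟩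
    have h2 : (row Z (sg s i)).testBit (sg s j) = true := by
      rw [testBit_row, h1]
      have := hlt j hij.2
      simp; omega
    exact ((hZ.adj _ _).1 h2).2.2
  · rintro ⟨h1, h2, h3⟩
    have h4 := (hZ.adj (sg s i) (sg s j)).2 ⟨hlt i h1, hlt j h2, h3⟩
    rw [testBit_row, Bool.and_eq_true, ← hi, testBit_img] at h4
    obtain ⟨-, i', hi', j', hj', h5, h6⟩ := h4
    rw [mem_downTo] at hi' hj'
    have := hlt i h1
    have := hlt j h2
    have := hlt i' hi'
    have := hlt j' hj'
    have e1 := hinj i h1 i' hi' (by omega)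
    have e2 := hinj j h2 j' hj' (by omega)
    rw [e1, e2]; exact h5

/-! ### Soundness of one-vertex extensions -/

/-- In a pattern-free graph, a successful `leaf` must have found a relabelling. -/
theorem leaf_sound {V : Type} {A : V → V → Prop} {f : ℕ → V} {n S Z : ℕ} (hn : n + 1 ≤ 12)
    (hA : Free A) (hZ : Codes A f (n + 1) Z) {nxt : List ℕ} {cs : List (ℕ × ℕ × ℕ)}
    (hw : ∀ R ∈ nxt, img (downTo (n + 1)) R 205163983024656 = R)
    (h : leaf (downTo (n + 1)) n nxt cs S Z = true) :
    ∃ R ∈ nxt, ∃ s : ℕ → ℕ, Codes A (f ∘ s) (n + 1) R ∧ ∀ i < n + 1, s i < n + 1 := by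
  simp only [leaf, BR_eq, Bool.and_false, Bool.or_false, Bool.false_or, Bool.and_true,
      Bool.and_eq_true, Bool.or_eq_true, Bool.not_eq_true', anyR_iff] at h
  rcases h with ⟨c, -, -, h1, h2⟩ | ⟨-, h⟩
  · cases hc : nxt[c.2.1]? with
    | none => rw [hc] at h2; exact absurd h2 Bool.false_ne_true
    | some R =>
      rw [hc] at h2
      have hR : R ∈ nxt := List.mem_of_getElem? hc
      have h3 : surj (downTo (n + 1)) c.2.2 = 2 ^ (n + 1) - 1 := by
        rw [← Nat.one_shiftLeft]
        exact Nat.eq_of_beq_eq_true h1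
      exact ⟨R, hR, sg c.2.2, cert_sound hn hZ (hw R hR) h3 (Nat.eq_of_beq_eq_true h2)⟩
  · exact (badP_sound hn hA hZ h).elim

theorem land_beq_zero {a b : ℕ} (h : ∀ i, a.testBit i = true → b.testBit i = true → False) :
    Nat.beq 0 (Nat.land a b) = true := by
  have : Nat.land a b = 0 := by
    apply Nat.eq_of_testBit_eq
    intro i
    rw [testBit_land, Nat.zero_testBit, Bool.and_eq_false_iff]
    by_contra hc
    simp only [not_or, Bool.not_eq_false] at hc
    exact h i hc.1 hc.2
  rw [this]; rfl

/-- When `ext` succeeds, it has reached the actual neighbourhood of the new vertex `f n`. The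
hypotheses say that the parameters agree with the adjacencies to `f i` for `m ≤ i < n`, and that
`r` neighbours remain among the `f i` with `i < m`. -/
theorem ext_sound {V : Type} {A : V → V → Prop} {f : ℕ → V} {n Y forced forb : ℕ}
    (hn : n + 1 ≤ 12) (hA : Free A) (hY : Codes A f n Y)
    (hinj : ∀ i < n + 1, ∀ j < n + 1, f i = f j → i = j)
    (hf : ∀ i, forced.testBit i = true → i < n ∧ A (f i) (f n))
    (hb : ∀ i, i < n → forb.testBit i = true → ¬ A (f i) (f n))
    {nxt : List ℕ} {cs : List (ℕ × ℕ × ℕ)} (m : ℕ) : m ≤ n → ∀ r S one twos Z : ℕ,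
    (∀ i, S.testBit i = true ↔ m ≤ i ∧ i < n ∧ A (f i) (f n)) →
    (r = ((Finset.range m).filter (fun i => A (f i) (f n))).card) →
    (∀ j, one.testBit j = true → ∃ i, m ≤ i ∧ i < n ∧ A (f i) (f n) ∧ j < n ∧ A (f i) (f j)) →
    (∀ j, twos.testBit j = true → ∃ i i', i ≠ i' ∧ m ≤ i ∧ i < n ∧ A (f i) (f n) ∧ m ≤ i' ∧
      i' < n ∧ A (f i') (f n) ∧ j < n ∧ A (f i) (f j) ∧ A (f i') (f j)) →
    (∀ i j, (row Z i).testBit j = true ↔ (i < n ∧ j < n ∧ A (f i) (f j)) ∨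
      (i = n ∧ m ≤ j ∧ j < n ∧ A (f j) (f n)) ∨ (j = n ∧ m ≤ i ∧ i < n ∧ A (f i) (f n))) →
    ext (downTo (n + 1)) n forced forb nxt cs Y (downTo m) r S one twos Z = true →
    ∃ S' Z', Codes A f (n + 1) Z' ∧ leaf (downTo (n + 1)) n nxt cs S' Z' = true := by
  -- once all neighbours of the new vertex are chosen, `Z` codes the extended graph
  have fin : ∀ m Z : ℕ, (∀ i < m, ¬ A (f i) (f n)) →
    (∀ i j, (row Z i).testBit j = true ↔ (i < n ∧ j < n ∧ A (f i) (f j)) ∨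
      (i = n ∧ m ≤ j ∧ j < n ∧ A (f j) (f n)) ∨ (j = n ∧ m ≤ i ∧ i < n ∧ A (f i) (f n))) →
      Codes A f (n + 1) Z := by
    intro m Z hm hZ
    refine ⟨hinj, fun i j => ?_⟩
    rw [hZ]
    constructor
    · rintro (⟨h1, h2, h3⟩ | ⟨rfl, h2, h3, h4⟩ | ⟨rfl, h2, h3, h4⟩)
      · exact ⟨by omega, by omega, h3⟩
      · exact ⟨by omega, by omega, hA.symm _ _ h4⟩
      · exact ⟨by omega, by omega, h4⟩
    · rintro ⟨h1, h2, h3⟩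
      by_cases hi : i = n
      · subst hi
        by_cases hj : j = i
        · subst hj; exact absurd h3 (hA.irrefl _)
        · refine Or.inr (Or.inl ⟨rfl, ?_, by omega, hA.symm _ _ h3⟩)
          by_contra hc
          exact hm j (by omega) (hA.symm _ _ h3)
      · by_cases hj : j = n
        · subst hj
          refine Or.inr (Or.inr ⟨rfl, ?_, by omega, h3⟩)
          by_contra hc
          exact hm i (by omega) h3
        · exact Or.inl ⟨by omega, by omega, h3⟩
  induction m with
  | zero =>
    intro _ r S one twos Z hS hr h1 h2 hZ h
    have : r = 0 := by simpa using hr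
    subst this
    exact ⟨S, Z, fin 0 Z (by simp) hZ, h⟩
  | succ m ih =>
    intro hm r S one twos Z hS hr h1 h2 hZ h
    cases r with
    | zero =>
      change BR(Nat.beq (Nat.land S forced) forced,
        leaf (downTo (n + 1)) n nxt cs S Z, true) = true at h
      have hno : ∀ i < m + 1, ¬ A (f i) (f n) := by
        intro i hi hAi
        have := Finset.card_eq_zero.1 hr.symm
        have hmem : i ∈ (Finset.range (m + 1)).filter (fun i => A (f i) (f n)) := by
          simp [hAi]; omega
        rw [this] at hmem
        simp at hmem
      have hl : Nat.land S forced = forced := by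
        apply Nat.eq_of_testBit_eq
        intro i
        rw [testBit_land]
        cases hfi : forced.testBit i with
        | false => simp
        | true =>
          obtain ⟨hi, hAi⟩ := hf i hfi
          have : S.testBit i = true := by
            rw [hS]
            refine ⟨?_, hi, hAi⟩
            by_contra hc
            exact hno i (by omega) hAi
          simp [this]
      rw [hl, Nat.beq_refl] at h
      exact ⟨S, Z, fin (m + 1) Z hno hZ, h⟩
    | succ r =>
      change BR(Nat.ble r m,
        BR(BR(bt forced m, true,
          ext (downTo (n + 1)) n forced forb nxt cs Y (downTo m) (Nat.succ r) S one twos Z),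
         BR(bt forb m, true, BR(Nat.beq 0 (Nat.land twos (row Y m)),
           BR(Nat.beq 0 (Nat.land S (confm (downTo (n + 1)) Y m)),
             ext (downTo (n + 1)) n forced forb nxt cs Y (downTo m) r
               (Nat.lor S (Nat.shiftLeft 1 m)) (Nat.lor one (row Y m))
               (Nat.lor twos (Nat.land one (row Y m))) (addE Z m n),
             true), true)), false), true) = true at h
      have hrm : Nat.ble r m = true := by
        rw [Nat.ble_eq]
        have := Finset.card_filter_le (Finset.range (m + 1)) (fun i => A (f i) (f n))
        rw [← hr, Finset.card_range] at this
        omega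
      rw [hrm] at h
      replace h : (BR(bt forced m, true,
          ext (downTo (n + 1)) n forced forb nxt cs Y (downTo m) (Nat.succ r) S one twos Z) = true) ∧
          BR(bt forb m, true, BR(Nat.beq 0 (Nat.land twos (row Y m)),
           BR(Nat.beq 0 (Nat.land S (confm (downTo (n + 1)) Y m)),
             ext (downTo (n + 1)) n forced forb nxt cs Y (downTo m) r
               (Nat.lor S (Nat.shiftLeft 1 m)) (Nat.lor one (row Y m))
               (Nat.lor twos (Nat.land one (row Y m))) (addE Z m n),
             true), true)) = true := by
        simpa only [BR_eq (b := BR(bt forced m, true, _)), BR_eq true, Bool.and_false, Bool.or_false, Bool.true_and, Bool.not_true, Bool.false_and, Bool.and_eq_true] using h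
      obtain ⟨ha, hc⟩ := h
      rw [Finset.range_add_one, Finset.filter_insert] at hr
      by_cases hAm : A (f m) (f n)
      · -- `m` is a neighbour of the new vertex
        rw [if_pos hAm, Finset.card_insert_of_notMem (by simp)] at hr
        have e1 : bt forb m = false := by
          rw [bt_eq]
          by_contra hcon
          exact hb m (by omega) (by simpa using hcon) hAm
        have e2 : Nat.beq 0 (Nat.land twos (row Y m)) = true := by
          apply land_beq_zero
          intro j hj hmj
          obtain ⟨i, i', hii, hi1, hi2, hi3, hi4, hi5, hi6, hj1, hj2, hj3⟩ := h2 j hj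
          obtain ⟨-, -, hmj⟩ := (hY.adj _ _).1 hmj
          have ne : ∀ {i j}, i < n + 1 → j < n + 1 → i ≠ j → f i ≠ f j :=
            fun hi hj hij hf => hij (hinj _ hi _ hj hf)
          exact hA.k23 (f n) (f j) (f i) (f i') (f m) (ne (by omega) (by omega) (by omega))
            (ne (by omega) (by omega) hii) (ne (by omega) (by omega) (by omega))
            (ne (by omega) (by omega) (by omega)) (hA.symm _ _ hi3) (hA.symm _ _ hi6)
            (hA.symm _ _ hAm) (hA.symm _ _ hj2) (hA.symm _ _ hj3) (hA.symm _ _ hmj)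
        have e3 : Nat.beq 0 (Nat.land S (confm (downTo (n + 1)) Y m)) = true := by
          apply land_beq_zero
          intro j hj hmj
          obtain ⟨hj1, hj2, hj3⟩ := (hS j).1 hj
          rw [testBit_confm, decide_eq_true_iff] at hmj
          obtain ⟨b, d, hbd, hb', hd'⟩ := two_sound hmj.2
          rw [testBit_land, Bool.and_eq_true, hY.adj, hY.adj] at hb' hd'
          have ne : ∀ {i j}, i < n + 1 → j < n + 1 → i ≠ j → f i ≠ f j :=
            fun hi hj hij hf => hij (hinj _ hi _ hj hf)
          exact hA.k23 (f m) (f j) (f b) (f d) (f n) (ne (by omega) (by omega) (by omega))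
            (ne (by omega) (by omega) hbd) (ne (by omega) (by omega) (by omega))
            (ne (by omega) (by omega) (by omega)) hb'.1.2.2 hd'.1.2.2 hAm
            hb'.2.2.2 hd'.2.2.2 hj3
        rw [e1, e2, e3] at hc
        refine ih (by omega) r _ _ _ _ ?_ (by omega) ?_ ?_ ?_ hc
        · intro i
          rw [testBit_lor, testBit_one_shift, Bool.or_eq_true, hS, decide_eq_true_iff]
          constructor
          · rintro (⟨h1, h2, h3⟩ | rfl)
            · exact ⟨by omega, h2, h3⟩
            · exact ⟨le_refl _, by omega, hAm⟩
          · rintro ⟨h1, h2, h3⟩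
            by_cases him : i = m
            · exact Or.inr him
            · exact Or.inl ⟨by omega, h2, h3⟩
        · intro j hj
          rw [testBit_lor, Bool.or_eq_true] at hj
          rcases hj with hj | hj
          · obtain ⟨i, hi, hrest⟩ := h1 j hj
            exact ⟨i, by omega, hrest⟩
          · obtain ⟨-, hj1, hj2⟩ := (hY.adj _ _).1 hj
            exact ⟨m, le_refl _, by omega, hAm, hj1, hj2⟩
        · intro j hj
          rw [testBit_lor, Bool.or_eq_true, testBit_land, Bool.and_eq_true] at hj
          rcases hj with hj | ⟨hj, hj'⟩
          · obtain ⟨i, i', hii, hi1, hi2, hi3, hi4, hrest⟩ := h2 j hj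
            exact ⟨i, i', hii, by omega, hi2, hi3, by omega, hrest⟩
          · obtain ⟨-, hj1, hj2⟩ := (hY.adj _ _).1 hj'
            obtain ⟨i, hi1, hi2, hi3, hi4, hi5⟩ := h1 j hj
            exact ⟨i, m, by omega, by omega, hi2, hi3, le_refl _, by omega, hAm, hj1, hi5, hj2⟩
        · intro i j
          have key : (row (addE Z m n) i).testBit j = true ↔
              (row Z i).testBit j = true ∨ (i = m ∧ j = n) ∨ (i = n ∧ j = m) := by
            rw [testBit_row, testBit_row, testBit_addE]
            simp only [Bool.and_eq_true, Bool.or_eq_true, decide_eq_true_iff]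
            constructor
            · rintro ⟨hj, h | h | h⟩
              · exact Or.inl ⟨hj, h⟩
              · exact Or.inr (Or.inl (by omega))
              · exact Or.inr (Or.inr (by omega))
            · rintro (⟨hj, h⟩ | ⟨rfl, rfl⟩ | ⟨rfl, rfl⟩)
              · exact ⟨hj, Or.inl h⟩
              · exact ⟨by omega, Or.inr (Or.inl rfl)⟩
              · exact ⟨by omega, Or.inr (Or.inr rfl)⟩
          rw [key, hZ]
          constructor
          · rintro ((h | ⟨h1, h2, h3, h4⟩ | ⟨h1, h2, h3, h4⟩) | ⟨rfl, rfl⟩ | ⟨rfl, rfl⟩)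
            · exact Or.inl h
            · exact Or.inr (Or.inl ⟨h1, by omega, h3, h4⟩)
            · exact Or.inr (Or.inr ⟨h1, by omega, h3, h4⟩)
            · exact Or.inr (Or.inr ⟨rfl, le_refl _, by omega, hAm⟩)
            · exact Or.inr (Or.inl ⟨rfl, le_refl _, by omega, hAm⟩)
          · rintro (h | ⟨h1, h2, h3, h4⟩ | ⟨h1, h2, h3, h4⟩)
            · exact Or.inl (Or.inl h)
            · by_cases hj : j = m
              · exact Or.inr (Or.inr ⟨h1, hj⟩)
              · exact Or.inl (Or.inr (Or.inl ⟨h1, by omega, h3, h4⟩))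
            · by_cases hi : i = m
              · exact Or.inr (Or.inl ⟨hi, h1⟩)
              · exact Or.inl (Or.inr (Or.inr ⟨h1, by omega, h3, h4⟩))
      · rw [if_neg hAm] at hr
        have e1 : bt forced m = false := by
          rw [bt_eq]
          by_contra hcon
          exact hAm (hf m (by simpa using hcon)).2
        rw [e1] at ha
        have aux : ∀ i, A (f i) (f n) → i ≠ m := by rintro _ h rfl; exact hAm h
        refine ih (by omega) (r + 1) S one twos Z ?_ hr ?_ ?_ ?_ ha
        · intro i
          rw [hS]
          constructor
          · rintro ⟨h1, h2, h3⟩; exact ⟨by omega, h2, h3⟩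
          · rintro ⟨h1, h2, h3⟩; have := aux i h3; exact ⟨by omega, h2, h3⟩
        · intro j hj
          obtain ⟨i, hi, hrest⟩ := h1 j hj
          exact ⟨i, by omega, hrest⟩
        · intro j hj
          obtain ⟨i, i', hii, hi1, hi2, hi3, hi4, hrest⟩ := h2 j hj
          exact ⟨i, i', hii, by omega, hi2, hi3, by omega, hrest⟩
        · intro i j
          rw [hZ]
          constructor
          · rintro (h | ⟨h1, h2, h3, h4⟩ | ⟨h1, h2, h3, h4⟩)
            · exact Or.inl h
            · exact Or.inr (Or.inl ⟨h1, by omega, h3, h4⟩)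
            · exact Or.inr (Or.inr ⟨h1, by omega, h3, h4⟩)
          · rintro (h | ⟨h1, h2, h3, h4⟩ | ⟨h1, h2, h3, h4⟩)
            · exact Or.inl h
            · have := aux j h4; exact Or.inr (Or.inl ⟨h1, by omega, h3, h4⟩)
            · have := aux i h4; exact Or.inr (Or.inr ⟨h1, by omega, h3, h4⟩)

/-! ### Counting edges and degrees -/

/-- The degree of `u` within `T`. -/
def dg {V : Type} (A : V → V → Prop) (T : Finset V) (u : V) : ℕ := (T.filter (A u)).card

/-- Twice the number of edges within `T`. -/
def dbl {V : Type} (A : V → V → Prop) (T : Finset V) : ℕ := ∑ u ∈ T, dg A T u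

theorem dg_erase {V : Type} {A : V → V → Prop} {T : Finset V} {v : V} (hv : v ∈ T) (u : V) :
    dg A T u = dg A (T.erase v) u + if A u v then 1 else 0 := by
  unfold dg
  conv_lhs => rw [← Finset.insert_erase hv, Finset.filter_insert]
  split_ifs with h
  · rw [Finset.card_insert_of_notMem (by simp)]
  · rfl

theorem dbl_erase {V : Type} {A : V → V → Prop} (hA : Free A) {T : Finset V} {v : V}
    (hv : v ∈ T) : dbl A T = dbl A (T.erase v) + 2 * dg A T v := by
  unfold dbl
  rw [← Finset.add_sum_erase T _ hv, Finset.sum_congr rfl (fun u _ => dg_erase hv u),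
    Finset.sum_add_distrib, ← Finset.card_filter]
  have : ((T.erase v).filter (fun u => A u v)).card = dg A T v := by
    rw [dg_erase hv v, if_neg (hA.irrefl v), add_zero, dg]
    congr 1
    ext u
    simp only [Finset.mem_filter]
    exact and_congr_right fun _ => ⟨hA.symm _ _, hA.symm _ _⟩
  rw [this]; ring

theorem dbl_even {V : Type} {A : V → V → Prop} (hA : Free A) (T : Finset V) : Even (dbl A T) := by
  induction T using Finset.induction_on with
  | empty => simp [dbl]
  | insert v T hv ih =>
    rw [dbl_erase hA (Finset.mem_insert_self v T), Finset.erase_insert hv]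
    exact ih.add (even_two_mul _)

theorem deg_eq {V : Type} {A : V → V → Prop} {f : ℕ → V} {n Y i : ℕ} (hY : Codes A f n Y)
    (hi : i < n) : deg (downTo n) Y i = dg A ((Finset.range n).image f) (f i) := by
  have key : ∀ m, deg (downTo m) Y i =
      ((Finset.range m).filter (fun j => (row Y i).testBit j = true)).card := by
    intro m
    induction m with
    | zero => rfl
    | succ m ih =>
      change NR(bt (row Y i) m, Nat.succ (deg (downTo m) Y i), deg (downTo m) Y i) = _
      rw [Finset.range_add_one, Finset.filter_insert, bt_eq]
      cases h : (row Y i).testBit m with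
      | false => simp [ih]
      | true => simp [ih]
  rw [key, dg, Finset.filter_image, Finset.card_image_of_injOn]
  · congr 1
    ext j
    simp only [Finset.mem_filter, Finset.mem_range]
    refine and_congr_right fun hj => ?_
    rw [hY.adj]; tauto
  · intro a ha b hb hab
    simp only [Finset.coe_filter, Finset.mem_range, Set.mem_ofPred_eq] at ha hb
    exact hY.inj a ha.1 b hb.1 hab

theorem edges_eq {V : Type} {A : V → V → Prop} {f : ℕ → V} {n Y : ℕ} (hY : Codes A f n Y) :
    edges (downTo n) Y = dbl A ((Finset.range n).image f) := by
  have key : ∀ (g : ℕ → ℕ) (m : ℕ), (List.rec (motive := fun _ => ℕ) 0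
      (fun i _ s => Nat.add (g i) s) (downTo m) : ℕ) = ∑ i ∈ Finset.range m, g i := by
    intro g m
    induction m with
    | zero => rfl
    | succ m ih =>
      rw [Finset.sum_range_succ, ← ih]
      exact Nat.add_comm _ _
  rw [dbl, Finset.sum_image (fun a ha b hb hab => hY.inj a (by simpa using ha) b (by simpa using hb) hab)]
  refine (key (deg (downTo n) Y) n).trans (Finset.sum_congr rfl fun i hi => ?_)
  exact deg_eq hY (by simpa using hi)

/-- Every set of `n` vertices of `A` with at least `need` edges and degrees at most `cap` spans
a graph isomorphic to a member of `L`. -/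
def Covers {V : Type} (A : V → V → Prop) (cap : ℕ) (L : List ℕ) (n need : ℕ) : Prop :=
  ∀ T : Finset V, T.card = n → 2 * need ≤ dbl A T → (∀ u ∈ T, dg A T u ≤ cap) →
    ∃ Y ∈ L, ∃ f, Codes A f n Y ∧ (Finset.range n).image f = T

theorem BR_false_iff (b e : Bool) : BR(b, false, e) = true ↔ b = false ∧ e = true := by
  cases b <;> simp

theorem step_mem {xs ys : List ℕ} {n cap need : ℕ} {cur : List (ℕ × List (ℕ × ℕ × ℕ))}
    {nxt : List ℕ} (h : step xs ys n cap need cur nxt = true) :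
    (∀ R ∈ nxt, img xs R 205163983024656 = R) ∧ ∀ c ∈ cur, ∀ d ∈ xs,
      need ≤ d + edges ys c.1 / 2 → low ys c.1 (d - 1) = 0 →
      ext xs n (low ys c.1 d) (Nat.xor 4095 (low ys c.1 cap)) nxt c.2 c.1 ys d 0 0 0 c.1 = true := by
  rw [step, BR_eq, Bool.and_false, Bool.false_or, Bool.and_eq_true, Bool.not_eq_true'] at h
  obtain ⟨hw, h⟩ := h
  constructor
  · intro R hR
    by_contra hc
    rw [← Bool.not_eq_true, anyR_iff] at hw
    refine hw ⟨R, hR, ?_⟩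
    have : Nat.beq (img xs R 205163983024656) R = false := by
      rw [← Bool.not_eq_true, Nat.beq_eq]; exact hc
    rw [this]
  · clear hw
    induction cur with
    | nil => simp
    | cons a cur ih =>
      replace h := (BR_false_iff _ _).1 h
      intro c hc
      rcases List.mem_cons.1 hc with rfl | hc
      · intro d hd h1 h2
        by_contra hcon
        rw [← Bool.not_eq_true, anyR_iff] at h
        refine h.1 ⟨d, hd, ?_⟩
        have e1 : Nat.ble need (Nat.add d (Nat.div (edges ys c.1) 2)) = true := by
          rw [Nat.ble_eq]; exact h1
        have e2 : Nat.beq (low ys c.1 (Nat.sub d 1)) 0 = true := by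
          rw [Nat.beq_eq]; exact h2
        rw [Bool.not_eq_true] at hcon
        rw [e1, e2, hcon]
      · exact ih h.2 c hc

/-- Removing a vertex of minimal degree `d` from a graph with `n + 1` vertices and `e` edges leaves
`e - d` edges, where `(n + 1) * d ≤ 2 * e`; hence the thresholds `need` and `need'`. -/
theorem step_sound {V : Type} {A : V → V → Prop} (hA : Free A) {n cap need need' : ℕ}
    {cur : List (ℕ × List (ℕ × ℕ × ℕ))} {nxt : List ℕ}
    (h : step (downTo (n + 1)) (downTo n) n cap need' cur nxt = true) (hn : n + 1 ≤ 12)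
    (hN : ∀ e d, need' ≤ e → (n + 1) * d ≤ 2 * e → need + d ≤ e)
    (hc : Covers A cap (cur.map Prod.fst) n need) : Covers A cap nxt (n + 1) need' := by
  obtain ⟨hw, h⟩ := step_mem h
  intro T hT hE hcap
  have hne : T.Nonempty := by rw [← Finset.card_pos]; omega
  obtain ⟨v, hv, hmin⟩ := Finset.exists_min_image T (dg A T) hne
  have hcard : (T.erase v).card = n := by rw [Finset.card_erase_of_mem hv]; omega
  have hle : ∀ u, dg A (T.erase v) u ≤ dg A T u := by
    intro u; rw [dg_erase hv u]; omega
  have hsum : (n + 1) * dg A T v ≤ dbl A T := by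
    rw [← hT, ← smul_eq_mul]
    exact Finset.card_nsmul_le_sum T _ _ hmin
  have hdbl := dbl_erase hA hv
  obtain ⟨e, he⟩ := dbl_even hA T
  have hneed := hN e (dg A T v) (by omega) (by omega)
  obtain ⟨Y, hYm, f, hY, hfT⟩ := hc (T.erase v) hcard (by omega)
    (fun u hu => (hle u).trans (hcap u (Finset.mem_of_mem_erase hu)))
  obtain ⟨c, hcm, rfl⟩ := List.mem_map.1 hYm
  -- label the removed vertex by `n`
  let g : ℕ → V := Function.update f n v
  have hgn : g n = v := Function.update_self ..
  have hgf : ∀ i < n, g i = f i := fun i hi => Function.update_of_ne (by omega) ..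
  have hfm : ∀ i < n, f i ∈ T.erase v := by
    intro i hi; rw [← hfT]; exact Finset.mem_image_of_mem f (Finset.mem_range.2 hi)
  have hYg : Codes A g n c.1 := by
    refine ⟨fun i hi j hj hij => hY.inj i hi j hj (by rwa [hgf i hi, hgf j hj] at hij), ?_⟩
    intro i j
    rw [hY.adj]
    refine and_congr_right fun hi => and_congr_right fun hj => ?_
    rw [hgf i hi, hgf j hj]
  have hgT : (Finset.range n).image g = T.erase v := by
    rw [← hfT]
    exact Finset.image_congr fun i hi => hgf i (by simpa using hi)
  have hginj : ∀ i < n + 1, ∀ j < n + 1, g i = g j → i = j := by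
    intro i hi j hj hij
    by_cases h1 : i = n
    · by_cases h2 : j = n
      · omega
      · rw [h1, hgn, hgf j (by omega)] at hij
        have := hfm j (by omega)
        rw [← hij] at this
        simp at this
    · by_cases h2 : j = n
      · rw [h2, hgn, hgf i (by omega)] at hij
        have := hfm i (by omega)
        rw [hij] at this
        simp at this
      · exact hYg.inj i (by omega) j (by omega) hij
  have hdeg : ∀ i < n, deg (downTo n) c.1 i = dg A (T.erase v) (g i) := by
    intro i hi; rw [deg_eq hYg hi, hgT]
  have hgm : ∀ i < n, g i ∈ T := by
    intro i hi; rw [hgf i hi]; exact Finset.mem_of_mem_erase (hfm i hi)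
  have hd : dg A T v = ((Finset.range n).filter (fun i => A (g i) (g n))).card := by
    rw [dg_erase hv v, if_neg (hA.irrefl v), add_zero, dg, ← hgT, Finset.filter_image,
      Finset.card_image_of_injOn]
    · congr 1
      ext i
      simp only [Finset.mem_filter, hgn]
      exact and_congr_right fun _ => ⟨hA.symm _ _, hA.symm _ _⟩
    · intro a ha b hb hab
      simp only [Finset.coe_filter, Finset.mem_range, Set.mem_ofPred_eq] at ha hb
      exact hYg.inj a ha.1 b hb.1 hab
  have hdn : dg A T v ≤ n := by
    rw [hd]; exact (Finset.card_filter_le _ _).trans (Finset.card_range n).le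
  have hx := h c hcm (dg A T v) (mem_downTo.2 (by omega))
    (by rw [edges_eq hYg, hgT]; omega) (by
      apply Nat.eq_of_testBit_eq
      intro i
      rw [testBit_low, Nat.zero_testBit, decide_eq_false_iff_not]
      rintro ⟨hi, hlt⟩
      rw [mem_downTo] at hi
      rw [hdeg i hi] at hlt
      have h1 := hmin (g i) (hgm i hi)
      have h2 := dg_erase (A := A) hv (g i)
      split_ifs at h2 <;> omega)
  obtain ⟨S', Z', hZ', hl⟩ := ext_sound hn hA hYg hginj (by
      intro i hi
      rw [testBit_low, decide_eq_true_iff, mem_downTo] at hi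
      obtain ⟨hi, hlt⟩ := hi
      refine ⟨hi, ?_⟩
      rw [hdeg i hi] at hlt
      have h1 := hmin (g i) (hgm i hi)
      have h2 := dg_erase (A := A) hv (g i)
      rw [hgn]
      by_contra hcon
      rw [if_neg hcon] at h2
      omega) (by
      intro i hi hb hcon
      rw [testBit_xor', testBit_low] at hb
      have h12 : Nat.testBit 4095 i = true := by
        have : i < 12 := by omega
        interval_cases i <;> decide
      rw [h12, Bool.true_xor, Bool.not_eq_true', decide_eq_false_iff_not, mem_downTo] at hb
      apply hb
      refine ⟨hi, ?_⟩
      rw [hdeg i hi]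
      have h1 := hcap (g i) (hgm i hi)
      have h2 := dg_erase (A := A) hv (g i)
      rw [hgn] at hcon
      rw [if_pos hcon] at h2
      omega) n le_rfl _ 0 0 0 c.1 (by
      intro i; rw [Nat.zero_testBit]
      constructor
      · intro h; exact absurd h (by decide)
      · rintro ⟨h1, h2, -⟩; omega) hd (by simp) (by simp) (by
      intro i j
      rw [hYg.adj]
      constructor
      · exact Or.inl
      · rintro (h | ⟨-, h1, h2, -⟩ | ⟨-, h1, h2, -⟩)
        · exact h
        · omega
        · omega) hx
  obtain ⟨R, hR, s, hs, hlt⟩ := leaf_sound hn hA hZ' hw hl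
  refine ⟨R, hR, _, hs, ?_⟩
  apply Finset.eq_of_subset_of_card_le
  · intro x hx
    obtain ⟨i, hi, rfl⟩ := Finset.mem_image.1 hx
    have hsi := hlt i (by simpa using hi)
    change g (s i) ∈ T
    by_cases h1 : s i = n
    · rw [h1, hgn]; exact hv
    · exact hgm _ (by omega)
  · rw [hT, Finset.card_image_of_injOn, Finset.card_range]
    intro a ha b hb hab
    exact hs.inj a (by simpa using ha) b (by simpa using hb) hab

theorem covers_one {V : Type} {A : V → V → Prop} (hA : Free A) (cap need : ℕ) :
    Covers A cap [0] 1 need := by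
  intro T hT _ _
  obtain ⟨v, rfl⟩ := Finset.card_eq_one.1 hT
  refine ⟨0, by simp, fun _ => v, ⟨by omega, ?_⟩, by simp⟩
  intro i j
  simp [row, hA.irrefl]

/-! ### The search -/

section Search

set_option maxRecDepth 100000

/-- Codes of the dense pattern-free graphs on 1 vertex, with certificates for their extensions. -/
def dense1 : List (ℕ × List (ℕ × ℕ × ℕ)) :=
  [(0, [(1, 0, 16)])]

/-- Codes of the dense pattern-free graphs on 2 vertices, with certificates for their extensions. -/
def dense2 : List (ℕ × List (ℕ × ℕ × ℕ)) :=
  [(4098, [(1, 0, 528), (2, 0, 513), (3, 1, 528)])]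

/-- Codes of the dense pattern-free graphs on 3 vertices, with certificates for their extensions. -/
def dense3 : List (ℕ × List (ℕ × ℕ × ℕ)) :=
  [(16781318, [(1, 0, 12816), (2, 1, 12816), (4, 1, 12576), (6, 2, 12816)]), (50352134, [(0, 3,
  12816), (1, 4, 12816), (2, 4, 12801), (3, 5, 12816), (4, 4, 12546), (5, 5, 12576), (6, 5,
  12321)])]

/-- Codes of the dense pattern-free graphs on 4 vertices, with certificates for their extensions. -/
def dense4 : List (ℕ × List (ℕ × ℕ × ℕ)) :=
  [(68736258062, []), (137455767558, [(12, 0, 274960)]), (412467892230, [(1, 1, 274960), (2, 1,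
  271105), (3, 2, 274960), (4, 1, 267010), (5, 2, 274720), (8, 1, 262675), (10, 2, 270385), (12, 2,
  266290)]), (50352134, []), (68769828878, [(1, 3, 274960), (2, 4, 274960), (4, 4, 274720), (8, 5,
  274960), (9, 6, 274960), (10, 2, 148240), (12, 2, 82720)]), (206208815118, [(0, 7, 274960), (1, 8,
  274960), (2, 8, 274945), (4, 9, 274960), (5, 10, 274960), (6, 10, 274945), (8, 9, 271120), (9, 10,
  271120), (10, 10, 271105)])]

/-- Codes of the dense pattern-free graphs on 5 vertices, with certificates for their extensions. -/
def dense5 : List (ℕ × List (ℕ × ℕ × ℕ)) :=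
  [(3378936956358662, [(3, 0, 5517840), (5, 0, 5456160), (10, 0, 5390385), (20, 0, 5320770), (24, 0,
  5251395)]), (281887444602902, [(17, 1, 5517840), (18, 2, 5517840), (20, 2, 5517600)]),
  (844837398089750, [(1, 3, 5517840), (2, 3, 5513985), (4, 4, 5517840), (5, 5, 5517840), (8, 4,
  5513985), (10, 5, 5513985), (12, 6, 5517840), (16, 7, 5517840), (17, 8, 5517840), (18, 8,
  5513985)]), (281543746539550, [(24, 1, 2184240)]), (563018723315726, [(24, 0, 2442000)]),
  (2252968095141902, [(17, 1, 2180400), (18, 0, 2380560), (20, 0, 1332000), (24, 9, 5517840)]),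
  (2534443071852574, [(1, 10, 5517840), (2, 11, 5517840), (3, 12, 5517840), (4, 11, 5517600), (5,
  12, 5517600), (6, 13, 5517840), (8, 11, 5379120), (9, 12, 5379120), (10, 5, 4346640), (12, 5,
  4281120), (16, 11, 5378880), (17, 12, 5378880), (18, 5, 3298320), (20, 5, 3232800), (24, 13,
  5379120)]), (206208815118, []), (281681185525790, [(1, 14, 5517840), (2, 15, 5517840), (4, 16,
  5517840), (8, 16, 5514000), (16, 17, 5517840), (17, 12, 3490320), (20, 8, 3232800), (24, 8,
  2184240)]), (1126106384093198, [(1, 16, 4534800), (2, 16, 4534785), (4, 18, 5517840), (8, 19,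
  5517840), (16, 20, 5517840), (17, 8, 3228960), (18, 8, 3163425), (20, 13, 3490050)]),
  (1407581360803870, [(0, 21, 5517840), (1, 22, 5517840), (2, 23, 5517840), (4, 23, 5456160), (6,
  24, 5517840), (8, 25, 5517840), (9, 26, 5517840), (10, 27, 5517840), (16, 25, 5456160), (17, 26,
  5456160), (20, 27, 5456160)])]

/-- Codes of the dense pattern-free graphs on 6 vertices, with certificates for their extensions. -/
def dense6 : List (ℕ × List (ℕ × ℕ × ℕ)) :=
  [(3462143450777030694, [(3, 0, 106181136), (5, 1, 106181136), (10, 1, 106177281), (20, 2,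
  106181136), (24, 2, 106177281), (33, 3, 106181136), (34, 3, 106177281), (36, 4, 106181136), (40,
  4, 106177281), (48, 5, 106181136)]), (19608954665015742518, [(3, 6, 106181136), (5, 6, 106180896),
  (10, 7, 106181136), (12, 7, 106180896), (17, 8, 106181136), (18, 9, 106181136), (20, 9,
  106180896), (33, 8, 105198096), (34, 9, 105198096), (36, 9, 105197856), (48, 10, 106181136)]),
  (20761876169622720534, [(3, 11, 106181136), (5, 9, 56775696), (10, 9, 40060161), (12, 12,
  106181136), (17, 9, 90452496), (20, 13, 106181136), (34, 9, 73736961), (40, 13, 105194241), (48,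
  12, 103961616)]), (1153766342004936758, [(33, 6, 73740816), (34, 11, 73740816), (36, 9, 54617376),
  (48, 14, 106181136)]), (4612530856362348566, [(33, 9, 54613536), (36, 7, 73732866), (40, 12,
  73732146), (48, 4, 51733056)]), (5765452360969195574, [(1, 15, 106181136), (2, 16, 106181136), (4,
  16, 105197856), (8, 17, 106181136), (10, 18, 106181136), (12, 18, 105197856), (16, 19, 106181136),
  (17, 20, 106181136), (18, 21, 106181136), (32, 19, 105197856), (33, 20, 105197856), (36, 21,
  105197856), (48, 22, 106181136)]), (13835905092240379926, [(1, 23, 106181136), (2, 23, 106177281),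
  (4, 23, 105189426), (5, 18, 88486176), (8, 23, 105185571), (10, 18, 88481841), (16, 24,
  106181136), (17, 25, 106181136), (18, 25, 106177281), (32, 24, 105189426), (36, 25, 105189426),
  (40, 25, 105185571)]), (18456596110362382358, [(33, 14, 90452496), (34, 14, 90448641), (36, 4,
  51794496), (40, 4, 33968961), (48, 26, 106181136)]), (19609517614969229366, [(1, 27, 106181136),
  (2, 28, 106181136), (4, 29, 106181136), (5, 20, 90452496), (8, 30, 106181136), (10, 21, 90448641),
  (12, 25, 90452496), (16, 31, 106181136), (18, 32, 106181136), (32, 33, 106181136), (33, 34,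
  106181136), (36, 35, 106181136), (48, 36, 106181136)]), (27681378476937465870, [(3, 37,
  106181136), (5, 37, 106180896), (6, 38, 106181136), (9, 39, 106181136), (10, 7, 39065091), (12, 7,
  22291971), (17, 7, 86066736), (18, 2, 86270736), (20, 2, 85222176), (24, 37, 102827331), (33, 7,
  69293616), (34, 2, 69559056), (36, 2, 68510496), (40, 37, 102827091), (48, 38, 102827331)]),
  (1155455947678699582, [(33, 40, 106181136), (34, 6, 37971216), (36, 6, 21194016), (40, 6,
  69297456), (48, 6, 52520256)]), (2308377452285677598, [(33, 6, 37967376), (34, 39, 40178736), (36,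
  26, 70280481), (40, 1, 69620496), (48, 1, 52843536)]), (3461298956892524606, [(1, 41, 106181136),
  (2, 42, 106181136), (4, 43, 106181136), (5, 44, 106181136), (6, 45, 106181136), (8, 46,
  106181136), (9, 47, 106181136), (12, 20, 88171296), (16, 46, 106119696), (17, 47, 106119696), (20,
  20, 87122976), (24, 48, 106181136), (32, 43, 103036176), (33, 44, 103036176), (34, 45, 103036176),
  (40, 20, 37839696), (48, 20, 36791376)]), (6920063471249936414, [(1, 49, 106181136), (2, 50,
  106181136), (3, 45, 90452496), (4, 50, 106180896), (5, 45, 90452256), (8, 51, 106181136), (9, 48,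
  90313776), (10, 21, 88236816), (12, 21, 88171296), (16, 51, 106119696), (17, 48, 90313536), (18,
  21, 87188496), (20, 21, 87122976), (24, 52, 106181136), (32, 53, 106181136), (34, 54, 106181136),
  (36, 54, 106180896)]), (1153203185792372798, [(48, 8, 52520256)]), (2306124690399350814, [(48, 0,
  52843536)]), (4611967700149784606, [(48, 3, 51794976)]), (18456032954149818398, [(33, 8,
  52516416), (34, 0, 52782096), (36, 3, 51733536), (40, 3, 34956336), (48, 37, 56967696)]),
  (4612812125348352014, [(48, 10, 51406146)]), (9224500342262124558, [(48, 55, 106181136)]),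
  (18456877379348385806, [(33, 3, 51725856), (34, 3, 50677281), (36, 10, 51402306), (40, 55,
  90452496), (48, 38, 56967426)]), (1407581360803870, []), (1154329085967650878, [(1, 56,
  106181136), (2, 57, 106181136), (4, 57, 106119456), (8, 58, 106181136), (16, 58, 106119456), (32,
  59, 106181136), (33, 44, 70668816), (40, 34, 69297456), (48, 34, 51537216)]),
  (2307250590574628894, [(1, 57, 90452496), (2, 60, 106181136), (4, 61, 106181136), (8, 62,
  106181136), (16, 63, 106181136), (32, 64, 106181136), (34, 45, 70668801), (36, 32, 70280481), (40,
  36, 69231921)]), (6918936609538887710, [(0, 65, 106181136), (1, 66, 106181136), (2, 66,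
  105198081), (4, 66, 104153346), (8, 67, 106181136), (9, 68, 106181136), (10, 68, 105198081), (16,
  67, 106119456), (17, 68, 106119456), (20, 68, 104153346), (32, 67, 105074721), (34, 68,
  105074721), (36, 68, 104091666)]), (9224781817238835230, [(1, 58, 90452496), (2, 62, 90452496),
  (4, 63, 90390816), (8, 69, 106181136), (16, 70, 106181136), (32, 71, 106181136), (33, 34,
  69293616), (34, 36, 69228081), (40, 54, 69619971), (48, 72, 106181136)]), (10377703321845682238,
  [(0, 73, 106181136), (1, 74, 106181136), (2, 75, 106181136), (4, 76, 106181136), (6, 68,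
  90452496), (8, 76, 105194256), (10, 68, 73736976), (16, 77, 106181136), (17, 78, 106181136), (20,
  79, 106181136), (32, 77, 105194256), (33, 78, 105194256), (40, 79, 105194256), (48, 80,
  106181136), (49, 81, 106181136)]), (11530624826452660254, [(0, 82, 106181136), (1, 83, 106181136),
  (2, 83, 105194241), (4, 84, 106181136), (6, 68, 88486401), (8, 84, 105194241), (9, 68, 72753936),
  (16, 85, 106181136), (17, 79, 90390816), (20, 86, 106181136), (32, 85, 105194241), (34, 79,
  73551921), (40, 86, 105194241)])]

/-- Codes of the dense pattern-free graphs on 7 vertices, with certificates for their extensions. -/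
def dense7 : List (ℕ × List (ℕ × ℕ × ℕ)) :=
  [(14170561592059712933990, []), (23615294557800076841062, []), (94450809815243264528422, [(104, 0,
  1985229328)]), (155915343054443907289190, []), (170082442503053916672038, [(88, 0, 1733567233)]),
  (226750858311887094976550, []), (14186708403273951645814, []), (47243273787759514652726, []),
  (80299857177847493857398, []), (85022223660717139333174, []), (226767005123101333688374, []),
  (14187861324778558623830, []), (56689159675004485537814, [(112, 0, 355731238)]),
  (94468109547962110218262, [(104, 1, 1985229328)]), (226748549934778322882614, []),
  (4728131935230614409334, []), (9450498418100259885110, []), (37784697319716177416246, []),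
  (47229430285455468105782, [(12, 2, 1985229328), (17, 3, 1985229328), (18, 3, 1969496833), (33, 4,
  1985229328), (36, 5, 1985229328), (48, 6, 1985229328), (66, 4, 1969496833), (72, 5, 1969496833),
  (80, 6, 1969496833)]), (75563647192673802096694, []), (80286013675543447310454, [(10, 3,
  1733571088), (12, 4, 1732587808), (18, 7, 1985229328), (33, 8, 1985229328), (36, 9, 1985229328),
  (65, 10, 1985229328), (68, 11, 1985229328), (80, 12, 1985229328), (96, 13, 1985229328)]),
  (85008380158413092786230, [(10, 3, 1702109953), (12, 5, 1732587808), (17, 7, 1733571088), (33, 9,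
  1732587808), (36, 14, 1985229328), (48, 15, 1985229328), (66, 16, 1985229328), (72, 17,
  1985229328), (80, 18, 1985229328)]), (226753161620797287141430, [(10, 6, 1733571088), (12, 6,
  1732587808), (18, 15, 1733571088), (36, 15, 1732587808), (72, 19, 1985229328), (80, 6, 924935488),
  (96, 6, 923952208)]), (4736202387961885593686, []), (75571717645405073281046, []),
  (80294084128274718494806, [(5, 4, 1699164448), (10, 5, 1699160113), (18, 20, 1985229328), (36, 21,
  1985229328), (40, 22, 1985229328), (65, 23, 1985229328), (68, 24, 1985229328), (80, 25,
  1985229328), (96, 26, 1985229328), (100, 27, 1985229328)]), (226765852764546680328214, []),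
  (4741976000484614443126, []), (9464342483354259918902, []), (18909075449094623825974, []),
  (37798541384970177450038, []), (75577491257927802130486, []), (85022224223667092820022, [(5, 7,
  1702113808), (10, 7, 1450451713), (12, 20, 1702113808), (33, 28, 1985229328), (36, 29,
  1985229328), (48, 30, 1985229328), (66, 28, 1969496833), (72, 29, 1969496833), (80, 30,
  1969496833)]), (151209123945738454274102, []), (155931490428608099487862, [(5, 10, 1702113808),
  (10, 16, 1702109953), (12, 23, 1702113808), (18, 28, 1733571088), (48, 31, 1985229328), (65, 32,
  1985229328), (68, 33, 1985229328), (96, 34, 1985229328)]), (170098589877218108870710, [(5, 11,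
  1702113808), (10, 17, 1702109953), (12, 24, 1702113808), (18, 29, 1733571088), (48, 29,
  924082768), (68, 24, 829710928), (72, 35, 1985229328), (76, 27, 1702113808), (96, 17,
  829695493)]), (226767005686051287175222, [(5, 12, 1702113808), (10, 18, 1702109953), (12, 25,
  1702113808), (18, 30, 1733571088), (33, 31, 1733571088), (36, 29, 907309648), (72, 36,
  1985229328), (80, 37, 1985229328), (96, 38, 1985229328)]), (14194780827085873369166, []),
  (28361880275695882752014, [(112, 39, 1985229328)]), (42528979728701790900302, []),
  (155913036366940808958078, []), (4725827781826537738366, []), (9448194264696183214142, []),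
  (18892927230436547121214, []), (23615293713306192334974, [(6, 40, 1985229328), (9, 41,
  1985229328), (17, 41, 1985167888), (24, 42, 1985229328), (33, 43, 1985229328), (34, 44,
  1985229328), (40, 10, 1648456528), (48, 10, 1647408208), (65, 43, 1969500448), (68, 44,
  1969500448), (72, 10, 1363309408), (80, 10, 1362261088)]), (28337660196175837810750, [(5, 40,
  1733571088), (9, 45, 1985229328), (12, 7, 1698788128), (17, 45, 1985167888), (20, 7, 1697739808),
  (24, 46, 1985229328), (33, 44, 1730426128), (34, 47, 1985229328), (40, 12, 1648456528), (48, 12,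
  1647408208), (66, 48, 1985229328), (68, 49, 1985229328)]), (37782393166312100745278, []),
  (42504759649181745959038, [(5, 41, 1733571088), (6, 45, 1733571088), (17, 41, 1466045488), (20, 8,
  1697739808), (24, 45, 1466045488), (33, 41, 1730426128), (34, 45, 1730426128), (48, 8, 638809408),
  (65, 41, 1463948848), (68, 8, 1160869408), (72, 45, 1463948848), (96, 8, 1110537808)]),
  (113340274906624933646398, [(5, 42, 1733571088), (6, 46, 1733571088), (9, 45, 1450316848), (12, 9,
  1698788128), (17, 45, 1450316608), (20, 9, 1697739808), (33, 42, 1730426128), (34, 46,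
  1730426128), (40, 9, 1648456528), (48, 9, 1647408208), (72, 50, 1985229328), (80, 50,
  1985167888)]), (4729286546340895150174, []), (9451653029210540625950, []),
  (37785851930826458157086, []), (113343733671139291058206, [(3, 46, 1702113808), (5, 46,
  1702113568), (9, 46, 1450316848), (10, 14, 1698853648), (12, 14, 1698788128), (17, 46,
  1450316608), (18, 14, 1697805328), (20, 14, 1697739808), (34, 51, 1985229328), (36, 51,
  1985229088), (72, 51, 1969361968), (80, 51, 1969361728), (96, 52, 1985229328)]),
  (151196434491594734981150, []), (160641167457334025670686, [(3, 48, 1702113808), (5, 49,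
  1702113568), (9, 50, 1701975088), (10, 16, 1698853648), (12, 18, 1698788128), (17, 50,
  1701974848), (18, 16, 1697805328), (20, 18, 1697739808), (24, 51, 1733571088), (36, 53,
  1985229328), (66, 54, 1985229328), (72, 55, 1985229328), (80, 55, 1985167888), (96, 56,
  1985229328)]), (226756620668778580070414, [(112, 39, 1400258818)]), (4723520811955612864638, []),
  (9445887294825258340414, []), (37780086196441175871550, []), (151190668757209452695614, []),
  (9447040216329865318430, []), (18891773182070229225502, []), (37781239117945782849566, []),
  (75560188990903407530014, []), (151191821678714059673630, []), (6918936609538887710, []),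
  (4729285419479184101470, [(65, 40, 1412915728), (72, 31, 1411479088), (80, 31, 1393718848)]),
  (37785850803964747108382, [(65, 31, 1411475248), (66, 31, 1159751473), (72, 53, 1411866883), (80,
  57, 1985229328), (96, 57, 1984246273)]), (42508217286834392322142, [(1, 58, 1985229328), (2, 59,
  1985229328), (4, 60, 1985229328), (8, 61, 1985229328), (10, 62, 1985229328), (16, 63, 1985229328),
  (17, 64, 1985229328), (20, 65, 1985229328), (32, 66, 1985229328), (34, 65, 1732464673), (36, 67,
  1985229328), (64, 68, 1985229328), (65, 69, 1985229328), (72, 70, 1985229328), (80, 71,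
  1985229328)]), (37788156649172447055902, []), (75567106522130071736350, []),
  (151198739209940723879966, []), (226756620950253556781086, [(6, 57, 1702113808), (9, 72,
  1985229328), (10, 73, 1985229328), (17, 72, 1969439008), (20, 73, 1969439008), (34, 36,
  1679841073), (40, 55, 1680298243), (68, 36, 1393583938), (80, 55, 1394041348), (96, 74,
  1985229328)]), (10377703321845682238, []), (4732744186191490895998, [(65, 43, 1412915728), (80,
  32, 1393718848), (96, 32, 1108571728)]), (9455110669061136371774, [(66, 47, 1412915713), (68, 30,
  1412462113), (72, 30, 1159755313)]), (18899843634801500278846, [(66, 30, 1412458273), (68, 48,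
  1397186818), (80, 37, 1393587778), (96, 72, 1197810448)]), (75568259443634678583358, [(65, 32,
  1393715008), (68, 37, 1393583938), (72, 72, 1450455568), (80, 54, 1394041348), (96, 75,
  1985229328)]), (80290625926504323797118, [(1, 76, 1985229328), (2, 77, 1985229328), (4, 77,
  1969439008), (6, 64, 1702113808), (8, 78, 1985229328), (10, 69, 1685398288), (16, 78, 1969439008),
  (20, 69, 1400247328), (32, 79, 1985229328), (33, 80, 1985229328), (40, 81, 1985229328), (64, 79,
  1969439008), (65, 80, 1969439008), (80, 81, 1969439008), (96, 82, 1985229328), (97, 83,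
  1985229328)]), (94457725375114333179966, [(1, 84, 1985229328), (2, 85, 1985229328), (4, 86,
  1985229328), (6, 65, 1702113808), (8, 87, 1985229328), (10, 70, 1685398288), (16, 88, 1985229328),
  (17, 69, 1399264288), (32, 89, 1985229328), (33, 81, 1732584208), (40, 90, 1985229328), (48, 91,
  1985229328), (64, 92, 1985229328), (68, 93, 1985229328), (80, 94, 1985229328)]),
  (226757773871758163628094, [(1, 95, 1985229328), (2, 96, 1985229328), (4, 97, 1985229328), (6, 71,
  1702113808), (8, 97, 1984242448), (10, 71, 1685398288), (16, 98, 1985229328), (20, 91,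
  1733571088), (32, 98, 1984242448), (40, 91, 1732584208), (64, 99, 1985229328), (80, 100,
  1985229328), (96, 100, 1984242448)]), (231480140354627808841854, [(0, 101, 1985229328), (1, 102,
  1985229328), (2, 103, 1985229328), (4, 103, 1969439008), (6, 104, 1985229328), (8, 103,
  1952600368), (10, 104, 1984242448), (16, 103, 1934713408), (20, 104, 1966478368), (32, 103,
  1916887888), (40, 104, 1948652848), (64, 103, 1899123808), (80, 104, 1930765888), (96, 104,
  1913927248)]), (11530624826452660254, []), (4733897107696097874014, [(65, 44, 1412915728), (72,
  28, 1159820848), (80, 34, 1393718848)]), (18900996556306107256862, [(66, 28, 1412458273), (68, 49,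
  1397186818), (80, 38, 1393587778), (96, 73, 1197810433)]), (75569412365139285561374, [(65, 34,
  1393715008), (68, 38, 1393583938), (72, 73, 1450455568), (80, 56, 1394041348)]),
  (94458878296618940157982, [(1, 105, 1985229328), (2, 106, 1985229328), (4, 106, 1969439008), (6,
  67, 1699164673), (8, 107, 1985229328), (9, 70, 1683432208), (16, 107, 1969439008), (17, 70,
  1399264288), (32, 108, 1985229328), (34, 94, 1685213233), (40, 109, 1985229328), (64, 108,
  1969439008), (68, 94, 1399939138), (80, 109, 1969439008)])]

/-- Codes of the dense pattern-free graphs on 8 vertices, with certificates for their extensions. -/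
def dense8 : List (ℕ × List (ℕ × ℕ × ℕ)) :=
  [(2012351625132326890332393510, []), (2012351642432059609178083350, []),
  (232160986796303055252197430, []), (328875052401493388007149750, []),
  (638360209760762249389379766, []), (696388649102264451922759734, []),
  (928502406504302048337825846, [(208, 0, 36344967696)]), (348250922098717542782177398, []),
  (638393266344152337368584438, []), (696421705685654539901964406, []),
  (1257967601322697199729086710, []), (1315996040664199402262466678, []),
  (1548109798066236998677532790, []), (1857594955425505860059762806, []),
  (696426428052137409547440182, [(200, 1, 36344967696)]), (928540185454175005962506294, []),
  (1277315136803014136170385462, []), (1393372015486027333034676278, [(164, 1, 32318435856)]),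
  (1548114520432719868323008566, []), (1393513760267489717229031478, []),
  (348250930169170274053361750, []), (696421713756107271173148758, [(193, 2, 36344967696), (196, 2,
  36092317746)]), (773792966211452332299882582, [(208, 3, 36344967696), (224, 3, 36092313891)]),
  (1257967609393149931000271062, [(164, 2, 32318435856)]), (1315996048734652133533651030, [(164, 2,
  31814127666)]), (1548109806136689729948717142, [(168, 3, 32318435856)]),
  (1857594963495958591330947158, [(168, 3, 31814123811)]), (1934966215951294860659626070, [(5, 4,
  36344967696), (10, 5, 36344967696), (18, 6, 36344967696), (40, 6, 36092317746), (80, 6,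
  35187356256), (160, 6, 34683052146), (192, 5, 35187356256)]), (638398002554700461014094006, []),
  (696426441896202663547473974, [(200, 7, 36344967696)]), (928540199298240259962540086, []),
  (928611108564445200969207926, []), (1258043246799450264381264118, []),
  (1316071686140952466914644086, [(140, 2, 27741401616)]), (1857670600902258924711940214, []),
  (1393457105695746138050760758, [(138, 1, 27741397761), (146, 7, 31815119376), (176, 7,
  31005631056), (224, 1, 14789387781)]), (1393513774111554971229065270, [(140, 3, 27741401616),
  (164, 7, 30972084816)]), (1548256279058247506517397558, []), (1857741436417516367899627574, []),
  (2167028041149479878238949390, [(19, 3, 27687732096), (21, 3, 27671020416), (26, 3, 31761633411),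
  (28, 3, 31760588931), (35, 3, 27686687616), (37, 3, 27669975936), (42, 3, 31744921731), (44, 3,
  31743877251), (82, 3, 844187526), (84, 3, 827475846), (98, 3, 843143046), (100, 3, 826431366),
  (146, 3, 12971153031), (148, 3, 12970108551), (162, 3, 12954441351), (164, 3, 12953396871)]),
  (116080493976717709112135806, []), (174108933318228703443046654, []),
  (464251130061768502391492734, []), (638336595624190100113608958, []),
  (657679408738024166909431934, []), (174113655684711573088522430, []),
  (464255852428251372036968510, []), (657684131104507036554907710, []),
  (1277258466083051898915409982, []), (1315944092310720034652966974, []),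
  (1393400347380775544875536446, []), (657769137177982000008155166, [(200, 8, 36344967696), (208, 8,
  36344906256)]), (1857628013145501455903510558, [(138, 1, 31763628816), (140, 1, 31763563296),
  (146, 1, 31762580496), (148, 1, 31762514976)]), (696502060839436330480324638, []),
  (1277390769590313057103269918, []), (1393447648273326253967560734, [(152, 8, 31815119376)]),
  (1857675310579287650638123038, []), (1548067297903365419977330718, [(224, 9, 36344967696)]),
  (19385321331120901187621086, []), (38728134444954967983444062, []), (77413760672623103721001054,
  []), (154785013127968164847734878, []), (193470639355636298438856798, [(17, 10, 36344967696), (20,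
  11, 36344967696), (34, 10, 36092326401), (36, 11, 36092326401), (65, 10, 35776766736), (72, 11,
  35776766736), (80, 12, 36344967696), (130, 10, 35524125441), (136, 11, 35524125441), (160, 12,
  36092326401)]), (309527518074660700136067166, []), (328870331188494766931366110, [(10, 10,
  32318435856), (20, 10, 28040184096), (34, 13, 36344967696), (36, 13, 36093247776), (65, 14,
  36344967696), (72, 15, 36344967696), (129, 14, 36093247776), (144, 15, 36093247776), (192, 16,
  36344967696)]), (386898770529996969464746078, [(10, 11, 32318435856), (17, 10, 27788525856), (34,
  17, 36344967696), (36, 13, 28038217986), (65, 18, 36344967696), (72, 19, 36344967696), (80, 20,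
  36344967696), (132, 21, 36344967696), (144, 22, 36344967696), (160, 23, 36344967696)]),
  (619012675433929561518297182, []), (696383927889265830846976094, [(10, 11, 31814136321), (17, 13,
  31815057696), (20, 13, 27786559746), (34, 11, 27787481121), (65, 24, 36344967696), (72, 25,
  36344967696), (80, 26, 36344967696), (132, 24, 36091219986), (144, 26, 36091219986), (160, 25,
  36091219986)]), (1238587010412474423878799454, []), (1257929823526308490674098398, [(10, 10,
  31482848016), (17, 14, 32318435856), (20, 18, 32318435856), (34, 21, 31814012961), (36, 24,
  32318435856), (72, 27, 36344967696), (129, 28, 36344967696), (144, 29, 36344967696), (192, 30,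
  36344967696)]), (1393329515323155754334212190, [(10, 11, 31482848016), (17, 15, 32318435856), (20,
  19, 32318435856), (34, 22, 31814012961), (36, 25, 32318435856), (65, 27, 32318435856), (80, 31,
  36344967696), (136, 32, 36344967696), (192, 33, 36344967696)]), (1548072020269848289622544478,
  [(10, 12, 32318435856), (20, 20, 32318435856), (34, 23, 31814012961), (36, 26, 32318435856), (72,
  31, 32318435856), (144, 34, 36344967696), (192, 35, 36344967696)]), (174312074645465650807492766,
  []), (193654887759299717603315742, []), (1857741426032780570169233438, [(134, 9, 31767933456),
  (162, 3, 18831398961), (168, 8, 26963628291), (196, 3, 14251223106), (208, 8, 22399181316)]),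
  (1857590237671273951291035710, []), (19423103739760571119096062, []), (38765916853594637914919038,
  []), (154822795536607834779209854, []), (619050457842569231449772158, []),
  (638393270956403298245071102, [(6, 14, 31767933456), (10, 14, 27724686096), (20, 28, 31466066976),
  (40, 28, 26885952816), (65, 36, 36344967696), (80, 37, 36344967696), (129, 36, 36092322576), (160,
  37, 36092322576), (192, 38, 36344967696), (193, 39, 36344967696)]), (773792962753250561905184894,
  [(6, 15, 31767933456), (10, 18, 27724686096), (20, 30, 31466066976), (33, 28, 26884969776), (65,
  37, 32302645536), (80, 40, 36344967696), (96, 41, 36344967696), (136, 42, 36344967696), (160, 43,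
  36344967696)]), (1857594960037756820936249470, [(6, 16, 31767933456), (10, 29, 31751217936), (20,
  29, 31466066976), (40, 41, 32318435856), (80, 41, 32302645536), (160, 44, 36344967696), (192, 44,
  36329177376)]), (1876937773151590887731548414, [(1, 45, 36344967696), (2, 46, 36344967696), (4,
  46, 36329177376), (6, 47, 36344967696), (8, 46, 36044951856), (10, 47, 36092322576), (16, 46,
  35759678016), (20, 47, 35822900256), (32, 46, 35473421136), (40, 47, 35536704816), (64, 46,
  35187225696), (80, 47, 35250447936), (128, 46, 34917803376), (160, 47, 34965174096), (192, 47,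
  34680948576)]), (19437270839209181128478910, []), (38780083953043247924301886, []),
  (77465710180711383661858878, []), (154836962636056444788592702, []), (309579467582748980076924990,
  []), (619064624942017841459155006, []), (773807129852699171914567742, [(6, 19, 31767933456), (10,
  19, 27724686096), (17, 30, 31464100896), (33, 30, 26884969776), (48, 48, 36344967696), (68, 49,
  36344967696), (80, 50, 36344967696), (136, 49, 36092322576), (160, 50, 36092322576)]),
  (928549634799391707202900030, [(6, 20, 31767933456), (10, 31, 31751217936), (40, 48, 32318435856),
  (68, 51, 36344967696), (80, 52, 36344967696), (144, 53, 36344967696), (160, 54, 36344967696),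
  (192, 55, 36344967696)]), (1238638959920562703819657278, []), (1316010212375898973148336190, [(6,
  21, 31767933456), (10, 32, 31751217936), (17, 21, 22406062146), (33, 42, 31814132496), (40, 49,
  32318435856), (48, 51, 32318435856), (80, 32, 22305769026), (130, 51, 23680081986), (132, 42,
  22415869506), (160, 56, 36344967696), (192, 49, 23680081986)]), (1548123969777936569563402302,
  [(6, 22, 31767933456), (10, 33, 31751217936), (17, 24, 23411037216), (33, 43, 31814132496), (40,
  50, 32318435856), (48, 52, 32318435856), (68, 32, 22304785986), (160, 57, 36344967696), (192, 58,
  36344967696)]), (19569570887705824958927038, []), (38912384001539891754750014, []),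
  (77598010229208027492307006, []), (309711767631245623907373118, []),
  (1238771259969059347650105406, []), (1548256269826433213393850430, [(6, 34, 31767933456), (10, 35,
  31751217936), (20, 53, 31815119376), (40, 54, 31814132496), (96, 59, 36344967696), (132, 60,
  36344967696), (144, 61, 36344967696), (192, 62, 36344967696)]), (231480140354627808841854, []),
  (19574293254188694604140798, [(129, 63, 36344967696)]), (38917106368022761399963774, [(130, 64,
  36344967696), (132, 65, 36344967696), (136, 65, 36343980816), (192, 66, 36344967696)]),
  (116288358823359030728642686, [(1, 67, 36344967696), (2, 68, 36344967696), (4, 68, 36329177376),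
  (8, 69, 36344967696), (10, 70, 36344967696), (16, 69, 36329177376), (20, 70, 36329177376), (32,
  71, 36344967696), (40, 72, 36344967696), (64, 71, 36329177376), (80, 72, 36329177376), (96, 73,
  36344967696), (128, 74, 36344967696), (130, 75, 36344967696), (132, 75, 36329177376)]),
  (19437271992130685735456926, []), (38780085105964752531279902, []), (154836963788977949395570718,
  []), (619064626094939346066133022, []), (773807131005620676521545758, [(6, 25, 31764001281), (9,
  25, 27721736976), (17, 33, 31464100896), (34, 33, 26884965681), (68, 58, 31465758786), (80, 76,
  36344967696), (136, 58, 26885517651), (160, 76, 36092322561)])]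

/-- Codes of the dense pattern-free graphs on 9 vertices, with certificates for their extensions. -/
def dense9 : List (ℕ × List (ℕ × ℕ × ℕ)) :=
  [(16485339274456519714828288626742, []), (15851281898363880809439294754870, []),
  (15296684756049734398553926766934, []), (16485184565016226865112250683478, [(100, 0,
  654820258320), (224, 1, 654820258320)]), (398075778787272982832674345302, []),
  (794216591358594688388286222422, [(274, 2, 654820258320), (296, 2, 654567608370)]),
  (1428041891472781429138489708630, [(266, 2, 590395748880), (296, 3, 654820258320), (416, 0,
  242956399200)]), (15851281898377724874693294788662, []), (15851243241073006654029755469854, [(21,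
  4, 654820258320)]), (17753609439871224027281946234910, []), (1347072233381921432982723940702, []),
  (1584756720924714445767650758750, []), (6338447680706394316005167517790, []),
  (2694086396111323878126779551966, []), (5150160642684190052976462844382, []),
  (5704757780284040433723456540894, []), (15217089042152902448456141033694, []),
  (2694144424550665380329312931934, []), (5150218671123531555178996224350, []),
  (5704815808723381935925989920862, []), (6338641108837568676676193407070, []),
  (10463456110810564080421157654622, []), (11414194060981808189133428019294, []),
  (12681844661505113438215446122590, []), (5150528156280890824040378454366, []),
  (5705125293880741204787372150878, []), (6338950593994927945537575637086, [(400, 5,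
  654820258320)]), (5705686839776378247447199273182, []), (10226642654320767379157440188894, []),
  (11415065092034804500654637371614, []), (15218018101645240262179883765982, []),
  (6339647539582361835461062873182, []), (10781375191612414607168093999198, []),
  (15218153501337037109443543879774, []), (11415355234231548040453585817694, [(292, 5,
  582342685200)]), (15218308243841983801978832212062, []), (5150470165623957961507776549374, [(385,
  6, 654820258320)]), (6338892603337995083004973732094, []), (15217398565092670356987454738686, []),
  (15296626727606934694580998689278, [(6, 7, 654820258320), (10, 7, 654567613200), (20, 7,
  650020000800), (40, 7, 645455615280), (80, 7, 640874456640), (160, 7, 636294281040), (320, 7,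
  631715088480), (384, 7, 627404331120)]), (6339028003029791930268633845886, []),
  (7606678603553097179350651949182, []), (10780755655059844701975664971902, []),
  (12682231555697336691807886561406, []), (12683315357694621198066917625982, []),
  (81105100287415928481275499006, []), (160333262801680266074820497662, []),
  (477245912858737616453291266302, [(10, 8, 654820258320), (20, 8, 654804468000), (40, 9,
  654820258320), (80, 9, 654804468000), (160, 10, 654820258320), (192, 10, 654804468000), (258, 11,
  654820258320), (260, 11, 654804468000)]), (3803725608109760866435414937662, []),
  (5388290067025647270166372864062, []), (6339028017196891378878643228734, [(416, 4,
  109645615680)]), (5388444809530593962701661196350, []), (6339182759701838071413931561022, []),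
  (11414735711846077583871166173246, []), (12682386312369382832953184276542, [(448, 2,
  84129502980)]), (15217688721456513345396412567614, [(416, 2, 83862116100)]),
  (12682773772946959340219129712702, []), (12683005886704361377815544778814, [(296, 4,
  105115767360)]), (15218308295791491890258773069886, []), (7607453066860170362002140614718, [(448,
  12, 654820258320)]), (10464617468309860516665086758974, [(262, 5, 509047222800)]),
  (11415355418481104625377357123646, []), (15218308428091540386902603518014, [(296, 2, 79615444485),
  (352, 12, 590395748880)]), (10225404298790495259361370231294, []),
  (10304651804117873431021711052926, []), (10463108129146402106213092872318, []),
  (15216799088928081976450609631358, []), (79344450873087696624272593278, []),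
  (158572613387352034217817591934, []), (633941588472938077371266289790, []),
  (792397913501466752558355239038, [(20, 13, 654820258320), (40, 13, 650792739600), (80, 14,
  654820258320), (96, 14, 650792739600), (130, 15, 654820258320), (132, 16, 654820258320), (258, 15,
  650792739600), (264, 16, 650792739600), (384, 17, 654820258320)]),
  (2535417489110430067203487879294, []), (3169242789224544785544025526398, [(10, 13, 582341698320),
  (20, 14, 590379958560), (80, 18, 654820258320), (96, 14, 521876366160), (130, 19, 654820258320),
  (132, 20, 654820258320), (264, 19, 650757150000), (288, 20, 650757150000)]),
  (7606021098949167287819475406974, [(10, 14, 582341698320), (20, 14, 582323934240), (40, 14,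
  517849834320), (80, 14, 517832070240), (130, 21, 654820258320), (132, 21, 654804468000), (288, 21,
  650722424400), (320, 21, 650706634080)]), (10146272850341800092103950782590, []),
  (10304729175370328767291039731838, [(10, 15, 590395748880), (20, 16, 590379958560), (40, 19,
  590395748880), (80, 20, 590379958560), (96, 21, 590395748880), (132, 22, 654820258320), (264, 23,
  654820258320), (384, 24, 654820258320)]), (6339028017198044300383250206750, [])]

/-- Codes of the dense pattern-free graphs on 10 vertices, with certificates for their extensions. -/
def dense10 : List (ℕ × List (ℕ × ℕ × ℕ)) :=
  [(32468340552826130840220339953307734, []), (72708651109991359244373877107822678, []),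
  (88959442738207585218236220504641622, []), (96099484743993677545936758160592982, []),
  (6830740870068034413215502853362206, []), (129854335136692303409213227577561182, []),
  (124985368351387531393366669393974270, []), (1962407948678167295393525714178558, []),
  (3245662782497126005483197871214846, []), (12981219392250518104788237192057086, []),
  (51923455734782039601773974482112766, []), (83766828908994257588518601104609534, []),
  (145432494217187503032335251403755582, []), (6491163471082036146530875432554622, []),
  (25962276693005491392749486426607742, []), (42188214277029290231605040225243262, []),
  (42837251384346143685171360854233214, []), (124656491725476982175374563952087166, []),
  (25964653537881214470782472096895102, []), (42190591121905013309638025895530622, []),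
  (42839628229221866763204346524520574, []), (42195027900214737932140301345411198, []),
  (42846763715608012547186093538726014, []), (85723767714207329540403559346524286, []),
  (124666004056738851037389296636579966, [])]

/-- Codes of the dense pattern-free graphs on 11 vertices, with certificates for their extensions. -/
def dense11 : List (ℕ × List (ℕ × ℕ × ℕ)) :=
  []

theorem dense1_step :
    step [1, 0] [0] 1 11 1 dense1 (dense2.map Prod.fst) = true :=
  Eq.refl true

theorem dense2_step :
    step [2, 1, 0] [1, 0] 2 11 2 dense2 (dense3.map Prod.fst) = true :=
  Eq.refl true

theorem dense3_step :
    step [3, 2, 1, 0] [2, 1, 0] 3 11 3 dense3 (dense4.map Prod.fst) = true :=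
  Eq.refl true

theorem dense4_step :
    step [4, 3, 2, 1, 0] [3, 2, 1, 0] 4 11 5 dense4 (dense5.map Prod.fst) = true :=
  Eq.refl true

theorem dense5_step :
    step [5, 4, 3, 2, 1, 0] [4, 3, 2, 1, 0] 5 11 7 dense5 (dense6.map Prod.fst) = true :=
  Eq.refl true

theorem dense6_step :
    step [6, 5, 4, 3, 2, 1, 0] [5, 4, 3, 2, 1, 0] 6 11 9 dense6 (dense7.map Prod.fst) = true :=
  Eq.refl true

theorem dense7_step :
    step [7, 6, 5, 4, 3, 2, 1, 0] [6, 5, 4, 3, 2, 1, 0] 7 11 12 dense7 (dense8.map Prod.fst) = true :=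
  Eq.refl true

theorem dense8_step :
    step [8, 7, 6, 5, 4, 3, 2, 1, 0] [7, 6, 5, 4, 3, 2, 1, 0] 8 11 15 dense8 (dense9.map Prod.fst) = true :=
  Eq.refl true

theorem dense9_step :
    step [9, 8, 7, 6, 5, 4, 3, 2, 1, 0] [8, 7, 6, 5, 4, 3, 2, 1, 0] 9 11 18 dense9 (dense10.map Prod.fst) = true :=
  Eq.refl true

theorem dense10_step :
    step [10, 9, 8, 7, 6, 5, 4, 3, 2, 1, 0] [9, 8, 7, 6, 5, 4, 3, 2, 1, 0] 10 11 21 dense10 (dense11.map Prod.fst) = true :=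
  Eq.refl true

/-- Codes of the dense pattern-free graphs of maximal degree at most 4 on 1 vertex, with certificates for their extensions. -/
def sparse1 : List (ℕ × List (ℕ × ℕ × ℕ)) :=
  [(0, [(1, 0, 16)])]

/-- Codes of the dense pattern-free graphs of maximal degree at most 4 on 2 vertices, with certificates for their extensions. -/
def sparse2 : List (ℕ × List (ℕ × ℕ × ℕ)) :=
  [(4098, [(1, 0, 528), (2, 0, 513), (3, 1, 528)])]

/-- Codes of the dense pattern-free graphs of maximal degree at most 4 on 3 vertices, with certificates for their extensions. -/
def sparse3 : List (ℕ × List (ℕ × ℕ × ℕ)) :=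
  [(16781318, [(1, 0, 12816), (2, 1, 12816), (4, 1, 12576), (6, 2, 12816)]), (50352134, [(0, 3,
  12816), (1, 4, 12816), (2, 4, 12801), (3, 5, 12816), (4, 4, 12546), (5, 5, 12576), (6, 5,
  12321)])]

/-- Codes of the dense pattern-free graphs of maximal degree at most 4 on 4 vertices, with certificates for their extensions. -/
def sparse4 : List (ℕ × List (ℕ × ℕ × ℕ)) :=
  [(68736258062, []), (137455767558, [(12, 0, 274960)]), (412467892230, [(1, 1, 274960), (2, 1,
  271105), (3, 2, 274960), (4, 1, 267010), (5, 2, 274720), (8, 1, 262675), (10, 2, 270385), (12, 2,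
  266290)]), (50352134, []), (68769828878, [(1, 3, 274960), (2, 4, 274960), (4, 4, 274720), (8, 5,
  274960), (9, 6, 274960), (10, 2, 148240), (12, 2, 82720)]), (206208815118, [(0, 7, 274960), (1, 8,
  274960), (2, 8, 274945), (4, 9, 274960), (5, 10, 274960), (6, 10, 274945), (8, 9, 271120), (9, 10,
  271120), (10, 10, 271105)])]

/-- Codes of the dense pattern-free graphs of maximal degree at most 4 on 5 vertices, with certificates for their extensions. -/
def sparse5 : List (ℕ × List (ℕ × ℕ × ℕ)) :=
  [(3378936956358662, [(3, 0, 5517840), (5, 0, 5456160), (10, 0, 5390385), (20, 0, 5320770), (24, 0,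
  5251395)]), (281887444602902, [(17, 1, 5517840), (18, 2, 5517840), (20, 2, 5517600)]),
  (844837398089750, [(1, 3, 5517840), (2, 3, 5513985), (4, 4, 5517840), (5, 5, 5517840), (8, 4,
  5513985), (10, 5, 5513985), (12, 6, 5517840), (16, 7, 5517840), (17, 8, 5517840), (18, 8,
  5513985)]), (281543746539550, [(24, 1, 2184240)]), (563018723315726, [(24, 0, 2442000)]),
  (2252968095141902, [(17, 1, 2180400), (18, 0, 2380560), (20, 0, 1332000), (24, 9, 5517840)]),
  (2534443071852574, [(2, 10, 5517840), (4, 10, 5517600), (6, 11, 5517840), (8, 10, 5379120), (10,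
  5, 4346640), (12, 5, 4281120), (16, 10, 5378880), (18, 5, 3298320), (20, 5, 3232800), (24, 11,
  5379120)]), (206208815118, []), (281681185525790, [(2, 12, 5517840), (4, 13, 5517840), (8, 13,
  5514000), (16, 14, 5517840), (20, 8, 3232800), (24, 8, 2184240)]), (1126106384093198, [(1, 13,
  4534800), (2, 13, 4534785), (4, 15, 5517840), (8, 16, 5517840), (16, 17, 5517840), (17, 8,
  3228960), (18, 8, 3163425), (20, 11, 3490050)]), (1407581360803870, [(0, 18, 5517840), (2, 19,
  5517840), (4, 19, 5456160), (6, 20, 5517840), (8, 21, 5517840), (10, 22, 5517840), (16, 21,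
  5456160), (20, 22, 5456160)])]

/-- Codes of the dense pattern-free graphs of maximal degree at most 4 on 6 vertices, with certificates for their extensions. -/
def sparse6 : List (ℕ × List (ℕ × ℕ × ℕ)) :=
  [(3462143450777030694, [(3, 0, 106181136), (5, 1, 106181136), (10, 1, 106177281), (20, 2,
  106181136), (24, 2, 106177281), (33, 3, 106181136), (34, 3, 106177281), (36, 4, 106181136), (40,
  4, 106177281), (48, 5, 106181136)]), (19608954665015742518, [(10, 6, 106181136), (12, 6,
  106180896), (18, 7, 106181136), (20, 7, 106180896), (34, 7, 105198096), (36, 7, 105197856), (48,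
  8, 106181136)]), (20761876169622720534, [(3, 9, 106181136), (5, 7, 56775696), (10, 7, 40060161),
  (12, 10, 106181136), (17, 7, 90452496), (20, 11, 106181136), (34, 7, 73736961), (40, 11,
  105194241), (48, 10, 103961616)]), (1153766342004936758, [(34, 9, 73740816), (36, 7, 54617376),
  (48, 12, 106181136)]), (4612530856362348566, [(33, 7, 54613536), (36, 6, 73732866), (40, 10,
  73732146), (48, 4, 51733056)]), (5765452360969195574, [(2, 13, 106181136), (4, 13, 105197856), (8,
  14, 106181136), (10, 15, 106181136), (12, 15, 105197856), (16, 16, 106181136), (18, 17,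
  106181136), (32, 16, 105197856), (36, 17, 105197856), (48, 18, 106181136)]),
  (13835905092240379926, [(1, 19, 106181136), (2, 19, 106177281), (4, 19, 105189426), (5, 15,
  88486176), (8, 19, 105185571), (10, 15, 88481841), (16, 20, 106181136), (17, 21, 106181136), (18,
  21, 106177281), (32, 20, 105189426), (36, 21, 105189426), (40, 21, 105185571)]),
  (18456596110362382358, [(33, 12, 90452496), (34, 12, 90448641), (36, 4, 51794496), (40, 4,
  33968961), (48, 22, 106181136)]), (19609517614969229366, [(2, 23, 106181136), (4, 24, 106181136),
  (8, 25, 106181136), (10, 17, 90448641), (12, 21, 90452496), (16, 26, 106181136), (18, 27,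
  106181136), (32, 28, 106181136), (36, 29, 106181136), (48, 30, 106181136)]),
  (27681378476937465870, [(3, 31, 106181136), (5, 31, 106180896), (6, 32, 106181136), (9, 33,
  106181136), (10, 6, 39065091), (12, 6, 22291971), (17, 6, 86066736), (18, 2, 86270736), (20, 2,
  85222176), (24, 31, 102827331), (33, 6, 69293616), (34, 2, 69559056), (36, 2, 68510496), (40, 31,
  102827091), (48, 32, 102827331)]), (2308377452285677598, [(34, 33, 40178736), (36, 22, 70280481),
  (40, 1, 69620496), (48, 1, 52843536)]), (6920063471249936414, [(2, 34, 106181136), (4, 34,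
  106180896), (8, 35, 106181136), (10, 17, 88236816), (12, 17, 88171296), (16, 35, 106119696), (18,
  17, 87188496), (20, 17, 87122976), (24, 36, 106181136), (32, 37, 106181136), (34, 38, 106181136),
  (36, 38, 106180896)]), (2306124690399350814, [(48, 0, 52843536)]), (4611967700149784606, [(48, 3,
  51794976)]), (18456032954149818398, [(34, 0, 52782096), (36, 3, 51733536), (40, 3, 34956336), (48,
  31, 56967696)]), (4612812125348352014, [(48, 8, 51406146)]), (9224500342262124558, [(48, 39,
  106181136)]), (18456877379348385806, [(33, 3, 51725856), (34, 3, 50677281), (36, 8, 51402306),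
  (40, 39, 90452496), (48, 32, 56967426)]), (1407581360803870, []), (2307250590574628894, [(4, 40,
  106181136), (8, 41, 106181136), (16, 42, 106181136), (32, 43, 106181136), (36, 27, 70280481), (40,
  30, 69231921)]), (6918936609538887710, [(0, 44, 106181136), (8, 45, 106181136), (16, 45,
  106119456), (32, 45, 105074721)]), (9224781817238835230, [(2, 41, 90452496), (4, 42, 90390816),
  (8, 46, 106181136), (16, 47, 106181136), (32, 48, 106181136), (34, 30, 69228081), (40, 38,
  69619971), (48, 49, 106181136)]), (11530624826452660254, [(0, 50, 106181136), (4, 51, 106181136),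
  (8, 51, 105194241), (16, 52, 106181136), (20, 53, 106181136), (32, 52, 105194241), (40, 53,
  105194241)])]

/-- Codes of the dense pattern-free graphs of maximal degree at most 4 on 7 vertices, with certificates for their extensions. -/
def sparse7 : List (ℕ × List (ℕ × ℕ × ℕ)) :=
  [(14170561592059712933990, [(20, 0, 1985229328), (24, 0, 1985225473), (36, 1, 1985229328), (40, 1,
  1985225473), (48, 2, 1985229328), (68, 1, 1969500688), (72, 1, 1969496833), (80, 2, 1969500688)]),
  (23615294557800076841062, [(10, 3, 1985229328), (20, 3, 1969439008), (24, 4, 1985229328), (34, 5,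
  1985229328), (36, 6, 1985229328), (40, 7, 1985229328), (48, 8, 1985229328), (66, 6, 1969439008),
  (68, 5, 1969439008), (72, 8, 1969439008), (80, 7, 1969439008), (96, 9, 1985229328)]),
  (94450809815243264528422, [(3, 0, 1733571088), (5, 3, 1702052128), (10, 4, 1733567233), (20, 0,
  1465987138), (24, 4, 1465975588), (33, 10, 1985229328), (34, 11, 1985229328), (36, 12,
  1985229328), (40, 13, 1985229328), (48, 14, 1985229328), (65, 12, 1969303618), (66, 14,
  1969303618), (68, 10, 1969303618), (72, 13, 1969303618), (80, 11, 1969303618), (96, 15,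
  1985229328), (104, 16, 1985229328)]), (155915343054443907289190, [(10, 5, 1733567233), (20, 10,
  1733571088), (24, 11, 1733567233), (34, 17, 1985229328), (40, 18, 1985229328), (48, 2, 907309648),
  (68, 19, 1985229328), (80, 20, 1985229328), (96, 21, 1985229328)]), (170082442503053916672038,
  [(3, 1, 1733571088), (5, 6, 1733571088), (10, 7, 1733567233), (20, 12, 1733571088), (24, 13,
  1733567233), (34, 18, 1733567233), (40, 22, 1985229328), (68, 23, 1985229328), (72, 24,
  1985229328), (80, 25, 1985229328), (88, 16, 1733567233), (96, 26, 1985229328)]),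
  (226750858311887094976550, [(3, 2, 1733571088), (5, 8, 1733571088), (10, 8, 1733567233), (20, 14,
  1733571088), (24, 14, 1733567233), (33, 2, 924082768), (34, 2, 654598993), (80, 14, 924067333),
  (96, 8, 924067333)]), (47243273787759514652726, [(12, 27, 1985229328), (18, 28, 1985229328), (20,
  29, 1985229328), (34, 28, 1984246288), (36, 29, 1984246288), (48, 30, 1985229328), (66, 31,
  1985229328), (72, 32, 1985229328), (80, 12, 624193633), (96, 12, 607481953)]),
  (85022223660717139333174, [(10, 28, 1733571088), (12, 29, 1733570848), (20, 33, 1985229328), (36,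
  34, 1985229328), (48, 35, 1985229328), (66, 36, 1985229328), (72, 37, 1985229328), (80, 38,
  1985229328)]), (226767005123101333688374, [(10, 30, 1733571088), (12, 30, 1733570848), (18, 35,
  1733571088), (20, 35, 1733570848), (34, 35, 1732588048), (36, 35, 1732587808), (72, 39,
  1985229328), (80, 40, 1985229328), (96, 40, 1984246288)]), (14187861324778558623830, [(12, 41,
  1985229328), (20, 33, 1398895648), (40, 33, 1113617713), (48, 41, 1983009808)]),
  (56689159675004485537814, [(3, 41, 1733571088), (5, 38, 1668437008), (10, 38, 1651721473), (17,
  29, 1450455328), (20, 37, 1365460738), (34, 29, 1182081073), (40, 37, 1080186643), (48, 42,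
  1985229328), (68, 43, 1985229328), (72, 43, 1984242433), (80, 25, 1362391138), (96, 25,
  1076195683), (112, 16, 355731238)]), (94468109547962110218262, [(3, 33, 1399940128), (5, 33,
  1668437008), (10, 37, 1651721473), (12, 37, 1366509058), (17, 33, 1702113808), (34, 37,
  1685398273), (40, 44, 1985229328), (48, 37, 829761028), (68, 37, 1417024258), (72, 44,
  1969500448), (80, 37, 846599428), (96, 44, 1935823168), (104, 45, 1985229328)]),
  (226748549934778322882614, [(10, 46, 1985229328), (12, 47, 1985229328), (18, 48, 1985229328), (36,
  34, 1665234208), (72, 22, 1376215873), (80, 46, 1931568448), (96, 47, 1931568448)]),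
  (9450498418100259885110, [(72, 38, 1379956273), (80, 46, 1466180353), (96, 6, 874934608)]),
  (37784697319716177416246, [(66, 38, 1379952433), (68, 38, 1095788338), (72, 27, 1417019923), (80,
  26, 1376154433), (96, 26, 1090941778)]), (47229430285455468105782, [(4, 49, 1985229328), (8, 49,
  1969496833), (12, 50, 1985229328), (16, 51, 1985229328), (32, 52, 1985229328), (36, 53,
  1985229328), (48, 54, 1985229328), (64, 52, 1969496833), (72, 53, 1969496833), (80, 54,
  1969496833)]), (75563647192673802096694, [(66, 46, 1450451713), (68, 6, 890724928), (72, 26,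
  1376215873), (80, 55, 1985229328), (96, 9, 840394048)]), (85008380158413092786230, [(4, 56,
  1985229328), (8, 57, 1985229328), (12, 53, 1732587808), (16, 58, 1985229328), (32, 59,
  1985229328), (36, 60, 1985229328), (48, 61, 1985229328), (64, 62, 1985229328), (72, 63,
  1985229328), (80, 64, 1985229328)]), (226753161620797287141430, [(2, 65, 1985229328), (4, 65,
  1984246048), (8, 66, 1985229328), (10, 54, 1733571088), (12, 54, 1732587808), (16, 65,
  1931568448), (18, 61, 1733571088), (32, 65, 1930585168), (36, 61, 1732587808), (64, 66,
  1931568448), (72, 67, 1985229328), (80, 54, 924935488), (96, 54, 923952208)]),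
  (4736202387961885593686, [(66, 41, 1417032208), (68, 36, 1396799008), (80, 47, 1466184208), (96,
  23, 1094086738)]), (75571717645405073281046, [(65, 47, 1450455568), (66, 47, 1450451713), (68, 23,
  1394041408), (72, 23, 1376215873), (80, 68, 1985229328), (96, 69, 1985229328)]),
  (80294084128274718494806, [(2, 70, 1985229328), (4, 71, 1985229328), (8, 72, 1985229328), (10, 53,
  1699160113), (16, 73, 1985229328), (18, 74, 1985229328), (32, 75, 1985229328), (36, 76,
  1985229328), (40, 77, 1985229328), (64, 78, 1985229328), (68, 79, 1985229328), (80, 80,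
  1985229328), (96, 81, 1985229328), (100, 82, 1985229328)]), (226765852764546680328214, [(5, 55,
  1702113808), (10, 55, 1702109953), (12, 68, 1702113808), (33, 46, 1663129408), (34, 46,
  1647335233), (36, 7, 907486468), (40, 7, 638006548), (65, 46, 1394698048), (66, 46, 1378903873),
  (68, 7, 890709508), (72, 7, 621229588), (96, 83, 1985229328)]), (9464342483354259918902, [(72, 35,
  1379956273), (80, 48, 1466180353)]), (18909075449094623825974, [(68, 31, 1417024258), (72, 43,
  1417023538), (80, 1, 890663488), (96, 19, 826700368)]), (37798541384970177450038, [(66, 35,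
  1379952433), (68, 43, 1416040498), (72, 32, 1417019923), (80, 18, 621164308), (96, 84,
  1985229328)]), (75577491257927802130486, [(66, 48, 1450451713), (68, 1, 890724928), (72, 18,
  621229588), (96, 85, 1985229328)]), (85022224223667092820022, [(4, 86, 1985229328), (8, 86,
  1969496833), (12, 74, 1702113808), (32, 87, 1985229328), (36, 88, 1985229328), (64, 87,
  1969496833), (72, 88, 1969496833)]), (151209123945738454274102, [(68, 19, 826761808), (72, 84,
  1733571088), (80, 85, 1733571088), (96, 89, 1985229328)]), (170098589877218108870710, [(2, 90,
  1985229328), (4, 91, 1985229328), (8, 92, 1985229328), (10, 63, 1702109953), (12, 79, 1702113808),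
  (16, 93, 1985229328), (18, 88, 1733571088), (32, 90, 1930715728), (48, 88, 924082768), (64, 92,
  1930715728), (68, 79, 829710928), (72, 94, 1985229328), (76, 82, 1702113808), (96, 63,
  829695493)]), (226767005686051287175222, [(2, 95, 1985229328), (4, 96, 1985229328), (8, 97,
  1985229328), (10, 64, 1702109953), (12, 80, 1702113808), (32, 98, 1985229328), (36, 88,
  907309648), (64, 99, 1985229328), (72, 100, 1985229328), (96, 101, 1985229328)]),
  (14194780827085873369166, [(6, 102, 1985229328), (12, 31, 1632904963), (18, 0, 1445229328), (20,
  10, 1695839008), (24, 103, 1985229328), (34, 0, 1176859408), (36, 10, 1679127328), (40, 103,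
  1984246288), (48, 104, 1985229328), (66, 102, 1918121488), (72, 31, 559179523), (80, 10,
  622097248), (96, 10, 605385568)]), (28361880275695882752014, [(3, 102, 1733571088), (5, 102,
  1733570848), (9, 105, 1985229328), (10, 32, 1649678083), (12, 32, 1632904963), (17, 30,
  1696679728), (18, 11, 1696887568), (20, 11, 1695839008), (24, 104, 1730217283), (33, 30,
  1679906608), (34, 11, 1680175888), (36, 11, 1679127328), (40, 104, 1730217043), (48, 106,
  1985229328), (66, 107, 1985229328), (68, 107, 1985229088), (80, 108, 1985229328), (96, 108,
  1984246288), (112, 109, 1985229328)]), (42528979728701790900302, [(6, 105, 1733571088), (18, 3,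
  1382498608), (20, 3, 1365721648), (34, 3, 1114067248), (36, 3, 1097290288), (48, 105, 1730217283),
  (66, 55, 1411608928), (68, 55, 1410560608), (80, 55, 558920803), (96, 55, 557872483)]),
  (9451653029210540625950, [(72, 5, 1411867408), (80, 5, 1395090448), (96, 89, 1124234833)]),
  (37785851930826458157086, [(66, 5, 1411805968), (68, 5, 1410757408), (72, 105, 1165373968), (80,
  83, 1376810563), (96, 110, 1985229328)]), (113343733671139291058206, [(2, 111, 1985229328), (4,
  111, 1985229088), (8, 111, 1969361968), (10, 60, 1698853648), (12, 60, 1698788128), (16, 111,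
  1969361728), (18, 60, 1697805328), (20, 60, 1697739808), (32, 112, 1985229328), (34, 113,
  1985229328), (36, 113, 1985229088), (64, 112, 1969361968), (72, 113, 1969361968), (80, 113,
  1969361728), (96, 114, 1985229328)]), (151196434491594734981150, [(66, 89, 1124230993), (68, 89,
  1124165458), (72, 110, 1733571088), (80, 110, 1733509648), (96, 115, 1985229328)]),
  (160641167457334025670686, [(4, 116, 1985229328), (8, 117, 1985229328), (12, 64, 1698788128), (16,
  117, 1985167888), (20, 64, 1697739808), (24, 113, 1733571088), (32, 118, 1985229328), (36, 119,
  1985229328), (64, 120, 1985229328), (72, 121, 1985229328), (80, 121, 1985167888), (96, 122,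
  1985229328)]), (226756620668778580070414, [(5, 123, 1985229328), (6, 123, 1985229313), (9, 123,
  1984242448), (10, 123, 1984242433), (17, 84, 1446070048), (18, 84, 1446004513), (20, 110,
  1446461698), (33, 84, 1176590128), (34, 84, 1176524593), (40, 110, 1176981763), (48, 124,
  1985229328), (65, 20, 1393968928), (66, 20, 1392920353), (68, 39, 1393583938), (72, 39,
  1108371283), (80, 108, 1400258818), (96, 108, 1115050243), (112, 109, 1400258818)]),
  (18891773182070229225502, [(96, 17, 1124558113)]), (37781239117945782849566, [(96, 21,
  1107780913)]), (75560188990903407530014, [(96, 123, 929382688)]), (151191821678714059673630, [(68,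
  17, 1124496673), (72, 21, 1107719473), (80, 123, 913654048), (96, 102, 1131827713)]),
  (6918936609538887710, []), (37785850803964747108382, [(8, 125, 1985229328), (16, 126, 1985229328),
  (32, 126, 1984246273), (64, 127, 1985229328), (72, 119, 1411866883), (80, 128, 1985229328), (96,
  128, 1984246273)]), (37788156649172447055902, [(96, 40, 1108375123)]), (75567106522130071736350,
  [(96, 129, 1985229328)]), (151198739209940723879966, [(66, 21, 1107711793), (68, 123, 1180119568),
  (72, 40, 1108371283), (80, 129, 1733571088), (96, 107, 1115050243)]), (226756620950253556781086,
  [(2, 130, 1985229328), (4, 130, 1969439008), (6, 128, 1702113808), (8, 131, 1985229328), (10, 132,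
  1985229328), (16, 131, 1969439008), (20, 132, 1969439008), (32, 133, 1985229328), (34, 100,
  1679841073), (40, 121, 1680298243), (64, 133, 1969439008), (68, 100, 1393583938), (80, 121,
  1394041348), (96, 134, 1985229328)]), (11530624826452660254, []), (18900996556306107256862, [(8,
  135, 1985229328), (16, 136, 1985229328), (32, 137, 1985229328), (64, 138, 1985229328), (80, 101,
  1393587778), (96, 132, 1197810433)]), (75569412365139285561374, [(4, 136, 1733571088), (8, 137,
  1732584193), (16, 139, 1985229328), (32, 140, 1985229328), (64, 141, 1985229328), (68, 101,
  1393583938), (72, 132, 1450455568), (80, 122, 1394041348)]), (94458878296618940157982, [(0, 142,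
  1985229328), (8, 143, 1985229328), (16, 143, 1969439008), (32, 144, 1985229328), (40, 145,
  1985229328), (64, 144, 1969439008), (80, 145, 1969439008)])]

/-- Codes of the dense pattern-free graphs of maximal degree at most 4 on 8 vertices, with certificates for their extensions. -/
def sparse8 : List (ℕ × List (ℕ × ℕ × ℕ)) :=
  [(386870432874302194785357926, []), (696355590233571056167587942, []),
  (928469347635608652582654054, []), (193451746432907264123375718, []),
  (464251130062612996275998822, [(224, 0, 36344967696)]), (657679408738868660793938022, []),
  (696365034966536796531495014, []), (773736287421881857658228838, [(208, 1, 36344967696)]),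
  (928478792368574392946561126, []), (1857538284706388116689293414, [(152, 0, 32318435856)]),
  (638407431140292037185802406, []), (657750244254126103981625382, [(200, 2, 36344967696)]),
  (696435870481794239719182374, []), (773807122937139300845916198, [(200, 3, 36344967696), (208, 2,
  32302510146), (224, 0, 14077536261)]), (928549627883831836134248486, []),
  (1857609120221645559876980774, [(138, 0, 31815115521), (152, 0, 31547523876), (168, 0,
  14094313221), (200, 0, 13292078886)]), (2012351625132326890332393510, [(3, 4, 36344967696), (5, 5,
  36344967696), (10, 6, 36344967696), (20, 4, 36329041986), (24, 6, 36329041986), (33, 4,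
  35233624656), (68, 4, 35186372706), (136, 7, 36344967696), (160, 6, 35233624656), (192, 6,
  35186372706)]), (657811708787365304624386150, []), (773868587470378501488676966, []),
  (1316071669993578302722445414, [(152, 2, 31815115521)]), (1548185427395615899137511526, []),
  (1857670584754884760519741542, []), (773882754569827111498059814, [(208, 8, 36344967696)]),
  (1316085837093026912731828262, [(152, 3, 31815115521)]), (1393457089548371973858562086, []),
  (1548199594495064509146894374, [(138, 1, 31815115521), (152, 2, 27741135171), (168, 8,
  32318435856)]), (1857684751854333370529124390, [(152, 0, 9764878101)]),
  (232161000639805359298744374, []), (348217879358829758849519670, []),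
  (386903505586497894587076662, []), (928502420347804352384372790, []),
  (1277277371696643482592251958, []), (1393334250379656679456542774, []),
  (386941284536370852211757110, []), (696426441895639713593987126, [(200, 8, 13439104596)]),
  (928540199297677310009053238, []), (1277315150646516440216932406, []),
  (1393372029329529637081223222, [(164, 8, 13439043156)]), (1548114534276222172369555510, []),
  (1393513774110992021275578422, []), (1548256279057684556563910710, []),
  (232127945227342378342715478, []), (928511866233691597355257878, [(196, 2, 5190715176), (200, 2,
  610604856), (208, 2, 5694948936), (224, 2, 1114838616)]), (1315972443810198863300694038, [(176, 2,
  5190715431)]), (773807140236872019691606038, [(196, 8, 5102728326), (200, 8, 557081991), (208, 8,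
  5641564806), (224, 8, 1095918471)]), (2012351642432059609178083350, [(3, 9, 36344967696), (5, 9,
  36329238816), (10, 9, 36045135921), (12, 9, 35776761906), (17, 9, 36295561536), (34, 9,
  36011458641), (48, 9, 35206336596), (68, 9, 35726245986), (80, 9, 35189497956), (136, 9,
  35439923571), (160, 9, 34903175541), (192, 9, 34633691766)]), (193654879688284242369417270, []),
  (232340505915952378106974262, [(224, 3, 17552443431)]), (348397384634976777657749558, []),
  (77418481885621724796784694, []), (232160986796303055252197430, [(48, 10, 36344967696), (80, 10,
  36329235201), (160, 10, 36045132546), (192, 10, 35776758291)]), (309532239287659321211850806, []),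
  (619017396646928182594080822, []), (696388649102264451922759734, [(48, 11, 36344967696), (72, 12,
  36344967696), (80, 13, 36344967696), (136, 14, 36344967696), (160, 15, 36344967696), (192, 16,
  36344967696)]), (928502406504302048337825846, [(12, 10, 32318435856), (36, 11, 32318435856), (72,
  13, 32302703361), (80, 17, 36344967696), (136, 18, 36344967696), (144, 19, 36344967696), (160, 20,
  36344967696), (192, 21, 36344967696), (208, 22, 36344967696)]), (1548105075699754129032319030,
  []), (77456260835494682421465142, []), (154827513290839743548198966, []),
  (309570018237532278836531254, []), (619055175596801140218761270, []),
  (696426428052137409547440182, [(48, 23, 36344967696), (72, 24, 36344967696), (80, 25,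
  36344967696), (136, 24, 36092326176), (160, 25, 36092326176), (192, 26, 36344967696), (200, 27,
  36344967696)]), (928540185454175005962506294, [(12, 11, 31814136096), (36, 23, 32318435856), (72,
  28, 36344967696), (136, 29, 36344967696), (160, 11, 14630941776), (192, 28, 35267900736)]),
  (1238629510575346002579263542, []), (1393372015486027333034676278, [(12, 14, 31814136096), (36,
  24, 32318435856), (48, 28, 32318435856), (80, 30, 36344967696), (132, 31, 36344967696), (136, 32,
  36344967696), (160, 33, 36344967696), (164, 27, 32318435856), (192, 34, 36344967696)]),
  (1548114520432719868323008566, [(12, 15, 31814136096), (36, 25, 32318435856), (72, 30,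
  32318435856), (132, 35, 36344967696), (160, 36, 36344967696), (192, 37, 36344967696)]),
  (38912379389288930878263350, []), (154969258072302127742554166, []),
  (1393513760267489717229031478, [(10, 18, 31815119376), (12, 18, 31814136096), (18, 29,
  31815119376), (36, 29, 31814136096), (80, 18, 31006483776), (96, 18, 31005500496), (136, 38,
  36344967696), (192, 38, 36291306816)]), (1548105083770206860303503382, [(224, 39, 36344967696)]),
  (1857590241129475721685733398, [(193, 3, 17552639781), (194, 3, 17283159861), (196, 3,
  22399165956), (200, 3, 22129686036), (208, 39, 32318435856), (224, 39, 28039254066)]),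
  (38765920311796408309616726, []), (77451546539464544047173718, []), (154822798994809605173907542,
  []), (309565303941502140462239830, []), (348250930169170274053361750, [(36, 40, 36344967696), (40,
  40, 36093305601), (68, 41, 36344967696), (96, 42, 36344967696), (136, 41, 36093305601), (160, 42,
  36093305601)]), (619050461300771001844469846, []), (696421713756107271173148758, [(10, 12,
  31763996721), (18, 40, 32318435856), (40, 40, 28039254066), (80, 43, 36344967696), (96, 44,
  36344967696), (144, 44, 36092317746), (160, 43, 36092317746), (192, 45, 36344967696)]),
  (773792966211452332299882582, [(18, 40, 31815115521), (36, 40, 27787595826), (68, 46,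
  36344967696), (80, 47, 36344967696), (96, 48, 36344967696), (130, 46, 36092313891), (144, 48,
  36092313891), (160, 47, 36092313891), (192, 49, 36344967696), (208, 50, 36344967696), (224, 50,
  36092313891)]), (1238624796279315864204972118, []), (1315996048734652133533651030, [(10, 14,
  31763996721), (18, 41, 32318435856), (40, 46, 32318435856), (80, 51, 36344967696), (136, 52,
  36344967696), (160, 53, 36344967696), (192, 32, 22305580806)]), (1548109806136689729948717142,
  [(10, 15, 31763996721), (36, 43, 32318435856), (40, 47, 32318435856), (68, 51, 32318435856), (96,
  54, 36344967696), (136, 55, 36344967696), (160, 56, 36344967696), (168, 50, 32318435856), (192,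
  57, 36344967696)]), (1857594963495958591330947158, [(10, 16, 31763996721), (18, 42, 32318435856),
  (36, 44, 32318435856), (40, 48, 32318435856), (80, 54, 32318435856), (136, 58, 36344967696), (144,
  59, 36344967696), (160, 60, 36344967696), (168, 50, 31814123811), (192, 61, 36344967696)]),
  (1934966215951294860659626070, [(2, 62, 36344967696), (8, 62, 36092317746), (10, 63, 36344967696),
  (16, 64, 36344967696), (18, 65, 36344967696), (32, 64, 36092317746), (40, 65, 36092317746), (64,
  62, 35187356256), (80, 65, 35187356256), (128, 62, 34683052146), (160, 65, 34683052146), (192, 63,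
  35187356256)]), (1857741435264594863292780566, [(140, 39, 31767933456)]),
  (1857552467953215286789902390, [(196, 2, 13258729221)]), (1857590246903088244414582838, []),
  (77456274679559936421498934, []), (619055189440866394218795062, []), (696426441896202663547473974,
  [(12, 41, 31767933456), (72, 66, 36344967696), (132, 51, 26600567376), (136, 67, 36344967696),
  (160, 30, 26600548101), (192, 68, 36344967696), (200, 69, 36344967696)]),
  (1857665878535776055066726454, []), (38855724817545351699992630, []), (77541351045213487437549622,
  []), (154912603500558548564283446, []), (309655108447251083852615734, []),
  (1393457105695746138050760758, [(10, 31, 31767929601), (12, 52, 31767933456), (18, 67,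
  31815119376), (48, 67, 31005631056), (68, 52, 30895530576), (96, 31, 30895515141), (130, 70,
  36344967696), (136, 71, 36344967696), (138, 27, 27741397761), (144, 72, 36344967696), (146, 69,
  31815119376), (160, 70, 36290454096), (176, 69, 31005631056), (192, 71, 36290454096), (224, 27,
  14789387781)]), (38912393233354184878297142, []), (77598019461022320615854134, []),
  (154969271916367381742587958, []), (619196934222328778413150262, []),
  (1238771269200873640773652534, []), (1393513774111554971229065270, [(10, 35, 31767929601), (12,
  55, 31767933456), (36, 68, 30972084816), (96, 73, 36344967696), (132, 74, 36344967696), (136, 75,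
  36344967696), (140, 50, 27741401616), (160, 76, 36344967696), (164, 69, 30972084816), (192, 77,
  36344967696)]), (1857741436417516367899627574, [(10, 37, 31767929601), (12, 57, 31767933456), (72,
  73, 32318435856), (132, 78, 36344967696), (192, 79, 36344967696)]), (116071073463831488793169998,
  []), (464241709548882282072526926, []), (928469371854843678743089230, []),
  (174113679904791093133463694, []), (928483538954292288752472078, [(194, 80, 36344967696), (196,
  80, 36344967456), (208, 80, 36089955651), (224, 80, 36089955411)]), (1277258490303131418960351246,
  [(176, 80, 32318435856)]), (1548057873932837151112974350, [(162, 2, 31744951056), (164, 2,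
  31743902496), (176, 80, 31811765571), (224, 39, 557208711)]), (2167028041149479878238949390, [(3,
  81, 36344967696), (5, 81, 36344967456), (9, 82, 36344967696), (10, 83, 36344967696), (12, 83,
  36344967456), (17, 83, 36089955651), (18, 84, 36344967696), (19, 50, 27687732096), (20, 84,
  36344967456), (21, 50, 27671020416), (24, 81, 36089955651), (26, 50, 31761633411), (28, 50,
  31760588931), (33, 83, 36089955411), (34, 84, 36343984656), (35, 50, 27686687616), (36, 84,
  36343984416), (37, 50, 27669975936), (40, 81, 36089955411), (42, 50, 31744921731), (44, 50,
  31743877251), (66, 81, 35170578966), (68, 81, 35170578726), (80, 83, 34412258631), (82, 50,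
  844187526), (84, 50, 827475846), (96, 83, 34412258391), (98, 50, 843143046), (100, 50, 826431366),
  (130, 83, 35170578966), (132, 83, 35170578726), (144, 81, 34412258631), (146, 50, 12971153031),
  (148, 50, 12970108551), (160, 81, 34412258391), (162, 50, 12954441351), (164, 50, 12953396871),
  (192, 82, 35170578966)]), (1857552455263761143070609438, [(208, 39, 22035859011)]),
  (38798969961339272882180126, []), (619083510950313866417033246, []), (657769137177982000008155166,
  [(12, 25, 31763563296), (20, 25, 31762514976), (36, 85, 36344967696), (72, 86, 36344967696), (80,
  86, 36344906256), (96, 87, 36344967696), (136, 88, 36344967696), (144, 88, 36344906256), (160, 89,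
  36344967696), (192, 90, 36344967696), (200, 91, 36344967696), (208, 91, 36344906256)]),
  (1857628013145501455903510558, [(10, 26, 31763628816), (12, 26, 31763563296), (18, 26,
  31762580496), (20, 26, 31762514976), (34, 87, 32318435856), (36, 87, 32318435616), (72, 87,
  32302568496), (80, 87, 32302568256), (96, 92, 36344967696), (130, 93, 36344967696), (132, 93,
  36344967456), (136, 93, 36329100336), (138, 27, 31763628816), (140, 27, 31763563296), (144, 93,
  36329100096), (146, 27, 31762580496), (148, 27, 31762514976), (160, 94, 36344967696), (192, 94,
  36329100336)]), (1857665865846321911347433502, []), (77531893622793603354349598, []),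
  (154903146078138664481083422, []), (619130808384100061151645726, []),
  (696502060839436330480324638, [(24, 85, 31815119376), (72, 95, 36344967696), (80, 95,
  36344906256), (136, 95, 36093309216), (144, 95, 36093247776)]), (1238705143362644923512147998,
  []), (1393447648273326253967560734, [(12, 35, 31763563296), (20, 36, 31762514976), (24, 88,
  31815119376), (36, 95, 32318435856), (80, 96, 36344967696), (96, 97, 36344967696), (136, 98,
  36344967696), (144, 99, 36344967696), (152, 91, 31815119376), (160, 77, 17987369061), (192, 100,
  36344967696)]), (1857675310579287650638123038, [(12, 37, 31763563296), (20, 37, 31762514976), (24,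
  89, 31815119376), (72, 97, 32318435856), (80, 97, 32318374416), (192, 101, 36344967696)]),
  (96940822189839114704048270, []), (928681933694685371449790478, []), (154780290761485295202521118,
  []), (309522795708177830490853406, []), (1238582288045991554233585694, []),
  (1548067297903365419977330718, [(72, 95, 31476703491), (96, 102, 36344967696), (144, 95,
  27163914756), (160, 102, 36093247776), (192, 103, 36344967696), (224, 104, 36344967696)]),
  (1857590236518352446684188702, [(224, 80, 18832904451)]), (38912382848618387147903006, []),
  (154969261531631584012193822, []), (193654887759299717603315742, [(20, 105, 36344967696), (68, 73,
  31458355266), (80, 97, 31458877956), (96, 106, 36344967696), (160, 78, 26877199731)]),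
  (619196923837592980682756126, []), (1857741426032780570169233438, [(6, 103, 31767933456), (10,
  106, 32318435856), (20, 106, 32302645536), (34, 75, 31744612401), (40, 98, 31745134851), (68, 75,
  31458355266), (80, 98, 31458877956), (96, 107, 36344967696), (130, 108, 36344967696), (132, 108,
  36329177376), (134, 104, 31767933456), (136, 109, 36344967696), (144, 109, 36329177376), (160,
  110, 36344967696), (162, 50, 18831398961), (168, 91, 26963628291), (192, 110, 36329177376), (196,
  50, 14251223106), (208, 91, 22399181316)]), (154761405907237636562669598, []),
  (309503910853930171851001886, []), (618989068213199033233231902, []),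
  (1238563403191743895593734174, []), (309560579269739005029306398, []),
  (619045736629007866411536414, []), (1238620071607552728772038686, []), (94458878296618940157982,
  []), (154836963788977949395570718, [(144, 105, 27253813776), (160, 79, 26877200211)]),
  (619064626094939346066133022, [(136, 79, 26877196371), (160, 101, 26877653781), (192, 111,
  36344967696)]), (773807131005620676521545758, [(16, 112, 36344967696), (32, 112, 36092322561),
  (64, 113, 36344967696), (80, 114, 36344967696), (128, 113, 36092322561), (160, 114,
  36092322561)])]

/-- Codes of the dense pattern-free graphs of maximal degree at most 4 on 9 vertices, with certificates for their extensions. -/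
def sparse9 : List (ℕ × List (ℕ × ℕ × ℕ)) :=
  [(17752525623703383274858244903014, []), (16485184508337437294637609029734, []),
  (15851243222180082798133728940070, [(69, 0, 654820258320), (97, 1, 654820258320), (100, 2,
  654820258320), (224, 3, 654820258320), (448, 4, 654820258320)]),
  (15851359279058765811330593230886, [(37, 5, 654820258320), (69, 5, 650777800770), (97, 6,
  654820258320), (100, 6, 650777800770)]), (239696839167925339670965293350, [(324, 7,
  654820258320)]), (398153164196454014862347112742, []), (794293976767775720417958989862, []),
  (10781994213722223778304092180518, []), (16485184654804585239891448860710, []),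
  (239696839185225072389810983190, []), (3803183961966704470318752567350, [(448, 8, 654820258320)]),
  (3803648189629010431715423129654, [(448, 9, 654820258320)]), (5705125298601954203408447934518,
  []), (6338950598716140944158651420726, [(416, 10, 654820258320), (448, 11, 654820258320)]),
  (10780678250746193715865682546742, []), (12682154151383685705697904136246, [(336, 10,
  590395748880)]), (15217456560470816218141132427318, [(304, 9, 590395748880), (336, 11,
  590395748880)]), (6339182712473542981755066486838, []), (10780910364503595753462097612854, []),
  (11414735664617782494212301099062, []), (12682386265141087743294319202358, [(328, 11,
  582326952705), (448, 11, 427642996485)]), (15217688674228218255737547493430, [(268, 8,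
  582342685200), (292, 9, 582342685200), (328, 10, 582326952705), (416, 11, 427375609605)]),
  (16485339274456519714828288626742, [(12, 12, 654820258320), (36, 13, 654820258320), (72, 13,
  650777993985), (160, 12, 645186811200), (320, 12, 640607618625), (384, 13, 633012836100)]),
  (3803648227407960304673047810102, []), (5705125336380904076366072614966, [(392, 14, 654820258320),
  (448, 4, 279279319335)]), (6338950636495090817116276101174, []),
  (15217456598249766091098757107766, [(328, 4, 279279384615), (392, 4, 352309557270)]),
  (15851281898363880809439294754870, [(48, 15, 654820258320), (80, 16, 654820258320), (160, 16,
  654567616800), (192, 17, 654820258320), (264, 18, 654820258320), (320, 19, 654820258320), (384,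
  19, 654567616800)]), (5705357450138306113962487681078, [(416, 9, 564403532880), (448, 20,
  654820258320)]), (10780910402282545626419722293302, []), (6339647582082524707039763337270, [(416,
  21, 654820258320)]), (10464462584055520110784727584822, []), (10781375234112577478746794463286,
  [(292, 14, 582342685200)]), (12682851134750069468579016052790, [(304, 9, 495667287120), (336, 21,
  590395748880), (448, 4, 280793068920)]), (15218153543837199981022244343862, [(292, 4,
  279279253545), (304, 20, 582342685200), (416, 4, 280792020345)]),
  (10464617326560466803320015917110, []), (12683005877255016161114304385078, [(268, 10,
  517162217760), (328, 21, 582342685200)]), (15218308286342146673557532676150, []),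
  (10781375375857358941130988818486, [(448, 22, 654820258320)]), (17753609477657090868722272407574,
  [(69, 11, 358670767620), (74, 11, 354392512020), (100, 23, 654820258320), (104, 23, 654820254465),
  (133, 11, 358669719300), (138, 11, 354391463700), (164, 23, 654568600080), (168, 23,
  654568596225), (292, 24, 654820258320), (296, 24, 654820254465), (324, 5, 495288591510), (328, 5,
  490976916630), (388, 5, 426569114775), (392, 5, 422257439895)]), (2852562101738833228825283366998,
  []), (5387864510825963741268511658070, [(416, 25, 654820258320)]),
  (7606253061520513099062800126038, [(392, 25, 590144086785), (416, 26, 654820258320)]),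
  (6338950631780794786977901809750, [(416, 27, 654820258320), (448, 28, 654820258320)]),
  (7606601232304100036059919913046, [(400, 7, 212691554880)]), (15217456593535470060960382816342,
  [(336, 28, 590395748880), (416, 28, 590143098930)]), (5388290052862006023326758178902, []),
  (6339028003033250132039028543574, [(416, 29, 654820258320)]), (7606678603556555381121046646870,
  [(400, 2, 173493687105), (448, 23, 142811231640)]), (15217533964787925406021509550166, [(352, 23,
  142811231625), (400, 23, 78702404745), (448, 30, 654820258320)]),
  (16485184565016226865112250683478, [(36, 31, 654820258320), (68, 32, 654820258320), (96, 33,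
  654820258320), (100, 34, 654820258320), (160, 35, 654820258320), (192, 36, 654820258320), (224,
  37, 654820258320), (288, 38, 654820258320), (320, 39, 654820258320), (384, 40, 654820258320)]),
  (6339570206115773331840262312022, [(416, 41, 654820258320)]), (10781297858145826103547293438038,
  []), (12682773758783318093379515027542, [(274, 25, 582342685200), (336, 41, 590395748880), (448,
  14, 358656255750)]), (7607452920396480618518695481430, [(392, 1, 109308117600), (416, 42,
  654820258320)]), (10781529971903228141143708504150, [(352, 1, 105013154400), (416, 5,
  434480101140)]), (12683005872540720130975930093654, [(266, 10, 517095366705), (292, 27,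
  582342685200), (296, 29, 582342685200), (324, 41, 582342685200), (352, 42, 590395748880), (392, 5,
  434463389460), (416, 24, 444936294450)]), (15218308281627850643419158384726, [(292, 28,
  582342685200)]), (10781839457060587410005090734166, [(274, 25, 517163197185), (336, 1,
  105550017120), (400, 6, 105550017120), (448, 43, 654820258320)]),
  (11415664757174774150755294220374, [(266, 9, 517095366705), (292, 7, 212423246400), (296, 2,
  169198846785), (392, 6, 109576548960), (416, 23, 449214484530)]),
  (12683315357698079399837312323670, [(266, 11, 517095366705), (274, 26, 582342685200), (336, 42,
  582342685200), (400, 23, 453241016370), (448, 44, 654820258320)]),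
  (15218617766785209912280540614742, [(296, 23, 142811239815), (392, 43, 590395748880), (416, 44,
  590395748880)]), (160391291244479970047748575318, []), (794216591358594688388286222422, [(80, 45,
  654820258320), (160, 45, 654567608370), (192, 46, 654820258320), (272, 47, 654820258320), (288,
  47, 654567608370)]), (1269585566444252753951400759382, []), (1428041891472781429138489708630,
  [(40, 48, 654820258320), (160, 49, 654820258320), (192, 45, 589238137440), (264, 50,
  654820258320), (288, 51, 654820258320), (296, 52, 654820258320), (384, 53, 654820258320), (416,
  34, 242956399200)]), (5705125336394748141620072648758, [(388, 41, 576357429840), (392, 41,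
  503057777505), (416, 21, 576357410565), (448, 21, 503057758230)]),
  (10780678288538987654077307260982, [(328, 41, 503056733025), (448, 3, 352309491990)]),
  (15217456598263610156352757141558, [(268, 25, 581524795920), (328, 21, 503056709910), (392, 3,
  352309557270)]), (15851281898377724874693294788662, [(12, 54, 654820258320), (132, 55,
  654820258320), (160, 56, 654820258320), (264, 55, 650777993985), (320, 56, 650777993985), (384,
  57, 654820258320)]), (10306006344117201154398361849910, [(448, 58, 654820258320)]),
  (10781375319202787197551810547766, [(274, 41, 434336203665), (304, 3, 77364422745), (416, 58,
  590341235280)]), (11415200619316973938302014033974, []), (7607298324364455483759975829558, [(388,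
  59, 654820258320)]), (10464462725814145638422921973814, [(292, 25, 495557317200), (352, 59,
  590395748880), (416, 1, 425592367365), (448, 0, 354344318070)]),
  (10781375375871203006384988852278, [(292, 3, 77364500310)]), (12682851276508694996217210441782,
  [(268, 1, 100450009680), (388, 1, 425592432645)]), (15218153685595825508660438732854, [(268, 5,
  382923650580), (292, 21, 210997909590), (388, 0, 354611704950)]),
  (10464926953476451599819592536118, [(268, 28, 509047222800), (328, 59, 582342685200)]),
  (15218617913258131470057109295158, []), (15376144980389196921165051088910, [(13, 60,
  654820258320), (28, 29, 516843190530), (44, 29, 516575803650), (84, 61, 654820258320), (100, 61,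
  654819275280), (208, 29, 207538452870), (224, 29, 207271065990), (448, 60, 619319686680)]),
  (239851515583942492658871849230, [(280, 27, 508186170240), (296, 27, 507918783360), (400, 62,
  654820258320), (416, 62, 654819275280)]), (715220490669528535812320547086, []),
  (794448653183792873405865545742, [(336, 58, 374786398305), (352, 58, 306335357025)]),
  (1428273953297979614156069031950, []), (2852871619945842040551238160414, []),
  (5705086679090029920956533329950, []), (7606562579727521910788754919454, [(392, 0, 173497880880),
  (400, 0, 173496832320), (448, 24, 138564498840)]), (10780639631234269433413767942174, [(352, 0,
  177792844080), (448, 44, 159189866595)]), (12682115531871761423245989531678, [(448, 60,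
  177842881905)]), (15217417940958891935689217822750, [(352, 24, 138564498825), (392, 44,
  159189862755), (400, 44, 159189797220), (416, 60, 173564691825), (448, 63, 654820258320)]),
  (15851243241073006654029755469854, [(20, 64, 654820258320), (36, 65, 654820258320), (80, 65,
  650777859120), (96, 66, 654820258320), (160, 67, 654820258320), (192, 68, 654820258320), (288, 68,
  650777859120), (320, 67, 650777859120), (384, 69, 654820258320)]),
  (7607762438603489430244650274846, []), (10306470515024650909716214599710, [(328, 0, 306388239120),
  (336, 0, 237668762640), (392, 43, 301462616145), (400, 43, 233011574865), (448, 30,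
  289383020625)]), (12683315390747728942701884887070, [(266, 4, 141822564150), (268, 4,
  77398054710), (274, 4, 141821515590), (276, 4, 77397006150), (328, 24, 275435067015), (336, 24,
  206716638855), (392, 30, 143084779875), (400, 30, 143084714340), (448, 63, 289382996085)]),
  (5705125412013691375287005499422, [(400, 70, 654820258320)]), (6339647657715312005960696221726,
  []), (7607298258238617255042714325022, []), (10781375309745364777667727347742, []),
  (11415200609859551518417930833950, [(276, 10, 443859309120), (292, 70, 582342685200), (416, 5,
  174287188065), (448, 44, 352557024135)]), (15218153619469987279943177228318, [(280, 44,
  159188813715), (400, 44, 352556958615)]), (15218617847132293241339847790622, [(280, 60,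
  174336443745)]), (7607452877888247294208724095006, [(400, 70, 576919794180), (416, 70,
  507930837525), (448, 61, 229807386660)]), (15218308239119617319109186998302, [(352, 61,
  230074773540), (416, 61, 298811088915)]), (17753609439871224027281946234910, [(72, 71,
  654820258320), (144, 71, 654568538400), (192, 72, 654820258320), (288, 71, 650289303585), (320,
  72, 650792743425), (384, 72, 646513508610)]), (1584756905173118109186815217694, []),
  (7606098465478103228506350080030, [(416, 28, 285086946675)]), (7607762552016376709358915997726,
  []), (10306470628437538188830480322590, [(324, 3, 314170639635), (388, 26, 434923149345), (448,
  62, 358169936385)]), (10781839603523124231983929020446, [(400, 22, 141810874455)]),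
  (12683315504160616221816150609950, [(262, 61, 246985089060), (266, 28, 285085894035), (388, 62,
  430898123010)]), (15217379236447808893035275800606, [(416, 60, 234152742945), (448, 60,
  298292109330)]), (1268424407359307079767262679070, []), (5071377416969742841292509073438, []),
  (6339028017198044300383250206750, [(160, 73, 654820258320), (320, 73, 650777936160), (384, 74,
  654820258320)])]

/-- Codes of the dense pattern-free graphs of maximal degree at most 4 on 10 vertices, with certificates for their extensions. -/
def sparse10 : List (ℕ × List (ℕ × ℕ × ℕ)) :=
  [(22407631448071475870065166088049190, []), (31494150950508014515803884779901478, []),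
  (32467706611483294696153361431564326, []), (72708017168648523100306898586079270, []),
  (145440738007342822944771382992080934, [(548, 0, 11649936536080)]),
  (12023037844641437952598470650139174, [(832, 1, 11649936536080), (896, 2, 11649936536080)]),
  (31494151066564893198817081644192294, []), (105184815903794582383159383073919270, []),
  (145428689948082609566443568015708214, []), (145428690412310271872404964686270518, []),
  (135046631995232442402437515612360758, [(200, 3, 11649936536080), (448, 1, 3464452407445), (832,
  4, 11649936536080)]), (145431225714719359002917407914561590, [(304, 5, 11649936536080), (416, 1,
  3464183972005), (800, 6, 11649936536080), (896, 4, 5989878417430)]),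
  (3910707983175577241147893497565238, [(672, 7, 11649936536080), (832, 7, 11645894271745), (896, 5,
  7231156344580)]), (11699153270978408979718812324958262, [(584, 8, 11649936536080), (832, 5,
  8420658000400), (896, 8, 11640303088960)]), (127257552882167275426998804206161974, []),
  (15592741857503437206326475063922742, [(704, 9, 11649936536080), (832, 0, 3384537684055), (896, 0,
  3457567856710)]), (25977335576990353806806367366123574, [(672, 10, 11649936536080), (896, 11,
  11649936536080)]), (62323423490254461345446852787802166, [(560, 9, 10619144385040)]),
  (85729314266930323092445707601547318, []), (103902353274220071431496518731141174, [(560, 0,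
  3384537622615), (672, 11, 10618891743520)]), (145430592121570781168087211750821942, [(268, 12,
  11649936536080), (292, 0, 3384537610330), (548, 0, 7975860713770), (672, 12, 11584434959680),
  (772, 0, 3386053587610), (800, 0, 7977374463370)]), (135046632692215808786200396724277302, []),
  (145435668139496500220914380251959350, []), (32469608977738771704223949975031830, [(138, 6,
  9240963580435), (392, 2, 10317862089895)]), (94817736096946154948208542078832662, [(74, 4,
  8274595938835), (138, 4, 7179379278355), (577, 11, 1306785064600), (641, 11, 1306784016280)]),
  (135045680909144552225234625472598102, []), (135047899297695246774592419761066070, []),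
  (135046631995265507056280334862749782, [(448, 13, 11649936536080), (704, 13, 11585259376690)]),
  (145431225714752423656760227164950614, [(296, 14, 11649936536080), (416, 13, 10619144385040),
  (672, 15, 11649936536080)]), (135046632072636759511625395989483606, []),
  (145440104298085430787379270772691030, []), (11699153116268968686869096287014998, [(832, 14,
  8420658000400)]), (22083746835755885287348988589215830, [(800, 16, 11649936536080)]),
  (31170266338192423933087707281068118, []), (32468340552826130840220339953307734, [(384, 17,
  11649936536080)]), (51939463673434197091022633441529942, [(832, 13, 1237828671400)]),
  (62324057392921113691502525743730774, []), (72708651109991359244373877107822678, []),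
  (93518393457399807177072299384868950, [(580, 16, 10619144385040)]),
  (103902987176886723777552191687069782, [(548, 14, 8352206959120), (672, 13, 1237828675480)]),
  (124672184512128496935487117847531606, []), (135046632614839842034825197223252054, [(296, 16,
  10413791261200), (800, 11, 3377197250920)]), (135047900497554122742111875656421462, [(522, 1,
  2222702891380), (648, 1, 9230573254420)]), (145435668603577703449383254353875030, []),
  (145437570079478340941373086575464534, [(266, 4, 4812803582005)]),
  (25962278511683348520685316357591126, [(800, 3, 8359705583665)]),
  (62308366424947456059325801779269718, [(784, 12, 6148891878145), (800, 12, 5045102117155)]),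
  (88310405630890731764669908461391958, [(672, 3, 7324871164435), (704, 12, 6217342919425), (800, 8,
  8154352459825)]), (12982170188229132148600922390499414, []), (51924406530760653645586659680555094,
  []), (85714891026923431993065406796501078, []), (93503336314726263731636325623894102, [(704, 3,
  3887302582390), (896, 2, 3389417748580)]), (96099484743993677545936758160592982, [(192, 18,
  11649936536080), (384, 19, 11649936536080), (576, 19, 11504478069505), (768, 18,
  11504478069505)]), (124657127369454953490051144086556758, [(800, 2, 3389434460260)]),
  (3910073925799498446307758503727158, []), (42852310268331019943293495793782838, []),
  (51938829770767558589032214485635126, []), (124671550609461858433496698891636790, []),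
  (145435192770464760063127647624990774, [(560, 16, 3442423928485), (784, 16, 2432411713960)]),
  (125961380840521552071238398244917302, []), (4234117342539936645137386280604174, [(448, 20,
  11649936536080)]), (27274934654706086030050725794697230, []),
  (129848236037613892423760348873773326, [(44, 14, 7247825805475), (100, 14, 3850727741350)]),
  (145440104182061601753908938480963614, []), (6506222316409607686432346832785438, [(608, 10,
  9321776780320)]), (11698519174945025466658013791801374, [(592, 21, 11649936536080)]),
  (31169632396868480712876624785854494, [(532, 10, 9317481817120)]),
  (51938829732110253870811550946316318, [(832, 15, 4407465191575)]),
  (62323423451597170471291443248517150, []), (124671550570804553715276035352317982, []),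
  (129853701311510322172642977007423518, []), (23383089475264447191678958149226526, []),
  (62325325817795968688664695439282206, []), (51929317516886378908457904441053214, []),
  (124662038355580678752922388847054878, [(896, 20, 6960039162115)])]

/-- Codes of the dense pattern-free graphs of maximal degree at most 4 on 11 vertices, with certificates for their extensions. -/
def sparse11 : List (ℕ × List (ℕ × ℕ × ℕ)) :=
  [(728894689427087471323048612916282167334, []), (1106262103659484126972106178694670881318, []),
  (1191332695409520947763237456434300097062, []), (265980645808790283355008462855510265910, []),
  (1106385127253634717976556017739633102902, []), (404230823073967560509321810615707471926, []),
  (1063860215982232062437547833903676756022, []), (893577430894199912945983149282756497462, [(1856,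
  0, 205163983024656)]), (776613155690612912856307522666559279158, [(1920, 1, 205163983024656)]),
  (936124408793196383261556991592581402678, []), (893599497521793727722548807756625055798, []),
  (1191346649707253296679091664331016081462, []), (356378614592117439326070145541812359222, [(1696,
  1, 167587380277536)]), (595629269893087867506488082044547076182, []),
  (393596999107688266590457036945307570262, []), (893718951411931489792398761616423882838, []),
  (1063736868503353098963832265484351410262, []), (510456099871405976561149911674996756566, []),
  (255307874695259717606921435247071563862, []), (510519731015597144107855628093204041814, []),
  (595498457378435141936076939095964930574, []), (787246979022796206456313078357676412958, [])]

/-- Codes of the dense pattern-free graphs of maximal degree at most 4 on 12 vertices, with certificates for their extensions. -/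
def sparse12 : List (ℕ × List (ℕ × ℕ × ℕ)) :=
  [(10108641669226707497587581694514667257696310, []),
  (10456973848678584501583838192149945083334710, [])]

theorem sparse1_step :
    step [1, 0] [0] 1 4 1 sparse1 (sparse2.map Prod.fst) = true :=
  Eq.refl true

theorem sparse2_step :
    step [2, 1, 0] [1, 0] 2 4 2 sparse2 (sparse3.map Prod.fst) = true :=
  Eq.refl true

theorem sparse3_step :
    step [3, 2, 1, 0] [2, 1, 0] 3 4 3 sparse3 (sparse4.map Prod.fst) = true :=
  Eq.refl true

theorem sparse4_step :
    step [4, 3, 2, 1, 0] [3, 2, 1, 0] 4 4 5 sparse4 (sparse5.map Prod.fst) = true :=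
  Eq.refl true

theorem sparse5_step :
    step [5, 4, 3, 2, 1, 0] [4, 3, 2, 1, 0] 5 4 7 sparse5 (sparse6.map Prod.fst) = true :=
  Eq.refl true

theorem sparse6_step :
    step [6, 5, 4, 3, 2, 1, 0] [5, 4, 3, 2, 1, 0] 6 4 9 sparse6 (sparse7.map Prod.fst) = true :=
  Eq.refl true

theorem sparse7_step :
    step [7, 6, 5, 4, 3, 2, 1, 0] [6, 5, 4, 3, 2, 1, 0] 7 4 11 sparse7 (sparse8.map Prod.fst) = true :=
  Eq.refl true

theorem sparse8_step :
    step [8, 7, 6, 5, 4, 3, 2, 1, 0] [7, 6, 5, 4, 3, 2, 1, 0] 8 4 14 sparse8 (sparse9.map Prod.fst) = true :=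
  Eq.refl true

theorem sparse9_step :
    step [9, 8, 7, 6, 5, 4, 3, 2, 1, 0] [8, 7, 6, 5, 4, 3, 2, 1, 0] 9 4 17 sparse9 (sparse10.map Prod.fst) = true :=
  Eq.refl true

theorem sparse10_step :
    step [10, 9, 8, 7, 6, 5, 4, 3, 2, 1, 0] [9, 8, 7, 6, 5, 4, 3, 2, 1, 0] 10 4 20 sparse10 (sparse11.map Prod.fst) = true :=
  Eq.refl true

theorem sparse11_step :
    step [11, 10, 9, 8, 7, 6, 5, 4, 3, 2, 1, 0] [10, 9, 8, 7, 6, 5, 4, 3, 2, 1, 0] 11 4 24 sparse11 (sparse12.map Prod.fst) = true :=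
  Eq.refl true

theorem dense_covers {V : Type} {A : V → V → Prop} (hA : Free A) :
    Covers A 11 (dense11.map Prod.fst) 11 21 := by
  have h1 : Covers A 11 (dense1.map Prod.fst) 1 0 := covers_one hA 11 0
  have h2 : Covers A 11 (dense2.map Prod.fst) 2 1 :=
    step_sound hA dense1_step (by norm_num) (by intro e d; omega) h1
  have h3 : Covers A 11 (dense3.map Prod.fst) 3 2 :=
    step_sound hA dense2_step (by norm_num) (by intro e d; omega) h2
  have h4 : Covers A 11 (dense4.map Prod.fst) 4 3 :=
    step_sound hA dense3_step (by norm_num) (by intro e d; omega) h3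
  have h5 : Covers A 11 (dense5.map Prod.fst) 5 5 :=
    step_sound hA dense4_step (by norm_num) (by intro e d; omega) h4
  have h6 : Covers A 11 (dense6.map Prod.fst) 6 7 :=
    step_sound hA dense5_step (by norm_num) (by intro e d; omega) h5
  have h7 : Covers A 11 (dense7.map Prod.fst) 7 9 :=
    step_sound hA dense6_step (by norm_num) (by intro e d; omega) h6
  have h8 : Covers A 11 (dense8.map Prod.fst) 8 12 :=
    step_sound hA dense7_step (by norm_num) (by intro e d; omega) h7
  have h9 : Covers A 11 (dense9.map Prod.fst) 9 15 :=
    step_sound hA dense8_step (by norm_num) (by intro e d; omega) h8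
  have h10 : Covers A 11 (dense10.map Prod.fst) 10 18 :=
    step_sound hA dense9_step (by norm_num) (by intro e d; omega) h9
  have h11 : Covers A 11 (dense11.map Prod.fst) 11 21 :=
    step_sound hA dense10_step (by norm_num) (by intro e d; omega) h10
  exact h11

theorem sparse_covers {V : Type} {A : V → V → Prop} (hA : Free A) :
    Covers A 4 (sparse12.map Prod.fst) 12 24 := by
  have h1 : Covers A 4 (sparse1.map Prod.fst) 1 0 := covers_one hA 4 0
  have h2 : Covers A 4 (sparse2.map Prod.fst) 2 1 :=
    step_sound hA sparse1_step (by norm_num) (by intro e d; omega) h1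
  have h3 : Covers A 4 (sparse3.map Prod.fst) 3 2 :=
    step_sound hA sparse2_step (by norm_num) (by intro e d; omega) h2
  have h4 : Covers A 4 (sparse4.map Prod.fst) 4 3 :=
    step_sound hA sparse3_step (by norm_num) (by intro e d; omega) h3
  have h5 : Covers A 4 (sparse5.map Prod.fst) 5 5 :=
    step_sound hA sparse4_step (by norm_num) (by intro e d; omega) h4
  have h6 : Covers A 4 (sparse6.map Prod.fst) 6 7 :=
    step_sound hA sparse5_step (by norm_num) (by intro e d; omega) h5
  have h7 : Covers A 4 (sparse7.map Prod.fst) 7 9 :=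
    step_sound hA sparse6_step (by norm_num) (by intro e d; omega) h6
  have h8 : Covers A 4 (sparse8.map Prod.fst) 8 11 :=
    step_sound hA sparse7_step (by norm_num) (by intro e d; omega) h7
  have h9 : Covers A 4 (sparse9.map Prod.fst) 9 14 :=
    step_sound hA sparse8_step (by norm_num) (by intro e d; omega) h8
  have h10 : Covers A 4 (sparse10.map Prod.fst) 10 17 :=
    step_sound hA sparse9_step (by norm_num) (by intro e d; omega) h9
  have h11 : Covers A 4 (sparse11.map Prod.fst) 11 20 :=
    step_sound hA sparse10_step (by norm_num) (by intro e d; omega) h10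
  have h12 : Covers A 4 (sparse12.map Prod.fst) 12 24 :=
    step_sound hA sparse11_step (by norm_num) (by intro e d; omega) h11
  exact h12

/-- The contact graph of the cuboctahedron. -/
def codeCo : ℕ := (sparse12.map Prod.fst).getD 0 0

/-- The contact graph of the twisted cuboctahedron. -/
def codeTco : ℕ := (sparse12.map Prod.fst).getD 1 0

/-- A pattern-free graph with 12 vertices and 24 edges is the contact graph of the
cuboctahedron or of the twisted cuboctahedron. -/
theorem classify {V : Type} {A : V → V → Prop} (hA : Free A) {T : Finset V} (hT : T.card = 12)
    (hE : dbl A T = 48) :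
    ∃ f, (Codes A f 12 codeCo ∨ Codes A f 12 codeTco) ∧ (Finset.range 12).image f = T := by
  by_cases hreg : ∀ u ∈ T, dg A T u ≤ 4
  · obtain ⟨Y, hY, f, hf, hfT⟩ := sparse_covers hA T hT (by omega) hreg
    refine ⟨f, ?_, hfT⟩
    have : Y ∈ [codeCo, codeTco] := hY
    simp only [List.mem_cons, List.not_mem_nil, or_false] at this
    rcases this with rfl | rfl
    · exact Or.inl hf
    · exact Or.inr hf
  · exfalso
    push Not at hreg
    obtain ⟨u, hu, hu4⟩ := hreg
    -- the average degree is 4, so some degree is at most 3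
    have hv : ∃ v ∈ T, dg A T v ≤ 3 := by
      by_contra hc
      push Not at hc
      have : ∑ v ∈ T, 4 < ∑ v ∈ T, dg A T v :=
        Finset.sum_lt_sum (fun i hi => hc i hi) ⟨u, hu, hu4⟩
      rw [Finset.sum_const, hT] at this
      change 12 • 4 < dbl A T at this
      rw [hE] at this
      norm_num at this
    obtain ⟨v, hv, hv3⟩ := hv
    have h1 := dbl_erase hA hv
    have hcard : (T.erase v).card = 11 := by rw [Finset.card_erase_of_mem hv, hT]
    obtain ⟨Y, hY, -⟩ := dense_covers hA (T.erase v) hcard (by omega)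
      (fun w _ => (Finset.card_filter_le _ _).trans hcard.le)
    exact absurd hY (List.not_mem_nil)

end Search

/-! ### Inner products and determinants -/

open scoped RealInnerProductSpace

theorem ip_coord (p q : E3) : ⟪p, q⟫ = p 0 * q 0 + p 1 * q 1 + p 2 * q 2 := by
  rw [PiLp.inner_apply, Fin.sum_univ_three]
  simp [mul_comm]

/-- The determinant of three vectors. -/
def det3 (a b c : E3) : ℝ :=
  a 0 * (b 1 * c 2 - b 2 * c 1) - a 1 * (b 0 * c 2 - b 2 * c 0) + a 2 * (b 0 * c 1 - b 1 * c 0)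

theorem det3_sq (a b c : E3) : det3 a b c ^ 2 = ⟪a, a⟫ * ⟪b, b⟫ * ⟪c, c⟫
    + 2 * ⟪a, b⟫ * ⟪a, c⟫ * ⟪b, c⟫ - ⟪a, a⟫ * ⟪b, c⟫ ^ 2 - ⟪b, b⟫ * ⟪a, c⟫ ^ 2
    - ⟪c, c⟫ * ⟪a, b⟫ ^ 2 := by
  simp only [ip_coord, det3]; ring

/-- Products of determinants are Gram determinants. -/
theorem det3_mul (a b c d e f : E3) : det3 a b c * det3 d e f =
    ⟪a, d⟫ * (⟪b, e⟫ * ⟪c, f⟫ - ⟪b, f⟫ * ⟪c, e⟫) - ⟪a, e⟫ * (⟪b, d⟫ * ⟪c, f⟫ - ⟪b, f⟫ * ⟪c, d⟫)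
      + ⟪a, f⟫ * (⟪b, d⟫ * ⟪c, e⟫ - ⟪b, e⟫ * ⟪c, d⟫) := by
  simp only [ip_coord, det3]; ring

theorem eq_zero_of_perp {a b c w : E3} (hD : det3 a b c ≠ 0) (ha : ⟪w, a⟫ = 0)
    (hb : ⟪w, b⟫ = 0) (hc : ⟪w, c⟫ = 0) : w = 0 := by
  simp only [ip_coord] at ha hb hc
  unfold det3 at hD
  have e0 : w 0 = 0 := by
    apply (mul_eq_zero.1 _).resolve_left hD
    linear_combination (b 1 * c 2 - b 2 * c 1) * ha + (c 1 * a 2 - c 2 * a 1) * hb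
      + (a 1 * b 2 - a 2 * b 1) * hc
  have e1 : w 1 = 0 := by
    apply (mul_eq_zero.1 _).resolve_left hD
    linear_combination (b 2 * c 0 - b 0 * c 2) * ha + (c 2 * a 0 - c 0 * a 2) * hb
      + (a 2 * b 0 - a 0 * b 2) * hc
  have e2 : w 2 = 0 := by
    apply (mul_eq_zero.1 _).resolve_left hD
    linear_combination (b 0 * c 1 - b 1 * c 0) * ha + (c 0 * a 1 - c 1 * a 0) * hb
      + (a 0 * b 1 - a 1 * b 0) * hc
  ext i
  fin_cases i
  · exact e0
  · exact e1
  · exact e2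

theorem eq_of_ip {a b c p q : E3} (hD : det3 a b c ≠ 0) (ha : ⟪p, a⟫ = ⟪q, a⟫)
    (hb : ⟪p, b⟫ = ⟪q, b⟫) (hc : ⟪p, c⟫ = ⟪q, c⟫) : p = q := by
  rw [← sub_eq_zero]
  apply eq_zero_of_perp hD <;> rw [inner_sub_left] <;> linarith

theorem det3_eq_zero {x y z w : E3} (hw : w ≠ 0) (hx : ⟪w, x⟫ = 0)
    (hy : ⟪w, y⟫ = 0) (hz : ⟪w, z⟫ = 0) : det3 x y z = 0 := by
  by_contra h
  exact hw (eq_zero_of_perp h hx hy hz)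

theorem det3_tri {a b c : E3} (ha : ⟪a, a⟫ = 1) (hb : ⟪b, b⟫ = 1) (hc : ⟪c, c⟫ = 1)
    (hab : ⟪a, b⟫ = 1 / 2) (hac : ⟪a, c⟫ = 1 / 2) (hbc : ⟪b, c⟫ = 1 / 2) : det3 a b c ≠ 0 := by
  intro h
  have := det3_sq a b c
  rw [h, ha, hb, hc, hab, hac, hbc] at this
  norm_num at this

/-- Inner products in terms of the inner products with a touching triangle. -/
theorem ip_tri {a b c : E3} (ha : ⟪a, a⟫ = 1) (hb : ⟪b, b⟫ = 1) (hc : ⟪c, c⟫ = 1)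
    (hab : ⟪a, b⟫ = 1 / 2) (hac : ⟪a, c⟫ = 1 / 2) (hbc : ⟪b, c⟫ = 1 / 2) (p q : E3) :
    ⟪p, q⟫ = 2 * (⟪p, a⟫ * ⟪q, a⟫ + ⟪p, b⟫ * ⟪q, b⟫ + ⟪p, c⟫ * ⟪q, c⟫)
      - (⟪p, a⟫ + ⟪p, b⟫ + ⟪p, c⟫) * (⟪q, a⟫ + ⟪q, b⟫ + ⟪q, c⟫) / 2 := by
  have hba := hab; have hca := hac; have hcb := hbc
  rw [real_inner_comm] at hba hca hcb
  have key : p = (2 * ⟪p, a⟫ - (⟪p, a⟫ + ⟪p, b⟫ + ⟪p, c⟫) / 2) • a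
      + (2 * ⟪p, b⟫ - (⟪p, a⟫ + ⟪p, b⟫ + ⟪p, c⟫) / 2) • b
      + (2 * ⟪p, c⟫ - (⟪p, a⟫ + ⟪p, b⟫ + ⟪p, c⟫) / 2) • c := by
    apply eq_of_ip (det3_tri ha hb hc hab hac hbc) <;>
    simp only [inner_add_left, real_inner_smul_left, ha, hb, hc, hab, hac, hbc, hba, hca, hcb] <;>
    ring
  conv_lhs => rw [key]
  simp only [inner_add_left, real_inner_smul_left, real_inner_comm q a, real_inner_comm q b,
    real_inner_comm q c]
  ring

/-- The apex opposite to `c` across the edge `a b` of a touching triangle. -/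
theorem strip {a b c p : E3} (ha : ⟪a, a⟫ = 1) (hb : ⟪b, b⟫ = 1) (hc : ⟪c, c⟫ = 1)
    (hab : ⟪a, b⟫ = 1 / 2) (hac : ⟪a, c⟫ = 1 / 2) (hbc : ⟪b, c⟫ = 1 / 2) (hp : ⟪p, p⟫ = 1)
    (hpa : ⟪p, a⟫ = 1 / 2) (hpb : ⟪p, b⟫ = 1 / 2) (hpc : ⟪p, c⟫ ≤ 1 / 2) :
    p = (2 / 3 : ℝ) • (a + b) - c := by
  have h := ip_tri ha hb hc hab hac hbc p p
  rw [hp, hpa, hpb] at h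
  have h3 : (3 * ⟪p, c⟫ + 1) * (⟪p, c⟫ - 1) = 0 := by linarith
  have h4 : ⟪p, c⟫ = -1 / 3 := by
    rcases mul_eq_zero.1 h3 with h | h <;> linarith
  have hba := hab; have hca := hac; have hcb := hbc
  rw [real_inner_comm] at hba hca hcb
  apply eq_of_ip (det3_tri ha hb hc hab hac hbc) <;>
    simp only [inner_add_left, inner_sub_left, real_inner_smul_left, ha, hb, hc, hab, hac, hbc, hba, hca, hcb,
      hpa, hpb, h4] <;> norm_num

/-- The diagonals of a touching quadrilateral. -/
theorem rhombus {a b c d : E3} (ha : ⟪a, a⟫ = 1) (hb : ⟪b, b⟫ = 1) (hc : ⟪c, c⟫ = 1)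
    (hd : ⟪d, d⟫ = 1) (hac : ⟪a, c⟫ ≤ 1 / 2) (hbd : ⟪b, d⟫ ≤ 1 / 2) (hab : ⟪a, b⟫ = 1 / 2)
    (hcb : ⟪c, b⟫ = 1 / 2) (had : ⟪a, d⟫ = 1 / 2) (hcd : ⟪c, d⟫ = 1 / 2) :
    (1 + ⟪a, c⟫) * (1 + ⟪b, d⟫) = 1 := by
  have hw : b - d ≠ 0 := by
    intro h
    rw [sub_eq_zero] at h
    rw [h, hd] at hbd
    norm_num at hbd
  have h := det3_sq a c (b + d)
  rw [det3_eq_zero hw] at h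
  · simp only [inner_add_left, inner_add_right, real_inner_comm b d, ha, hb, hc, hd, hab,
      had, hcb, hcd] at h
    have : (1 - ⟪a, c⟫) * ((1 + ⟪a, c⟫) * (1 + ⟪b, d⟫) - 1) = 0 := by linear_combination (-1 / 2) * h
    rcases mul_eq_zero.1 this with h | h <;> linarith
  · rw [inner_sub_left, real_inner_comm, hab, real_inner_comm, had]; norm_num
  · rw [inner_sub_left, real_inner_comm, hcb, real_inner_comm, hcd]; norm_num
  · rw [inner_sub_left, inner_add_right, inner_add_right, hb, hd, real_inner_comm]; ring

/-! ### Contact graphs of separated unit vectors -/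

/-- A set `P` of unit vectors with pairwise distances at least `1`, and a symmetric relation `A`
on it that only relates vectors at distance exactly `1`. -/
structure Cfg (P : Set E3) (A : E3 → E3 → Prop) : Prop where
  unit : ∀ a ∈ P, ⟪a, a⟫ = 1
  sep : ∀ a ∈ P, ∀ b ∈ P, a ≠ b → ⟪a, b⟫ ≤ 1 / 2
  tch : ∀ a b, A a b → a ∈ P ∧ b ∈ P ∧ ⟪a, b⟫ = 1 / 2
  symm : ∀ a b, A a b → A b a

namespace Cfg

variable {P : Set E3} {A : E3 → E3 → Prop} {a b c d e p x y : E3}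

theorem t (h : Cfg P A) (hab : A a b) : ⟪a, b⟫ = 1 / 2 := (h.tch _ _ hab).2.2

theorem t' (h : Cfg P A) (hab : A a b) : ⟪b, a⟫ = 1 / 2 := h.t (h.symm _ _ hab)

theorem u (h : Cfg P A) (hab : A a b) : ⟪a, a⟫ = 1 := h.unit _ (h.tch _ _ hab).1

theorem u' (h : Cfg P A) (hab : A a b) : ⟪b, b⟫ = 1 := h.unit _ (h.tch _ _ hab).2.1

theorem s (h : Cfg P A) (ha : A a x) (hb : A b y) (hab : a ≠ b) : ⟪a, b⟫ ≤ 1 / 2 :=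
  h.sep _ (h.tch _ _ ha).1 _ (h.tch _ _ hb).1 hab

theorem strip (h : Cfg P A) (hab : A a b) (hac : A a c) (hbc : A b c) (hpa : A p a)
    (hpb : A p b) (hpc : p ≠ c) : p = (2 / 3 : ℝ) • (a + b) - c :=
  _root_.strip (h.u hab) (h.u hbc) (h.u' hac) (h.t hab) (h.t hac) (h.t hbc) (h.u hpa) (h.t hpa)
    (h.t hpb) (h.s hpa (h.symm _ _ hac) hpc)

theorem irrefl (h : Cfg P A) (a : E3) : ¬ A a a := fun ha => by
  have h1 := h.t ha
  have h2 := h.u ha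
  linarith

theorem ip_ge {a b : E3} (ha : ⟪a, a⟫ = 1) (hb : ⟪b, b⟫ = 1) : -1 ≤ ⟪a, b⟫ := by
  have := real_inner_self_nonneg (x := a + b)
  rw [inner_add_left, inner_add_right, inner_add_right, real_inner_comm a b] at this
  linarith

theorem rhombus (h : Cfg P A) (hac : a ≠ c) (hbd : b ≠ d) (hab : A a b) (hcb : A c b)
    (had : A a d) (hcd : A c d) : (1 + ⟪a, c⟫) * (1 + ⟪b, d⟫) = 1 ∧ -1 / 3 ≤ ⟪a, c⟫ := by
  have h1 := _root_.rhombus (h.u hab) (h.u' hab) (h.u hcb) (h.u' had) (h.s hab hcb hac)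
    (h.s (h.symm _ _ hab) (h.symm _ _ had) hbd) (h.t hab) (h.t hcb) (h.t had) (h.t hcd)
  refine ⟨h1, ?_⟩
  have h2 := ip_ge (h.u hab) (h.u hcb)
  have h3 := h.s (h.symm _ _ hab) (h.symm _ _ had) hbd
  nlinarith

theorem det3_rhombus (h : Cfg P A) (hac : a ≠ c) (hab : A a b) (hcb : A c b)
    (hs : -1 / 3 ≤ ⟪a, c⟫) : det3 a c b ≠ 0 := by
  intro h0
  have := det3_sq a c b
  rw [h0, h.u hab, h.u hcb, h.u' hab, h.t hab, h.t hcb] at this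
  have h3 := h.s hab hcb hac
  nlinarith

/-- Two vectors have at most two common neighbours. -/
theorem k23 (h : Cfg P A) (hac : a ≠ c) (hbd : b ≠ d) (hbe : b ≠ e) (hde : d ≠ e) (hab : A a b)
    (had : A a d) (hae : A a e) (hcb : A c b) (hcd : A c d) (hce : A c e) : False := by
  obtain ⟨h1, h2⟩ := h.rhombus hac hbd hab hcb had hcd
  obtain ⟨h3, -⟩ := h.rhombus hac hbe hab hcb hae hce
  have h4 : ⟪b, d⟫ = ⟪b, e⟫ := by
    have h5 : (1 + ⟪a, c⟫) * (⟪b, d⟫ - ⟪b, e⟫) = 0 := by linarith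
    rcases mul_eq_zero.1 h5 with h5 | h5 <;> linarith
  apply hde
  apply eq_of_ip (h.det3_rhombus hac hab hcb h2)
  · rw [h.t' had, h.t' hae]
  · rw [h.t' hcd, h.t' hce]
  · rw [real_inner_comm, h4, real_inner_comm]

/-- Four vectors cannot touch pairwise. -/
theorem k4 (h : Cfg P A) (hab : A a b) (hac : A a c) (hbc : A b c) (hpa : A p a)
    (hpb : A p b) (hpc : A p c) : False := by
  have hne : p ≠ c := by rintro rfl; exact h.irrefl _ hpc
  have h1 := h.strip hab hac hbc hpa hpb hne
  have h2 := h.t hpc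
  rw [h1] at h2
  simp only [inner_add_left, inner_sub_left, real_inner_smul_left, h.t hac, h.t hbc, h.u' hac] at h2
  norm_num at h2

/-- A strip of eight triangles whose ends come too close. -/
theorem s9 (h : Cfg P A) {v0 v1 v2 v3 v4 v5 v6 v7 v8 : E3} (h25 : A v2 v5) (h24 : A v2 v4)
    (h45 : A v4 v5) (h23 : A v2 v3) (h34 : A v3 v4) (h21 : A v2 v1) (h31 : A v3 v1)
    (h20 : A v2 v0) (h10 : A v1 v0) (h06 : A v0 v6) (h16 : A v1 v6) (h07 : A v0 v7)
    (h67 : A v6 v7) (h08 : A v0 v8) (h78 : A v7 v8) (n03 : v3 ≠ v0) (n14 : v4 ≠ v1)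
    (n35 : v5 ≠ v3) (n26 : v6 ≠ v2) (n17 : v7 ≠ v1) (n68 : v8 ≠ v6) (n58 : v5 ≠ v8) : False := by
  have S := h.symm
  have e3 := h.strip h21 h20 h10 (S _ _ h23) h31 n03
  have e4 := h.strip h23 h21 h31 (S _ _ h24) (S _ _ h34) n14
  have e5 := h.strip h24 h23 (S _ _ h34) (S _ _ h25) (S _ _ h45) n35
  have e6 := h.strip (S _ _ h10) (S _ _ h20) (S _ _ h21) (S _ _ h06) (S _ _ h16) n26
  have e7 := h.strip h06 (S _ _ h10) (S _ _ h16) (S _ _ h07) (S _ _ h67) n17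
  have e8 := h.strip h07 h06 (S _ _ h67) (S _ _ h08) (S _ _ h78) n68
  have h58 := h.s (S _ _ h25) (S _ _ h08) n58
  rw [e5, e4, e3, e8, e7, e6] at h58
  simp only [inner_add_left, inner_sub_left, real_inner_smul_left, inner_add_right,
    inner_sub_right, real_inner_smul_right, h.t h21, h.t' h21, h.t h20, h.t' h20, h.t h10,
    h.t' h10, h.u h20, h.u h10, h.u' h10] at h58
  norm_num at h58

/-- A zigzag strip of nine triangles whose ends come too close. -/
theorem z11 (h : Cfg P A) {v0 v1 v2 v3 v4 v5 v6 v7 v8 v9 v10 : E3} (h01 : A v0 v1)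
    (h02 : A v0 v2) (h12 : A v1 v2) (h13 : A v1 v3) (h23 : A v2 v3) (h24 : A v2 v4)
    (h34 : A v3 v4) (h35 : A v3 v5) (h45 : A v4 v5) (h46 : A v4 v6) (h56 : A v5 v6)
    (h57 : A v5 v7) (h67 : A v6 v7) (h68 : A v6 v8) (h78 : A v7 v8) (h79 : A v7 v9)
    (h89 : A v8 v9) (h8x : A v8 v10) (h9x : A v9 v10) (n03 : v0 ≠ v3) (n14 : v1 ≠ v4)
    (n25 : v2 ≠ v5) (n36 : v3 ≠ v6) (n47 : v7 ≠ v4) (n58 : v8 ≠ v5) (n69 : v9 ≠ v6)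
    (n7x : v10 ≠ v7) (n0x : v0 ≠ v10) : False := by
  have S := h.symm
  have e7 := h.strip h56 (S _ _ h45) (S _ _ h46) (S _ _ h57) (S _ _ h67) n47
  have e8 := h.strip h67 (S _ _ h56) (S _ _ h57) (S _ _ h68) (S _ _ h78) n58
  have e9 := h.strip h78 (S _ _ h67) (S _ _ h68) (S _ _ h79) (S _ _ h89) n69
  have ex := h.strip h89 (S _ _ h78) (S _ _ h79) (S _ _ h8x) (S _ _ h9x) n7x
  have e3 := h.strip h45 h46 h56 h34 h35 n36
  have e2 := h.strip h34 h35 h45 h23 h24 n25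
  have e1 := h.strip h23 h24 h34 h12 h13 n14
  have e0 := h.strip h12 h13 h23 h01 h02 n03
  have h0x := h.s h01 (S _ _ h8x) n0x
  rw [e0, e1, e2, e3, ex, e9, e8, e7] at h0x
  simp only [inner_add_left, inner_sub_left, real_inner_smul_left, inner_add_right,
    inner_sub_right, real_inner_smul_right, h.t h45, h.t' h45, h.t h46, h.t' h46, h.t h56,
    h.t' h56, h.u h45, h.u h56, h.u' h46] at h0x
  norm_num at h0x

end Cfg

namespace Cfg

variable {P : Set E3} {A : E3 → E3 → Prop} {a b c d e p x y : E3}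

/-- Two vectors with a common neighbour make an angle of at most 120 degrees. -/
theorem ip_ge_half (h : Cfg P A) (hac : A a c) (hbc : A b c) : -1 / 2 ≤ ⟪a, b⟫ := by
  have := real_inner_self_nonneg (x := a + b - c)
  simp only [inner_add_left, inner_sub_left, inner_add_right, inner_sub_right, h.u hac, h.u hbc,
    h.u' hac, h.t hac, h.t hbc, h.t' hac, h.t' hbc, real_inner_comm a b] at this
  linarith

/-- One half of the argument against the pattern `p8`: the vector `v6` is much closer to `v0`
than to `v1`. -/
theorem p8_aux (h : Cfg P A) {v0 v1 v2 v3 v4 v5 v6 v7 : E3} (h01 : A v0 v1) (h02 : A v0 v2)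
    (h12 : A v1 v2) (h03 : A v0 v3) (h13 : A v1 v3) (h04 : A v0 v4) (h24 : A v2 v4)
    (h15 : A v1 v5) (h35 : A v3 v5) (h46 : A v4 v6) (h57 : A v5 v7) (h67 : A v6 v7)
    (n23 : v3 ≠ v2) (n14 : v4 ≠ v1) (n05 : v5 ≠ v0) (n06 : v6 ≠ v0) (n26 : v6 ≠ v2) :
    1 / 2 < ⟪v6, v0⟫ - ⟪v6, v1⟫ := by
  have S := h.symm
  have e3 := h.strip h01 h02 h12 (S _ _ h03) (S _ _ h13) n23
  have e4 := h.strip h02 h01 (S _ _ h12) (S _ _ h04) (S _ _ h24) n14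
  have e5 := h.strip h13 (S _ _ h01) (S _ _ h03) (S _ _ h15) (S _ _ h35) n05
  have k0 := h.s h67 h01 n06
  have k2 := h.s h67 h24 n26
  have k4 := h.t' h46
  have k5 := h.ip_ge_half h67 h57
  rw [e4] at k4
  rw [e5, e3] at k5
  have k6 := ip_tri (h.u h01) (h.u h12) (h.u' h02) (h.t h01) (h.t h02) (h.t h12) v6 v6
  rw [h.u h67] at k6
  simp only [inner_add_right, inner_sub_right, real_inner_smul_right] at k4 k5
  by_contra hc
  generalize ⟪v6, v0⟫ = x at *
  generalize ⟪v6, v2⟫ = z at *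
  have e1 : ⟪v6, v1⟫ = (2 / 3) * (x + z) - 1 / 2 := by linarith
  rw [e1] at *
  nlinarith

/-- A strip of four triangles whose end vertices `v4`, `v5` are not joined by a path `v4 v6 v7 v5`. -/
theorem p8 (h : Cfg P A) {v0 v1 v2 v3 v4 v5 v6 v7 : E3} (h01 : A v0 v1) (h02 : A v0 v2)
    (h12 : A v1 v2) (h03 : A v0 v3) (h13 : A v1 v3) (h04 : A v0 v4) (h24 : A v2 v4)
    (h15 : A v1 v5) (h35 : A v3 v5) (h46 : A v4 v6) (h57 : A v5 v7) (h67 : A v6 v7)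
    (n23 : v3 ≠ v2) (n14 : v4 ≠ v1) (n05 : v5 ≠ v0) (n06 : v6 ≠ v0) (n26 : v6 ≠ v2)
    (n17 : v7 ≠ v1) (n37 : v7 ≠ v3) : False := by
  have S := h.symm
  have k1 := h.p8_aux h01 h02 h12 h03 h13 h04 h24 h15 h35 h46 h57 h67 n23 n14 n05 n06 n26
  have k2 := h.p8_aux (S _ _ h01) h13 h03 h12 h02 h15 h35 h04 h24 h57 h46 (S _ _ h67) n23.symm n05
    n14 n17 n37
  have k3 := real_inner_self_nonneg (x := (v6 - v7) - (v0 - v1))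
  simp only [inner_sub_left, inner_sub_right, h.u h67, h.u' h67, h.u h01, h.u' h01, h.t h67,
    h.t' h67, h.t h01, h.t' h01, real_inner_comm v6 v0, real_inner_comm v6 v1,
    real_inner_comm v7 v0, real_inner_comm v7 v1] at k3
  linarith

end Cfg

namespace Cfg

variable {P : Set E3} {A : E3 → E3 → Prop} {a b c d e p x y : E3}

theorem tip (h : Cfg P A) (h01 : A a x) (h02 : A a y) (h12 : A x y) (h13 : A x b) (h23 : A y b)
    (n : a ≠ b) : a + b = (2 / 3 : ℝ) • (x + y) ∧ ⟪a, b⟫ = -1 / 3 := by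
  have e0 := h.strip h12 h13 h23 h01 h02 n
  refine ⟨by rw [e0]; abel, ?_⟩
  rw [e0]
  simp only [inner_add_left, inner_sub_left, real_inner_smul_left, h.t h13, h.t h23, h.u' h13]
  norm_num

/-- The difference of the two middle vertices of a double triangle with tips `a`, `b`, when a
third vector makes the same angle with `a` and `b` as these do with each other. -/
theorem r9_aux (h : Cfg P A) (h01 : A a x) (h02 : A a y) (h12 : A x y) (h13 : A x b)
    (h23 : A y b) (hc : ⟪c, c⟫ = 1) (hab : ⟪a, b⟫ = -1 / 3) (hac : ⟪a, c⟫ = -1 / 3)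
    (hbc : ⟪b, c⟫ = -1 / 3) : ∃ α : ℝ, α ^ 2 = 1 / 6 ∧
      (1 / 2 : ℝ) • (x - y) = (3 / 4 * α) • (a + b + (2 : ℝ) • c) := by
  have ha := h.u h01
  have hb := h.u' h13
  have hD : det3 a b c ≠ 0 := by
    intro h0
    have := det3_sq a b c
    rw [h0, ha, hb, hc, hab, hac, hbc] at this
    norm_num at this
  have hba := hab; have hca := hac; have hcb := hbc
  rw [real_inner_comm] at hba hca hcb
  set α := ⟪(1 / 2 : ℝ) • (x - y), c⟫ with hα
  have e : (1 / 2 : ℝ) • (x - y) = (3 / 4 * α) • (a + b + (2 : ℝ) • c) := by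
    apply eq_of_ip hD
    · simp only [inner_add_left, inner_sub_left, real_inner_smul_left, h.t' h01, h.t' h02, ha, hba,
        hca]; ring
    · simp only [inner_add_left, inner_sub_left, real_inner_smul_left, h.t h13, h.t h23, hb, hab,
        hcb]; ring
    · rw [← hα]
      simp only [inner_add_left, real_inner_smul_left, hac, hbc, hc]; ring
  refine ⟨α, ?_, e⟩
  have h1 : ⟪(1 / 2 : ℝ) • (x - y), (1 / 2 : ℝ) • (x - y)⟫ = 1 / 4 := by
    simp only [inner_sub_left, inner_sub_right, real_inner_smul_left, real_inner_smul_right,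
      h.u h12, h.u' h12, h.t h12, h.t' h12]; norm_num
  rw [e] at h1
  simp only [inner_add_left, inner_add_right, real_inner_smul_left, real_inner_smul_right,
      ha, hb, hc, hab, hac, hbc, hba, hca, hcb] at h1
  linarith

/-- Three double triangles cannot be joined tip to tip in a ring. -/
theorem r9 (h : Cfg P A) {v0 v1 v2 v3 v4 v5 v6 v7 v8 : E3} (h01 : A v0 v1) (h02 : A v0 v2)
    (h12 : A v1 v2) (h13 : A v1 v3) (h23 : A v2 v3) (h04 : A v0 v4) (h05 : A v0 v5)
    (h45 : A v4 v5) (h46 : A v4 v6) (h56 : A v5 v6) (h37 : A v3 v7) (h38 : A v3 v8)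
    (h78 : A v7 v8) (h76 : A v7 v6) (h86 : A v8 v6) (n03 : v0 ≠ v3) (n06 : v0 ≠ v6)
    (n36 : v3 ≠ v6) (n14 : v1 ≠ v4) (n15 : v1 ≠ v5) (n24 : v2 ≠ v4) (n25 : v2 ≠ v5) : False := by
  obtain ⟨s1, hab⟩ := h.tip h01 h02 h12 h13 h23 n03
  obtain ⟨s2, hac⟩ := h.tip h04 h05 h45 h46 h56 n06
  obtain ⟨-, hbc⟩ := h.tip h37 h38 h78 h76 h86 n36
  have hba := hab; have hca := hac; have hcb := hbc
  rw [real_inner_comm] at hba hca hcb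
  have ha := h.u h01
  have hb := h.u h37
  have hc := h.u' h46
  obtain ⟨α, hα, d1⟩ := h.r9_aux h01 h02 h12 h13 h23 hc hab hac hbc
  obtain ⟨β, hβ, d2⟩ := h.r9_aux h04 h05 h45 h46 h56 hb hac hab hcb
  have e1 : v1 = (3 / 4 : ℝ) • (v0 + v3) + (1 / 2 : ℝ) • (v1 - v2) := by rw [s1]; module
  have e2 : v2 = (3 / 4 : ℝ) • (v0 + v3) - (1 / 2 : ℝ) • (v1 - v2) := by rw [s1]; module
  have e4 : v4 = (3 / 4 : ℝ) • (v0 + v6) + (1 / 2 : ℝ) • (v4 - v5) := by rw [s2]; module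
  have e5 : v5 = (3 / 4 : ℝ) • (v0 + v6) - (1 / 2 : ℝ) • (v4 - v5) := by rw [s2]; module
  rw [d1] at e1 e2
  rw [d2] at e4 e5
  have S := h.symm
  have k14 := h.s h12 h45 n14
  have k15 := h.s h12 h56 n15
  have k24 := h.s h23 h45 n24
  have k25 := h.s h23 h56 n25
  rw [e1, e4] at k14
  rw [e1, e5] at k15
  rw [e2, e4] at k24
  rw [e2, e5] at k25
  simp only [inner_add_left, inner_add_right, inner_sub_left, inner_sub_right,
    real_inner_smul_left, real_inner_smul_right, ha, hb, hc, hab, hac, hbc, hba, hca, hcb]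
    at k14 k15 k24 k25
  have m14 : 3 / 4 * (α + β) + 3 / 4 * (α * β) ≤ 1 / 2 := by linarith
  have m15 : 3 / 4 * (α - β) - 3 / 4 * (α * β) ≤ 1 / 2 := by linarith
  have m24 : 3 / 4 * (β - α) - 3 / 4 * (α * β) ≤ 1 / 2 := by linarith
  have m25 : -(3 / 4 * (α + β)) + 3 / 4 * (α * β) ≤ 1 / 2 := by linarith
  clear k14 k15 k24 k25 e1 e2 e4 e5 d1 d2
  have : (α - β) * (α + β) = 0 := by linear_combination hα - hβ
  rcases mul_eq_zero.1 this with h0 | h0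
  · obtain rfl : β = α := by linarith
    have : (1 / 3 - β) * (1 / 3 + β) < 0 := by linarith
    nlinarith
  · obtain rfl : β = -α := by linarith
    have : (1 / 3 - α) * (1 / 3 + α) < 0 := by linarith
    nlinarith

end Cfg

namespace Cfg

variable {P : Set E3} {A : E3 → E3 → Prop} {a b c d e p q r g x y : E3}

/-- Four points of a touching path `p q r` with a triangle on its first edge. -/
theorem apex (h : Cfg P A) (hpq : A p q) (hqr : A q r) (hgp : A g p) (hgq : A g q) :
    (3 * ⟪g, r⟫ - ⟪p, r⟫ - 1 / 2) ^ 2 = 4 * (1 - ⟪p, r⟫) * (1 + 2 * ⟪p, r⟫) := by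
  have k := ip_tri (h.u hgp) (h.u' hgp) (h.u' hgq) (h.t hgp) (h.t hgq) (h.t hpq) r r
  rw [h.u' hqr, h.t' hqr, real_inner_comm, real_inner_comm p r] at k
  linear_combination (-6) * k

/-- The diagonals of a touching quadrilateral bisect each other. -/
theorem diag (h : Cfg P A) (hac : a ≠ c) (hbd : b ≠ d) (hab : A a b) (hcb : A c b)
    (had : A a d) (hcd : A c d) : b + d = (1 + ⟪b, d⟫) • (a + c) := by
  obtain ⟨h1, h2⟩ := h.rhombus hac hbd hab hcb had hcd
  apply eq_of_ip (h.det3_rhombus hac hab hcb h2)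
  · simp only [inner_add_left, real_inner_smul_left, h.u hab, h.t' hab, h.t' had,
      real_inner_comm a c]; linarith
  · simp only [inner_add_left, real_inner_smul_left, h.u hcb, h.t' hcb, h.t' hcd]; linarith
  · simp only [inner_add_left, real_inner_smul_left, h.u' hab, h.t hab, h.t hcb,
      real_inner_comm b d]; linarith

/-- In the pattern `t7` with the diagonal `v1 v4` of the quadrilateral not obtuse, the vectors
`v0` and `v5` are mirror images in the axis of the quadrilateral and nearly opposite. -/
theorem t7_aux (h : Cfg P A) {v0 v1 v2 v3 v4 v5 v6 : E3} (h01 : A v0 v1) (h02 : A v0 v2)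
    (h12 : A v1 v2) (h13 : A v1 v3) (h24 : A v2 v4) (h34 : A v3 v4) (h35 : A v3 v5)
    (h45 : A v4 v5) (h06 : A v0 v6) (h56 : A v5 v6) (n14 : v1 ≠ v4) (n23 : v2 ≠ v3)
    (n04 : v0 ≠ v4) (n15 : v5 ≠ v1) (hs : 0 ≤ ⟪v1, v4⟫) : False := by
  have S := h.symm
  obtain ⟨-, hr2⟩ := h.rhombus n14 n23 h12 (S _ _ h24) h13 (S _ _ h34)
  have hr1 := (h.rhombus n14 n23 h12 (S _ _ h24) h13 (S _ _ h34)).1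
  have hD := h.diag n14 n23 h12 (S _ _ h24) h13 (S _ _ h34)
  have hm : ⟪v1, v4⟫ ≤ 1 / 2 := h.s h12 h45 n14
  have q0 := h.apex h12 h24 h01 h02
  have q5 := h.apex (S _ _ h34) (S _ _ h13) (S _ _ h45) (S _ _ h35)
  rw [real_inner_comm v1 v4] at q5
  have m0 := h.s h06 h45 n04
  have m5 := h.s h56 h12 n15
  have hx : ⟪v5, v1⟫ = ⟪v0, v4⟫ := by
    have : (3 * ⟪v5, v1⟫ - 3 * ⟪v0, v4⟫) * (3 * ⟪v5, v1⟫ + 3 * ⟪v0, v4⟫ - 2 * ⟪v1, v4⟫ - 1) = 0 := by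
      linear_combination q5 - q0
    rcases mul_eq_zero.1 this with h0 | h0
    · linarith
    · nlinarith
  have hD5 : ⟪v5, v2⟫ + ⟪v5, v3⟫ = (1 + ⟪v2, v3⟫) * (⟪v5, v1⟫ + ⟪v5, v4⟫) := by
    rw [← inner_add_right, hD, real_inner_smul_right, inner_add_right]
  rw [h.t' h35, h.t' h45, hx] at hD5
  have e : v0 + v5 = ((1 / 2 + ⟪v0, v4⟫) * (1 + ⟪v2, v3⟫)) • (v1 + v4) := by
    apply eq_of_ip (h.det3_rhombus n14 h12 (S _ _ h24) hr2)
    · simp only [inner_add_left, real_inner_smul_left, h.u h12, h.t h01, hx,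
        real_inner_comm v1 v4]
      linear_combination -(1 / 2 + ⟪v0, v4⟫) * hr1
    · simp only [inner_add_left, real_inner_smul_left, h.u h45, h.t' h45]
      linear_combination -(1 / 2 + ⟪v0, v4⟫) * hr1
    · simp only [inner_add_left, real_inner_smul_left, h.t h02, h.t h12, h.t' h24]
      linear_combination hD5
  have h05 := h.ip_ge_half h06 h56
  have hn : ⟪v0 + v5, v0 + v5⟫ = 2 + 2 * ⟪v0, v5⟫ := by
    simp only [inner_add_left, inner_add_right, h.u h01, h.u h56, real_inner_comm v0 v5]; ring
  rw [e] at hn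
  simp only [inner_add_left, inner_add_right, real_inner_smul_left, real_inner_smul_right,
    h.u h12, h.u h45, real_inner_comm v1 v4] at hn
  generalize ⟪v0, v4⟫ = x at *
  generalize ⟪v1, v4⟫ = s at *
  generalize ⟪v2, v3⟫ = s' at *
  have hs'1 : s' ≤ 0 := by nlinarith
  have hs'0 : 0 ≤ 1 + s' := by nlinarith
  have hn' : (1 / 2 + x) ^ 2 * (1 + s') = 1 + ⟪v0, v5⟫ := by
    linear_combination (1 / 2) * hn - (1 / 2 + x) ^ 2 * (1 + s') * hr1
  have b1 : 3 * x - s - 1 / 2 ≤ -2 := by nlinarith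
  have b2 : -5 / 2 ≤ 3 * x - s - 1 / 2 := by nlinarith
  have b3 : (1 / 2 + x) ^ 2 ≤ 1 / 4 := by nlinarith
  nlinarith

/-- A quadrilateral `v1 v2 v4 v3` with triangles on two opposite sides, whose apexes `v0`, `v5`
cannot have a common neighbour. -/
theorem t7 (h : Cfg P A) {v0 v1 v2 v3 v4 v5 v6 : E3} (h01 : A v0 v1) (h02 : A v0 v2)
    (h12 : A v1 v2) (h13 : A v1 v3) (h24 : A v2 v4) (h34 : A v3 v4) (h35 : A v3 v5)
    (h45 : A v4 v5) (h06 : A v0 v6) (h56 : A v5 v6) (n14 : v1 ≠ v4) (n23 : v2 ≠ v3)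
    (n04 : v0 ≠ v4) (n15 : v5 ≠ v1) (n03 : v0 ≠ v3) (n25 : v5 ≠ v2) : False := by
  have S := h.symm
  obtain ⟨hr1, hr2⟩ := h.rhombus n14 n23 h12 (S _ _ h24) h13 (S _ _ h34)
  rcases le_total 0 ⟪v1, v4⟫ with hs | hs
  · exact h.t7_aux h01 h02 h12 h13 h24 h34 h35 h45 h06 h56 n14 n23 n04 n15 hs
  · exact h.t7_aux h02 h01 (S _ _ h12) h24 h13 (S _ _ h34) h45 h35 h06 h56 n23 n14 n03 n25
      (by nlinarith)

end Cfg

/-- Inner products in a basis `a`, `c`, `w` with `a`, `c` unit and `w` orthogonal to both. -/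
theorem ip_rh {a c w : E3} (ha : ⟪a, a⟫ = 1) (hc : ⟪c, c⟫ = 1) (hw : ⟪w, a⟫ = 0)
    (hw' : ⟪w, c⟫ = 0) (hs : ⟪a, c⟫ ^ 2 < 1) (hW : 0 < ⟪w, w⟫) (p q : E3) :
    (1 - ⟪a, c⟫ ^ 2) * ⟪w, w⟫ * ⟪p, q⟫ = ⟪w, w⟫ * (⟪p, a⟫ * ⟪q, a⟫ + ⟪p, c⟫ * ⟪q, c⟫
      - ⟪a, c⟫ * (⟪p, a⟫ * ⟪q, c⟫ + ⟪p, c⟫ * ⟪q, a⟫)) + (1 - ⟪a, c⟫ ^ 2) * (⟪p, w⟫ * ⟪q, w⟫) := by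
  have hD : det3 a c w ≠ 0 := by
    intro h0
    have := det3_sq a c w
    rw [h0, ha, hc, real_inner_comm w a, real_inner_comm w c, hw, hw'] at this
    nlinarith
  have e : ((1 - ⟪a, c⟫ ^ 2) * ⟪w, w⟫) • p = (⟪w, w⟫ * (⟪p, a⟫ - ⟪a, c⟫ * ⟪p, c⟫)) • a
      + (⟪w, w⟫ * (⟪p, c⟫ - ⟪a, c⟫ * ⟪p, a⟫)) • c + ((1 - ⟪a, c⟫ ^ 2) * ⟪p, w⟫) • w := by
    apply eq_of_ip hD <;> simp only [inner_add_left, real_inner_smul_left, ha, hc, hw, hw',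
      real_inner_comm a c, real_inner_comm w a, real_inner_comm w c] <;> ring
  rw [← real_inner_smul_left, e]
  simp only [inner_add_left, real_inner_smul_left, real_inner_comm q a, real_inner_comm q c,
    real_inner_comm q w]
  ring

namespace Cfg

variable {P : Set E3} {A : E3 → E3 → Prop} {a b c d e f : E3}

/-- A neighbour `e` of the corner `a` of a quadrilateral `a b c d` is at least as far from the
opposite corner `c` as a vector touching both `a` and `b`. -/
theorem theta_aux (h : Cfg P A) (hac : a ≠ c) (hbd : b ≠ d) (hab : A a b) (hcb : A c b)
    (had : A a d) (hcd : A c d) (hae : A a e) (nec : e ≠ c) (neb : e ≠ b) (ned : e ≠ d) :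
    3 * ⟪e, c⟫ - ⟪a, c⟫ - 1 / 2 ≤ 0 ∧
      4 * (1 - ⟪a, c⟫) * (1 + 2 * ⟪a, c⟫) ≤ (3 * ⟪e, c⟫ - ⟪a, c⟫ - 1 / 2) ^ 2 := by
  have S := h.symm
  obtain ⟨hr1, hr2⟩ := h.rhombus hac hbd hab hcb had hcd
  have hD := h.diag hac hbd hab hcb had hcd
  have hs := h.s hab hcb hac
  have h1 : ⟪b - d, a⟫ = 0 := by rw [inner_sub_left, h.t' hab, h.t' had, sub_self]
  have h2 : ⟪b - d, c⟫ = 0 := by rw [inner_sub_left, h.t' hcb, h.t' hcd, sub_self]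
  have hW : ⟪b - d, b - d⟫ = 2 * (1 - ⟪b, d⟫) := by
    simp only [inner_sub_left, inner_sub_right, h.u' hab, h.u' had, real_inner_comm b d]; ring
  have hs' := h.s (S _ _ hab) (S _ _ had) hbd
  have k := ip_rh (h.u hab) (h.u hcb) h1 h2 (by nlinarith) (by rw [hW]; linarith) e e
  rw [h.u' hae, h.t' hae, hW] at k
  have hDe : ⟪e, b⟫ + ⟪e, d⟫ = (1 + ⟪b, d⟫) * (⟪e, a⟫ + ⟪e, c⟫) := by
    rw [← inner_add_right, hD, real_inner_smul_right, inner_add_right]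
  rw [h.t' hae] at hDe
  have m1 := h.s (S _ _ hae) (S _ _ hab) neb
  have m2 := h.s (S _ _ hae) (S _ _ had) ned
  have m3 := h.s (S _ _ hae) hcb nec
  rw [inner_sub_right] at k
  clear hD hW h1 h2
  generalize ⟪e, b⟫ = u at *
  generalize ⟪e, d⟫ = v at *
  generalize ⟪e, c⟫ = q at *
  generalize ⟪a, c⟫ = s at *
  generalize ⟪b, d⟫ = s' at *
  have hpos : 0 < 1 + s := by linarith
  -- `(1 + s) (1 + s') = 1` turns everything into polynomials in `s` and `q`
  have e1 : (1 + s) * (u + v) = 1 / 2 + q := by linear_combination (1 + s) * hDe + (1 / 2 + q) * hr1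
  have e2 : (1 + s) * (1 - s') = 1 + 2 * s := by linear_combination -hr1
  have q1 : q ≤ 1 / 2 + s := by nlinarith
  have e3 : 2 * (1 + 2 * s) * (3 / 4 - s ^ 2 - q ^ 2 + q * s)
      = (1 - s) * ((1 + s) * (u - v)) ^ 2 := by
    linear_combination (1 + s) * k - 2 * (3 / 4 - s ^ 2 - q ^ 2 + q * s) * e2
  have e4 : ((1 + s) * (u - v)) ^ 2 ≤ (1 / 2 + s - q) ^ 2 := by
    apply sq_le_sq'
    · nlinarith
    · nlinarith
  have e5 : 2 * (1 + 2 * s) * (3 / 4 - s ^ 2 - q ^ 2 + q * s) ≤ (1 - s) * (1 / 2 + s - q) ^ 2 := by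
    rw [e3]; exact mul_le_mul_of_nonneg_left e4 (by linarith)
  have e6 : 4 * (1 - s) * (1 + 2 * s) ≤ (3 * q - s - 1 / 2) ^ 2 := by
    have : 0 ≤ (1 + s) * ((3 * q - s - 1 / 2) ^ 2 - 4 * (1 - s) * (1 + 2 * s)) := by linarith
    linarith [nonneg_of_mul_nonneg_right this hpos]
  refine ⟨?_, e6⟩
  by_contra hc
  push Not at hc
  have g1 : 3 * q - s - 1 / 2 ≤ 1 - s := by linarith
  have g2 : 3 * q - s - 1 / 2 ≤ 1 + 2 * s := by linarith
  have g3 : (3 * q - s - 1 / 2) ^ 2 ≤ (1 - s) * (1 + 2 * s) := by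
    rw [sq]; exact mul_le_mul g1 g2 hc.le (by linarith)
  nlinarith

/-- Opposite corners `a`, `c` of a quadrilateral are not joined by a path `a e f c` outside it. -/
theorem theta (h : Cfg P A) (hac : a ≠ c) (hbd : b ≠ d) (hab : A a b) (hcb : A c b)
    (had : A a d) (hcd : A c d) (hae : A a e) (hcf : A c f) (hef : A e f) (nec : e ≠ c)
    (nfa : f ≠ a) (neb : e ≠ b) (ned : e ≠ d) (nfb : f ≠ b) (nfd : f ≠ d) : False := by
  have S := h.symm
  obtain ⟨hr1, hr2⟩ := h.rhombus hac hbd hab hcb had hcd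
  have hs := h.s hab hcb hac
  have h1 : ⟪b - d, a⟫ = 0 := by rw [inner_sub_left, h.t' hab, h.t' had, sub_self]
  have h2 : ⟪b - d, c⟫ = 0 := by rw [inner_sub_left, h.t' hcb, h.t' hcd, sub_self]
  have hW : ⟪b - d, b - d⟫ = 2 * (1 - ⟪b, d⟫) := by
    simp only [inner_sub_left, inner_sub_right, h.u' hab, h.u' had, real_inner_comm b d]; ring
  have hs' := h.s (S _ _ hab) (S _ _ had) hbd
  have hW0 : 0 < ⟪b - d, b - d⟫ := by rw [hW]; linarith
  have hs2 : ⟪a, c⟫ ^ 2 < 1 := by nlinarith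
  have kee := ip_rh (h.u hab) (h.u hcb) h1 h2 hs2 hW0 e e
  have kff := ip_rh (h.u hab) (h.u hcb) h1 h2 hs2 hW0 f f
  have kef := ip_rh (h.u hab) (h.u hcb) h1 h2 hs2 hW0 e f
  rw [h.u' hae, h.t' hae] at kee
  rw [h.u' hcf, h.t' hcf] at kff
  rw [h.t hef, h.t' hae, h.t' hcf] at kef
  obtain ⟨q1, q2⟩ := h.theta_aux hac hbd hab hcb had hcd hae nec neb ned
  obtain ⟨r1, r2⟩ := h.theta_aux hac.symm hbd hcb hab hcd had hcf nfa nfb nfd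
  rw [real_inner_comm a c] at r1 r2
  clear h1 h2 hW
  generalize ⟪b - d, b - d⟫ = W at *
  generalize ⟪e, c⟫ = q at *
  generalize ⟪f, a⟫ = r at *
  generalize ⟪e, b - d⟫ = u at *
  generalize ⟪f, b - d⟫ = v at *
  generalize ⟪a, c⟫ = s at *
  have hK : 4 / 9 ≤ (1 - s) * (1 + 2 * s) := by nlinarith
  obtain ⟨κ, hκ0, hκ⟩ : ∃ κ : ℝ, 0 ≤ κ ∧ κ ^ 2 = (1 - s) * (1 + 2 * s) :=
    ⟨_, Real.sqrt_nonneg _, Real.sq_sqrt (by linarith)⟩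
  have hκ1 : 2 / 3 ≤ κ := by nlinarith
  have q3 : 3 * q - s - 1 / 2 ≤ -(2 * κ) := by nlinarith
  have r3 : 3 * r - s - 1 / 2 ≤ -(2 * κ) := by nlinarith
  have huv : 0 ≤ (1 - s ^ 2) * (u - v) ^ 2 := mul_nonneg (by linarith) (sq_nonneg _)
  have k1 : 0 ≤ W * ((1 + s) * ((q + r) / 2 - ((q + r) / 2) ^ 2 + 3 / 4 - s - (1 - s) / 2)
      - (1 - s) * ((q - r) / 2) ^ 2) := by
    linarith
  have k2 := nonneg_of_mul_nonneg_right k1 hW0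
  have k3 : 0 ≤ (1 + s) * ((q + r) / 2 - ((q + r) / 2) ^ 2 + 3 / 4 - s - (1 - s) / 2) := by
    nlinarith [mul_nonneg (by linarith : (0 : ℝ) ≤ 1 - s) (sq_nonneg ((q - r) / 2))]
  have k4 := nonneg_of_mul_nonneg_right k3 (by linarith : 0 < 1 + s)
  have z1 : (1 - s + 2 * κ) / 3 ≤ 1 / 2 - (q + r) / 2 := by linarith
  have z2 : ((1 - s + 2 * κ) / 3) ^ 2 ≤ (1 / 2 - (q + r) / 2) ^ 2 :=
    pow_le_pow_left₀ (by linarith) z1 2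
  have z3 : ((1 - s + 2 * κ) / 3) ^ 2 = (1 - s) * (5 + 7 * s + 4 * κ) / 9 := by
    linear_combination (4 / 9) * hκ
  have z4 : 9 / 2 * (1 - s) < (1 - s) * (5 + 7 * s + 4 * κ) := by
    rw [mul_comm]; exact mul_lt_mul_of_pos_left (by linarith) (by linarith)
  linarith

end Cfg

namespace Cfg

variable {P : Set E3} {A : E3 → E3 → Prop}

/-- Contact graphs of separated configurations contain none of the forbidden patterns. -/
theorem free (h : Cfg P A) : Free A := by
  refine ⟨h.symm, h.irrefl, fun a c b d e => h.k23, fun a c b d e f => h.theta, ?_, ?_⟩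
  · intro p hp v
    simp only [patR, List.mem_cons, List.not_mem_nil, or_false] at hp
    rcases hp with rfl | rfl | rfl | rfl | rfl | rfl | rfl | rfl
    · rintro ⟨w1, n1, a1, w2, n2, a2, w3, n3, a3, -⟩
      exact h.k4
        (a1 0 (by simp) _ rfl) (a2 1 (by simp) _ rfl) (a2 0 (by simp) _ rfl)
        (h.symm _ _ (a3 2 (by simp) _ rfl)) (h.symm _ _ (a3 1 (by simp) _ rfl))
        (h.symm _ _ (a3 0 (by simp) _ rfl))
    · rintro ⟨w1, n1, a1, w2, n2, a2, w3, n3, a3, w4, n4, a4, w5, n5, a5, w6, n6, a6, w7, n7, a7, -⟩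
      exact h.p8
        (a1 0 (by simp) _ rfl) (a2 1 (by simp) _ rfl) (a2 0 (by simp) _ rfl)
        (a3 2 (by simp) _ rfl) (a3 1 (by simp) _ rfl) (a4 3 (by simp) _ rfl)
        (a4 1 (by simp) _ rfl) (a5 3 (by simp) _ rfl) (a5 1 (by simp) _ rfl)
        (a6 1 (by simp) _ rfl) (a7 1 (by simp) _ rfl) (a7 0 (by simp) _ rfl)
        (fun e => n3 (by simp [e])) (fun e => n4 (by simp [e])) (fun e => n5 (by simp [e]))
        (fun e => n6 (by simp [e])) (fun e => n6 (by simp [e])) (fun e => n7 (by simp [e]))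
        (fun e => n7 (by simp [e]))
    · rintro ⟨w1, n1, a1, w2, n2, a2, w3, n3, a3, w4, n4, a4, w5, n5, a5, w6, n6, a6, w7, n7, a7, -⟩
      exact h.p8
        (a2 0 (by simp) _ rfl) (h.symm _ _ (a1 0 (by simp) _ rfl))
        (h.symm _ _ (a2 1 (by simp) _ rfl)) (a3 1 (by simp) _ rfl) (a3 0 (by simp) _ rfl)
        (a4 2 (by simp) _ rfl) (a4 3 (by simp) _ rfl) (a5 2 (by simp) _ rfl)
        (a5 1 (by simp) _ rfl) (a6 1 (by simp) _ rfl) (a7 1 (by simp) _ rfl)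
        (a7 0 (by simp) _ rfl) (fun e => n3 (by simp [e])) (fun e => n4 (by simp [e]))
        (fun e => n5 (by simp [e])) (fun e => n6 (by simp [e])) (fun e => n6 (by simp [e]))
        (fun e => n7 (by simp [e])) (fun e => n7 (by simp [e]))
    · rintro ⟨w1, n1, a1, w2, n2, a2, w3, n3, a3, w4, n4, a4, w5, n5, a5, w6, n6, a6, w7, n7, a7, -⟩
      exact h.p8
        (a3 1 (by simp) _ rfl) (a2 0 (by simp) _ rfl) (h.symm _ _ (a3 0 (by simp) _ rfl))
        (a4 2 (by simp) _ rfl) (a4 0 (by simp) _ rfl) (h.symm _ _ (a1 0 (by simp) _ rfl))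
        (h.symm _ _ (a2 1 (by simp) _ rfl)) (a5 1 (by simp) _ rfl) (a5 0 (by simp) _ rfl)
        (a6 5 (by simp) _ rfl) (a7 1 (by simp) _ rfl) (a7 0 (by simp) _ rfl)
        (fun e => n4 (by simp [e])) (fun e => n3 (by simp [← e])) (fun e => n5 (by simp [e]))
        (fun e => n6 (by simp [e])) (fun e => n6 (by simp [e])) (fun e => n7 (by simp [e]))
        (fun e => n7 (by simp [e]))
    · rintro ⟨w1, n1, a1, w2, n2, a2, w3, n3, a3, w4, n4, a4, w5, n5, a5, w6, n6, a6, w7, n7, a7, -⟩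
      exact h.p8
        (a4 1 (by simp) _ rfl) (a3 0 (by simp) _ rfl) (h.symm _ _ (a4 0 (by simp) _ rfl))
        (a5 2 (by simp) _ rfl) (a5 0 (by simp) _ rfl) (h.symm _ _ (a2 0 (by simp) _ rfl))
        (h.symm _ _ (a3 1 (by simp) _ rfl)) (a6 1 (by simp) _ rfl) (a6 0 (by simp) _ rfl)
        (h.symm _ _ (a1 0 (by simp) _ rfl)) (a7 0 (by simp) _ rfl) (a7 6 (by simp) _ rfl)
        (fun e => n5 (by simp [e])) (fun e => n4 (by simp [← e])) (fun e => n6 (by simp [e]))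
        (fun e => n2 (by simp [← e])) (fun e => n3 (by simp [← e])) (fun e => n7 (by simp [e]))
        (fun e => n7 (by simp [e]))
    · rintro ⟨w1, n1, a1, w2, n2, a2, w3, n3, a3, w4, n4, a4, w5, n5, a5, w6, n6, a6, -⟩
      exact h.t7
        (a1 0 (by simp) _ rfl) (a2 1 (by simp) _ rfl) (a2 0 (by simp) _ rfl)
        (a3 1 (by simp) _ rfl) (a4 1 (by simp) _ rfl) (a4 0 (by simp) _ rfl)
        (a5 1 (by simp) _ rfl) (a5 0 (by simp) _ rfl) (a6 5 (by simp) _ rfl)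
        (a6 0 (by simp) _ rfl) (fun e => n4 (by simp [← e])) (fun e => n3 (by simp [← e]))
        (fun e => n4 (by simp [← e])) (fun e => n5 (by simp [e])) (fun e => n3 (by simp [← e]))
        (fun e => n5 (by simp [e]))
    · rintro ⟨w1, n1, a1, w2, n2, a2, w3, n3, a3, w4, n4, a4, w5, n5, a5, w6, n6, a6, -⟩
      exact h.t7
        (h.symm _ _ (a1 0 (by simp) _ rfl)) (a2 0 (by simp) _ rfl) (a2 1 (by simp) _ rfl)
        (a3 2 (by simp) _ rfl) (a4 1 (by simp) _ rfl) (a4 0 (by simp) _ rfl)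
        (a5 1 (by simp) _ rfl) (a5 0 (by simp) _ rfl) (a6 4 (by simp) _ rfl)
        (a6 0 (by simp) _ rfl) (fun e => n4 (by simp [← e])) (fun e => n3 (by simp [← e]))
        (fun e => n4 (by simp [← e])) (fun e => n5 (by simp [e])) (fun e => n3 (by simp [← e]))
        (fun e => n5 (by simp [e]))
    · rintro ⟨w1, n1, a1, w2, n2, a2, w3, n3, a3, w4, n4, a4, w5, n5, a5, w6, n6, a6, -⟩
      exact h.t7
        (a2 0 (by simp) _ rfl) (a3 1 (by simp) _ rfl) (a3 0 (by simp) _ rfl)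
        (a4 1 (by simp) _ rfl) (a5 1 (by simp) _ rfl) (a5 0 (by simp) _ rfl)
        (a6 1 (by simp) _ rfl) (a6 0 (by simp) _ rfl) (h.symm _ _ (a1 0 (by simp) _ rfl))
        (h.symm _ _ (a6 5 (by simp) _ rfl)) (fun e => n5 (by simp [← e]))
        (fun e => n4 (by simp [← e])) (fun e => n5 (by simp [← e])) (fun e => n6 (by simp [e]))
        (fun e => n4 (by simp [← e])) (fun e => n6 (by simp [e]))
  · intro p hp
    simp only [patU, List.mem_cons, List.not_mem_nil, or_false] at hp
    rcases hp with rfl | rfl | rfl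
    · rintro ⟨w0, n0, a0, w1, n1, a1, w2, n2, a2, w3, n3, a3, w4, n4, a4, w5, n5, a5, w6, n6, a6, w7,
        n7, a7, w8, n8, a8, -⟩
      exact h.s9
        (a5 4 (by simp) _ rfl) (a4 3 (by simp) _ rfl) (a5 0 (by simp) _ rfl)
        (a3 2 (by simp) _ rfl) (a4 0 (by simp) _ rfl) (a2 1 (by simp) _ rfl)
        (h.symm _ _ (a3 0 (by simp) _ rfl)) (a1 0 (by simp) _ rfl)
        (h.symm _ _ (a2 0 (by simp) _ rfl)) (a6 4 (by simp) _ rfl) (a6 3 (by simp) _ rfl)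
        (a7 5 (by simp) _ rfl) (a7 0 (by simp) _ rfl) (a8 6 (by simp) _ rfl)
        (a8 0 (by simp) _ rfl) (fun e => n3 (by simp [e])) (fun e => n4 (by simp [e]))
        (fun e => n5 (by simp [e])) (fun e => n6 (by simp [e])) (fun e => n7 (by simp [e]))
        (fun e => n8 (by simp [e])) (fun e => n8 (by simp [← e]))
    · rintro ⟨w0, n0, a0, w1, n1, a1, w2, n2, a2, w3, n3, a3, w4, n4, a4, w5, n5, a5, w6, n6, a6, w7,
        n7, a7, w8, n8, a8, -⟩
      exact h.r9
        (a1 0 (by simp) _ rfl) (a2 1 (by simp) _ rfl) (a2 0 (by simp) _ rfl)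
        (a3 1 (by simp) _ rfl) (a3 0 (by simp) _ rfl) (a4 3 (by simp) _ rfl)
        (a5 4 (by simp) _ rfl) (a5 0 (by simp) _ rfl) (a6 1 (by simp) _ rfl)
        (a6 0 (by simp) _ rfl) (a7 3 (by simp) _ rfl) (a8 4 (by simp) _ rfl)
        (a8 0 (by simp) _ rfl) (h.symm _ _ (a7 0 (by simp) _ rfl))
        (h.symm _ _ (a8 1 (by simp) _ rfl)) (fun e => n3 (by simp [← e]))
        (fun e => n6 (by simp [← e])) (fun e => n6 (by simp [← e])) (fun e => n4 (by simp [← e]))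
        (fun e => n5 (by simp [← e])) (fun e => n4 (by simp [← e])) (fun e => n5 (by simp [← e]))
    · rintro ⟨w0, n0, a0, w1, n1, a1, w2, n2, a2, w3, n3, a3, w4, n4, a4, w5, n5, a5, w6, n6, a6, w7,
        n7, a7, w8, n8, a8, w9, n9, a9, w10, n10, a10, -⟩
      exact h.z11
        (a1 0 (by simp) _ rfl) (a2 1 (by simp) _ rfl) (a2 0 (by simp) _ rfl)
        (a3 1 (by simp) _ rfl) (a3 0 (by simp) _ rfl) (a4 1 (by simp) _ rfl)
        (a4 0 (by simp) _ rfl) (a5 1 (by simp) _ rfl) (a5 0 (by simp) _ rfl)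
        (a6 1 (by simp) _ rfl) (a6 0 (by simp) _ rfl) (a7 1 (by simp) _ rfl)
        (a7 0 (by simp) _ rfl) (a8 1 (by simp) _ rfl) (a8 0 (by simp) _ rfl)
        (a9 1 (by simp) _ rfl) (a9 0 (by simp) _ rfl) (a10 1 (by simp) _ rfl)
        (a10 0 (by simp) _ rfl) (fun e => n3 (by simp [← e])) (fun e => n4 (by simp [← e]))
        (fun e => n5 (by simp [← e])) (fun e => n6 (by simp [← e])) (fun e => n7 (by simp [e]))
        (fun e => n8 (by simp [e])) (fun e => n9 (by simp [e])) (fun e => n10 (by simp [e]))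
        (fun e => n10 (by simp [← e]))

end Cfg

/-! ### Rigidity of the two graphs -/

/-- The numerical core of the rigidity argument: two quadrilaterals with corner inner products
`p`, `q` that fit around a vertex together with two triangles. -/
theorem corner_le {p q : ℝ} (hp : -1 / 3 ≤ p) (hp' : p ≤ 1 / 2) (hq : -1 / 3 ≤ q)
    (hq' : q ≤ 1 / 2) (h : 8 * (p + q) ^ 2 - 8 * (p + q) + (p - q) ^ 2 = 0)
    (hσ : p + q ≤ 2 / 3) : (1 + p) * (1 + q) ≤ 1 ∧ ((1 + p) * (1 + q) = 1 → p = 0 ∧ q = 0) := by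
  obtain ⟨σ, rfl⟩ : ∃ σ, q = σ - p := ⟨p + q, by ring⟩
  have hs : p + (σ - p) = σ := by ring
  rw [hs] at h hσ
  have h0 : 0 ≤ σ := by nlinarith
  have h1 : σ ≤ 1 / 3 := by nlinarith
  have e : (1 + p) * (1 + (σ - p)) - 1 = σ * (9 * σ - 4) / 4 := by linear_combination (-1 / 4) * h
  refine ⟨by nlinarith, fun h2 => ?_⟩
  have : σ * (9 * σ - 4) = 0 := by linarith
  rcases mul_eq_zero.1 this with h3 | h3
  · subst h3
    have : p ^ 2 = 0 := by linarith
    have : p = 0 := by simpa using this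
    simp [this]
  · linarith

theorem log_corner {p q : ℝ} (hp : -1 / 3 ≤ p) (hq : -1 / 3 ≤ q) (h : (1 + p) * (1 + q) ≤ 1 ∧
    ((1 + p) * (1 + q) = 1 → p = 0 ∧ q = 0)) :
    Real.log (1 + p) + Real.log (1 + q) ≤ 0 ∧
      (Real.log (1 + p) + Real.log (1 + q) = 0 → p = 0 ∧ q = 0) := by
  have h1 : 0 < 1 + p := by linarith
  have h2 : 0 < 1 + q := by linarith
  rw [← Real.log_mul h1.ne' h2.ne']
  refine ⟨Real.log_nonpos (by positivity) h.1, fun h3 => h.2 ?_⟩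
  exact Real.eq_one_of_pos_of_log_eq_zero (by positivity) h3

namespace Cfg

variable {P : Set E3} {A : E3 → E3 → Prop} {v w x u1 u2 u3 u4 : E3}

theorem add_eq (h : Cfg P A) (h1 : A v u1) (h3 : A v u3) (hz : ⟪u1, u3⟫ = -1 / 2) :
    u1 + u3 = v := by
  rw [← sub_eq_zero, ← inner_self_eq_zero (𝕜 := ℝ)]
  simp only [inner_add_left, inner_sub_left, inner_add_right, inner_sub_right, h.u h1, h.u' h1,
    h.u' h3, h.t h1, h.t h3, h.t' h1, h.t' h3, real_inner_comm u1 u3, hz]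
  norm_num

/-- A vertex `v` around which triangles `u1 u2`, `u3 u4` and quadrilaterals alternate. -/
theorem vert1 (h : Cfg P A) (h1 : A v u1) (h2 : A v u2) (h3 : A v u3) (h4 : A v u4)
    (h12 : A u1 u2) (h34 : A u3 u4) (h2w : A u2 w) (h3w : A u3 w) (h4x : A u4 x) (h1x : A u1 x)
    (nvw : v ≠ w) (nvx : v ≠ x) (n13 : u1 ≠ u3) (n24 : u4 ≠ u2) (n23 : u2 ≠ u3) (n41 : u4 ≠ u1)
    (n1w : u1 ≠ w) (n4w : u4 ≠ w) (n3x : u3 ≠ x) (n1v : u1 ≠ v) (n3v : u3 ≠ v) (n4v : u4 ≠ v) :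
    Real.log (1 + ⟪u2, u3⟫) + Real.log (1 + ⟪u4, u1⟫) ≤ 0 ∧
      (Real.log (1 + ⟪u2, u3⟫) + Real.log (1 + ⟪u4, u1⟫) = 0 → u1 + u3 = v ∧ u4 + u2 = v) := by
  have S := h.symm
  have b1 := (h.rhombus n23 nvw (S _ _ h2) (S _ _ h3) h2w h3w).2
  have b2 := (h.rhombus n41 nvx (S _ _ h4) (S _ _ h1) h4x h1x).2
  have c1 := h.s h2w h3w n23
  have c2 := h.s h4x h1x n41
  have α1 := (h.theta_aux n23 nvw (S _ _ h2) (S _ _ h3) h2w h3w (S _ _ h12) n13 n1v n1w).1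
  have β1 := (h.theta_aux n23.symm nvw (S _ _ h3) (S _ _ h2) h3w h2w h34 n24 n4v n4w).1
  have γ1 := (h.theta_aux n41 nvx (S _ _ h4) (S _ _ h1) h4x h1x (S _ _ h34) n13.symm n3v n3x).1
  have α2 := h.apex (S _ _ h2) h3 h12 (S _ _ h1)
  have β2 := h.apex (S _ _ h3) h2 (S _ _ h34) (S _ _ h4)
  have γ2 := h.apex (S _ _ h4) h1 h34 (S _ _ h3)
  have z1 := h.s h1x h3w n13
  have k34 := ip_tri (h.u h1) (h.u h12) (h.u' h12) (h.t h1) (h.t h2) (h.t h12) u3 u4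
  rw [h.t h34, h.t' h3, h.t' h4, real_inner_comm u2 u3] at k34
  rw [real_inner_comm u2 u3] at β1 β2
  rw [real_inner_comm u1 u3] at γ1 γ2 k34
  have a13 : ⟪u1, u3⟫ = -1 / 2 → u1 + u3 = v := h.add_eq h1 h3
  have a42 : ⟪u4, u2⟫ = -1 / 2 → u4 + u2 = v := h.add_eq h4 h2
  have hZ : ⟪u4, u2⟫ = ⟪u1, u3⟫ := by
    have : (3 * ⟪u4, u2⟫ - ⟪u2, u3⟫ - 1 / 2) ^ 2 = (3 * ⟪u1, u3⟫ - ⟪u2, u3⟫ - 1 / 2) ^ 2 := by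
      rw [α2, β2]
    rcases sq_eq_sq_iff_eq_or_eq_neg.1 this with h0 | h0 <;> linarith
  rw [hZ] at k34 a42
  clear β1 β2 hZ
  generalize ⟪u1, u3⟫ = z at *
  generalize ⟪u2, u3⟫ = p at *
  generalize ⟪u4, u1⟫ = q at *
  have key : (1 + p) * (1 + q) ≤ 1 ∧ ((1 + p) * (1 + q) = 1 → p = 0 ∧ q = 0) := by
    have : (p - q) * (6 * z - (9 * (p + q) - 3)) = 0 := by linear_combination γ2 - α2
    rcases mul_eq_zero.1 this with h0 | h0
    · obtain rfl : q = p := by linarith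
      have f1 : (2 * (z - q) - 1) * (2 * (z - q) + 1) = 0 := by
        linear_combination (1 / 3) * α2 + 2 * k34
      have f2 : z = q - 1 / 2 := by
        rcases mul_eq_zero.1 f1 with h0 | h0 <;> linarith
      rw [f2] at α2
      have f3 : q * (q - 1) = 0 := by linarith
      have f4 : q = 0 := by
        rcases mul_eq_zero.1 f3 with h0 | h0 <;> linarith
      simp [f4]
    · have f1 : z = (3 * (p + q) - 1) / 2 := by linarith
      apply corner_le b1 c1 b2 c2
      · rw [f1] at α2
        linear_combination (4 / 9) * α2
      · linarith
  have key2 := log_corner b1 b2 key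
  refine ⟨key2.1, fun h0 => ?_⟩
  obtain ⟨rfl, rfl⟩ := key2.2 h0
  have : z = -1 / 2 := by
    have : (3 * z - 5 / 2) * (3 * z + 3 / 2) = 0 := by linarith
    rcases mul_eq_zero.1 this with h0 | h0 <;> linarith
  exact ⟨a13 this, a42 this⟩

/-- A vertex `v` with two consecutive triangles `u1 u2`, `u2 u3` followed by two
quadrilaterals. -/
theorem vert2 (h : Cfg P A) (h1 : A v u1) (h2 : A v u2) (h3 : A v u3) (h4 : A v u4)
    (h12 : A u1 u2) (h23 : A u2 u3) (h3w : A u3 w) (h4w : A u4 w) (h4x : A u4 x) (h1x : A u1 x)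
    (nvw : v ≠ w) (nvx : v ≠ x) (n13 : u3 ≠ u1) (n24 : u4 ≠ u2) (n34 : u3 ≠ u4) (n41 : u4 ≠ u1) :
    Real.log (1 + ⟪u3, u4⟫) + Real.log (1 + ⟪u4, u1⟫) ≤ 0 := by
  have S := h.symm
  have b1 := (h.rhombus n34 nvw (S _ _ h3) (S _ _ h4) h3w h4w).2
  have b2 := (h.rhombus n41 nvx (S _ _ h4) (S _ _ h1) h4x h1x).2
  have c1 := h.s h3w h4w n34
  have c2 := h.s h4x h1x n41
  have e3 := h.strip h2 h1 (S _ _ h12) (S _ _ h3) (S _ _ h23) n13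
  have z1 := h.s h4x h23 n24
  have k4 := ip_tri (h.u h1) (h.u h12) (h.u' h12) (h.t h1) (h.t h2) (h.t h12) u4 u4
  rw [h.u' h4, h.t' h4] at k4
  have k3 : ⟪u3, u4⟫ = 2 / 3 * (1 / 2 + ⟪u4, u2⟫) - ⟪u4, u1⟫ := by
    rw [real_inner_comm, e3]
    simp only [inner_add_right, inner_sub_right, real_inner_smul_right, h.t' h4]
  refine (log_corner b1 b2 (corner_le b1 c1 b2 c2 ?_ ?_)).1
  · rw [k3]
    linear_combination (-8 / 3) * k4
  · rw [k3]; linarith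

end Cfg

namespace Cfg

variable {P : Set E3} {A : E3 → E3 → Prop} {a b c d : E3}

/-- The corner terms of a quadrilateral have total logarithm zero. -/
theorem log_quad (h : Cfg P A) (hac : a ≠ c) (hbd : b ≠ d) (hab : A a b) (hcb : A c b)
    (had : A a d) (hcd : A c d) : Real.log (1 + ⟪a, c⟫) + Real.log (1 + ⟪b, d⟫) = 0 := by
  obtain ⟨h1, h2⟩ := h.rhombus hac hbd hab hcb had hcd
  have h3 : 0 < 1 + ⟪a, c⟫ := by linarith
  have h4 : 1 + ⟪b, d⟫ ≠ 0 := by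
    intro h0
    rw [h0, mul_zero] at h1
    exact zero_ne_one h1
  rw [← Real.log_mul h3.ne' h4, h1, Real.log_one]

/-- A configuration with the contact graph of the cuboctahedron is determined by a triangle.
The logarithms of the corner terms add up to `0` over each quadrilateral, and to at most `0` around
each vertex, so that all the inequalities around vertices are equalities. -/
theorem points_co (h : Cfg P A) {f : ℕ → E3} (hc : Codes A f 12 codeCo) :
    f 2 = f 0 - f 4 ∧ f 3 = f 1 - f 4 ∧ f 5 = f 0 - f 1 ∧ f 6 = f 1 - f 0 ∧ f 7 = f 4 - f 1 ∧
    f 8 = f 4 - f 0 ∧ f 9 = -f 4 ∧ f 10 = -f 1 ∧ f 11 = -f 0 := by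
  have E : ∀ i j, (row codeCo i).testBit j = true → A (f i) (f j) := fun i j hij =>
    ((hc.adj i j).1 hij).2.2
  have D : ∀ i j, i < 12 ∧ j < 12 ∧ i ≠ j → f i ≠ f j := fun i j hij e =>
    hij.2.2 (hc.inj i hij.1 j hij.2.1 e)
  have C : ∀ i j, Real.log (1 + ⟪f i, f j⟫) = Real.log (1 + ⟪f j, f i⟫) := fun i j => by
    rw [real_inner_comm]
  have q0 := h.log_quad
    (D 0 3 (by decide)) (D 1 2 (by decide)) (E 0 1 (by decide)) (E 3 1 (by decide))
    (E 0 2 (by decide)) (E 3 2 (by decide))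
  have q1 := h.log_quad
    (D 0 7 (by decide)) (D 4 5 (by decide)) (E 0 4 (by decide)) (E 7 4 (by decide))
    (E 0 5 (by decide)) (E 7 5 (by decide))
  have q2 := h.log_quad
    (D 1 8 (by decide)) (D 4 6 (by decide)) (E 1 4 (by decide)) (E 8 4 (by decide))
    (E 1 6 (by decide)) (E 8 6 (by decide))
  have q3 := h.log_quad
    (D 2 10 (by decide)) (D 5 9 (by decide)) (E 2 5 (by decide)) (E 10 5 (by decide))
    (E 2 9 (by decide)) (E 10 9 (by decide))
  have q4 := h.log_quad
    (D 3 11 (by decide)) (D 6 9 (by decide)) (E 3 6 (by decide)) (E 11 6 (by decide))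
    (E 3 9 (by decide)) (E 11 9 (by decide))
  have q5 := h.log_quad
    (D 7 11 (by decide)) (D 8 10 (by decide)) (E 7 8 (by decide)) (E 11 8 (by decide))
    (E 7 10 (by decide)) (E 11 10 (by decide))
  have v0 := h.vert1
    (E 0 1 (by decide)) (E 0 4 (by decide)) (E 0 5 (by decide)) (E 0 2 (by decide))
    (E 1 4 (by decide)) (E 5 2 (by decide)) (E 4 7 (by decide)) (E 5 7 (by decide))
    (E 2 3 (by decide)) (E 1 3 (by decide)) (D 0 7 (by decide)) (D 0 3 (by decide))
    (D 1 5 (by decide)) (D 2 4 (by decide)) (D 4 5 (by decide)) (D 2 1 (by decide))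
    (D 1 7 (by decide)) (D 2 7 (by decide)) (D 5 3 (by decide)) (D 1 0 (by decide))
    (D 5 0 (by decide)) (D 2 0 (by decide))
  have v1 := h.vert1
    (E 1 0 (by decide)) (E 1 4 (by decide)) (E 1 6 (by decide)) (E 1 3 (by decide))
    (E 0 4 (by decide)) (E 6 3 (by decide)) (E 4 8 (by decide)) (E 6 8 (by decide))
    (E 3 2 (by decide)) (E 0 2 (by decide)) (D 1 8 (by decide)) (D 1 2 (by decide))
    (D 0 6 (by decide)) (D 3 4 (by decide)) (D 4 6 (by decide)) (D 3 0 (by decide))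
    (D 0 8 (by decide)) (D 3 8 (by decide)) (D 6 2 (by decide)) (D 0 1 (by decide))
    (D 6 1 (by decide)) (D 3 1 (by decide))
  have v2 := h.vert1
    (E 2 0 (by decide)) (E 2 5 (by decide)) (E 2 9 (by decide)) (E 2 3 (by decide))
    (E 0 5 (by decide)) (E 9 3 (by decide)) (E 5 10 (by decide)) (E 9 10 (by decide))
    (E 3 1 (by decide)) (E 0 1 (by decide)) (D 2 10 (by decide)) (D 2 1 (by decide))
    (D 0 9 (by decide)) (D 3 5 (by decide)) (D 5 9 (by decide)) (D 3 0 (by decide))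
    (D 0 10 (by decide)) (D 3 10 (by decide)) (D 9 1 (by decide)) (D 0 2 (by decide))
    (D 9 2 (by decide)) (D 3 2 (by decide))
  have v3 := h.vert1
    (E 3 1 (by decide)) (E 3 6 (by decide)) (E 3 9 (by decide)) (E 3 2 (by decide))
    (E 1 6 (by decide)) (E 9 2 (by decide)) (E 6 11 (by decide)) (E 9 11 (by decide))
    (E 2 0 (by decide)) (E 1 0 (by decide)) (D 3 11 (by decide)) (D 3 0 (by decide))
    (D 1 9 (by decide)) (D 2 6 (by decide)) (D 6 9 (by decide)) (D 2 1 (by decide))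
    (D 1 11 (by decide)) (D 2 11 (by decide)) (D 9 0 (by decide)) (D 1 3 (by decide))
    (D 9 3 (by decide)) (D 2 3 (by decide))
  have v4 := h.vert1
    (E 4 0 (by decide)) (E 4 1 (by decide)) (E 4 8 (by decide)) (E 4 7 (by decide))
    (E 0 1 (by decide)) (E 8 7 (by decide)) (E 1 6 (by decide)) (E 8 6 (by decide))
    (E 7 5 (by decide)) (E 0 5 (by decide)) (D 4 6 (by decide)) (D 4 5 (by decide))
    (D 0 8 (by decide)) (D 7 1 (by decide)) (D 1 8 (by decide)) (D 7 0 (by decide))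
    (D 0 6 (by decide)) (D 7 6 (by decide)) (D 8 5 (by decide)) (D 0 4 (by decide))
    (D 8 4 (by decide)) (D 7 4 (by decide))
  have v5 := h.vert1
    (E 5 0 (by decide)) (E 5 2 (by decide)) (E 5 10 (by decide)) (E 5 7 (by decide))
    (E 0 2 (by decide)) (E 10 7 (by decide)) (E 2 9 (by decide)) (E 10 9 (by decide))
    (E 7 4 (by decide)) (E 0 4 (by decide)) (D 5 9 (by decide)) (D 5 4 (by decide))
    (D 0 10 (by decide)) (D 7 2 (by decide)) (D 2 10 (by decide)) (D 7 0 (by decide))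
    (D 0 9 (by decide)) (D 7 9 (by decide)) (D 10 4 (by decide)) (D 0 5 (by decide))
    (D 10 5 (by decide)) (D 7 5 (by decide))
  have v6 := h.vert1
    (E 6 1 (by decide)) (E 6 3 (by decide)) (E 6 11 (by decide)) (E 6 8 (by decide))
    (E 1 3 (by decide)) (E 11 8 (by decide)) (E 3 9 (by decide)) (E 11 9 (by decide))
    (E 8 4 (by decide)) (E 1 4 (by decide)) (D 6 9 (by decide)) (D 6 4 (by decide))
    (D 1 11 (by decide)) (D 8 3 (by decide)) (D 3 11 (by decide)) (D 8 1 (by decide))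
    (D 1 9 (by decide)) (D 8 9 (by decide)) (D 11 4 (by decide)) (D 1 6 (by decide))
    (D 11 6 (by decide)) (D 8 6 (by decide))
  have v7 := h.vert1
    (E 7 4 (by decide)) (E 7 8 (by decide)) (E 7 10 (by decide)) (E 7 5 (by decide))
    (E 4 8 (by decide)) (E 10 5 (by decide)) (E 8 11 (by decide)) (E 10 11 (by decide))
    (E 5 0 (by decide)) (E 4 0 (by decide)) (D 7 11 (by decide)) (D 7 0 (by decide))
    (D 4 10 (by decide)) (D 5 8 (by decide)) (D 8 10 (by decide)) (D 5 4 (by decide))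
    (D 4 11 (by decide)) (D 5 11 (by decide)) (D 10 0 (by decide)) (D 4 7 (by decide))
    (D 10 7 (by decide)) (D 5 7 (by decide))
  have v8 := h.vert1
    (E 8 4 (by decide)) (E 8 7 (by decide)) (E 8 11 (by decide)) (E 8 6 (by decide))
    (E 4 7 (by decide)) (E 11 6 (by decide)) (E 7 10 (by decide)) (E 11 10 (by decide))
    (E 6 1 (by decide)) (E 4 1 (by decide)) (D 8 10 (by decide)) (D 8 1 (by decide))
    (D 4 11 (by decide)) (D 6 7 (by decide)) (D 7 11 (by decide)) (D 6 4 (by decide))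
    (D 4 10 (by decide)) (D 6 10 (by decide)) (D 11 1 (by decide)) (D 4 8 (by decide))
    (D 11 8 (by decide)) (D 6 8 (by decide))
  have v9 := h.vert1
    (E 9 2 (by decide)) (E 9 3 (by decide)) (E 9 11 (by decide)) (E 9 10 (by decide))
    (E 2 3 (by decide)) (E 11 10 (by decide)) (E 3 6 (by decide)) (E 11 6 (by decide))
    (E 10 5 (by decide)) (E 2 5 (by decide)) (D 9 6 (by decide)) (D 9 5 (by decide))
    (D 2 11 (by decide)) (D 10 3 (by decide)) (D 3 11 (by decide)) (D 10 2 (by decide))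
    (D 2 6 (by decide)) (D 10 6 (by decide)) (D 11 5 (by decide)) (D 2 9 (by decide))
    (D 11 9 (by decide)) (D 10 9 (by decide))
  have v10 := h.vert1
    (E 10 5 (by decide)) (E 10 7 (by decide)) (E 10 11 (by decide)) (E 10 9 (by decide))
    (E 5 7 (by decide)) (E 11 9 (by decide)) (E 7 8 (by decide)) (E 11 8 (by decide))
    (E 9 2 (by decide)) (E 5 2 (by decide)) (D 10 8 (by decide)) (D 10 2 (by decide))
    (D 5 11 (by decide)) (D 9 7 (by decide)) (D 7 11 (by decide)) (D 9 5 (by decide))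
    (D 5 8 (by decide)) (D 9 8 (by decide)) (D 11 2 (by decide)) (D 5 10 (by decide))
    (D 11 10 (by decide)) (D 9 10 (by decide))
  have v11 := h.vert1
    (E 11 6 (by decide)) (E 11 8 (by decide)) (E 11 10 (by decide)) (E 11 9 (by decide))
    (E 6 8 (by decide)) (E 10 9 (by decide)) (E 8 7 (by decide)) (E 10 7 (by decide))
    (E 9 3 (by decide)) (E 6 3 (by decide)) (D 11 7 (by decide)) (D 11 3 (by decide))
    (D 6 10 (by decide)) (D 9 8 (by decide)) (D 8 10 (by decide)) (D 9 6 (by decide))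
    (D 6 7 (by decide)) (D 9 7 (by decide)) (D 10 3 (by decide)) (D 6 11 (by decide))
    (D 10 11 (by decide)) (D 9 11 (by decide))
  simp only [C 2 1, C 3 0, C 5 4, C 6 4, C 7 0, C 8 1, C 9 5, C 9 6, C 10 2]
    at v0 v1 v2 v3 v4 v5 v6 v7 v8 v9 v10 v11
  obtain ⟨o0, p0⟩ := v0.2 (by linarith only [q0, q1, q2, q3, q4, q5, v0.1, v1.1, v2.1, v3.1, v4.1, v5.1, v6.1, v7.1, v8.1, v9.1, v10.1, v11.1])
  obtain ⟨o1, p1⟩ := v1.2 (by linarith only [q0, q1, q2, q3, q4, q5, v0.1, v1.1, v2.1, v3.1, v4.1, v5.1, v6.1, v7.1, v8.1, v9.1, v10.1, v11.1])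
  obtain ⟨o4, p4⟩ := v4.2 (by linarith only [q0, q1, q2, q3, q4, q5, v0.1, v1.1, v2.1, v3.1, v4.1, v5.1, v6.1, v7.1, v8.1, v9.1, v10.1, v11.1])
  obtain ⟨o2, p2⟩ := v2.2 (by linarith only [q0, q1, q2, q3, q4, q5, v0.1, v1.1, v2.1, v3.1, v4.1, v5.1, v6.1, v7.1, v8.1, v9.1, v10.1, v11.1])
  obtain ⟨o5, p5⟩ := v5.2 (by linarith only [q0, q1, q2, q3, q4, q5, v0.1, v1.1, v2.1, v3.1, v4.1, v5.1, v6.1, v7.1, v8.1, v9.1, v10.1, v11.1])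
  obtain ⟨o6, p6⟩ := v6.2 (by linarith only [q0, q1, q2, q3, q4, q5, v0.1, v1.1, v2.1, v3.1, v4.1, v5.1, v6.1, v7.1, v8.1, v9.1, v10.1, v11.1])
  have e2 : f 2 = f 0 - f 4 := eq_sub_of_add_eq p0
  have e3 : f 3 = f 1 - f 4 := eq_sub_of_add_eq p1
  have e5 : f 5 = f 0 - f 1 := eq_sub_of_add_eq' o0
  have e6 : f 6 = f 1 - f 0 := eq_sub_of_add_eq' o1
  have e7 : f 7 = f 4 - f 1 := eq_sub_of_add_eq p4
  have e8 : f 8 = f 4 - f 0 := eq_sub_of_add_eq' o4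
  have e9 : f 9 = -f 4 := by
    rw [eq_sub_of_add_eq' o2, e2]; abel
  have e10 : f 10 = -f 1 := by
    rw [eq_sub_of_add_eq' o5, e5]; abel
  have e11 : f 11 = -f 0 := by
    rw [eq_sub_of_add_eq' o6, e6]; abel
  exact ⟨e2, e3, e5, e6, e7, e8, e9, e10, e11⟩

/-- A configuration with the contact graph of the twisted cuboctahedron is determined by a
triangle. -/
theorem points_tco (h : Cfg P A) {f : ℕ → E3} (hc : Codes A f 12 codeTco) :
    f 2 = f 0 - f 4 ∧ f 3 = f 1 - f 4 ∧ f 5 = f 0 - f 1 ∧ f 6 = f 1 - f 0 ∧ f 7 = f 4 - f 1 ∧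
    f 8 = f 4 - f 0 ∧ f 9 = (2 / 3 : ℝ) • (f 2 + f 5) - f 0 ∧
    f 10 = (2 / 3 : ℝ) • (f 3 + f 6) - f 1 ∧ f 11 = (2 / 3 : ℝ) • (f 7 + f 8) - f 4 := by
  have E : ∀ i j, (row codeTco i).testBit j = true → A (f i) (f j) := fun i j hij =>
    ((hc.adj i j).1 hij).2.2
  have D : ∀ i j, i < 12 ∧ j < 12 ∧ i ≠ j → f i ≠ f j := fun i j hij e =>
    hij.2.2 (hc.inj i hij.1 j hij.2.1 e)
  have C : ∀ i j, Real.log (1 + ⟪f i, f j⟫) = Real.log (1 + ⟪f j, f i⟫) := fun i j => by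
    rw [real_inner_comm]
  have q0 := h.log_quad
    (D 0 3 (by decide)) (D 1 2 (by decide)) (E 0 1 (by decide)) (E 3 1 (by decide))
    (E 0 2 (by decide)) (E 3 2 (by decide))
  have q1 := h.log_quad
    (D 0 7 (by decide)) (D 4 5 (by decide)) (E 0 4 (by decide)) (E 7 4 (by decide))
    (E 0 5 (by decide)) (E 7 5 (by decide))
  have q2 := h.log_quad
    (D 1 8 (by decide)) (D 4 6 (by decide)) (E 1 4 (by decide)) (E 8 4 (by decide))
    (E 1 6 (by decide)) (E 8 6 (by decide))
  have q3 := h.log_quad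
    (D 2 10 (by decide)) (D 3 9 (by decide)) (E 2 3 (by decide)) (E 10 3 (by decide))
    (E 2 9 (by decide)) (E 10 9 (by decide))
  have q4 := h.log_quad
    (D 5 11 (by decide)) (D 7 9 (by decide)) (E 5 7 (by decide)) (E 11 7 (by decide))
    (E 5 9 (by decide)) (E 11 9 (by decide))
  have q5 := h.log_quad
    (D 6 11 (by decide)) (D 8 10 (by decide)) (E 6 8 (by decide)) (E 11 8 (by decide))
    (E 6 10 (by decide)) (E 11 10 (by decide))
  have v0 := h.vert1
    (E 0 1 (by decide)) (E 0 4 (by decide)) (E 0 5 (by decide)) (E 0 2 (by decide))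
    (E 1 4 (by decide)) (E 5 2 (by decide)) (E 4 7 (by decide)) (E 5 7 (by decide))
    (E 2 3 (by decide)) (E 1 3 (by decide)) (D 0 7 (by decide)) (D 0 3 (by decide))
    (D 1 5 (by decide)) (D 2 4 (by decide)) (D 4 5 (by decide)) (D 2 1 (by decide))
    (D 1 7 (by decide)) (D 2 7 (by decide)) (D 5 3 (by decide)) (D 1 0 (by decide))
    (D 5 0 (by decide)) (D 2 0 (by decide))
  have v1 := h.vert1
    (E 1 0 (by decide)) (E 1 4 (by decide)) (E 1 6 (by decide)) (E 1 3 (by decide))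
    (E 0 4 (by decide)) (E 6 3 (by decide)) (E 4 8 (by decide)) (E 6 8 (by decide))
    (E 3 2 (by decide)) (E 0 2 (by decide)) (D 1 8 (by decide)) (D 1 2 (by decide))
    (D 0 6 (by decide)) (D 3 4 (by decide)) (D 4 6 (by decide)) (D 3 0 (by decide))
    (D 0 8 (by decide)) (D 3 8 (by decide)) (D 6 2 (by decide)) (D 0 1 (by decide))
    (D 6 1 (by decide)) (D 3 1 (by decide))
  have v2 := h.vert2
    (E 2 0 (by decide)) (E 2 5 (by decide)) (E 2 9 (by decide)) (E 2 3 (by decide))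
    (E 0 5 (by decide)) (E 5 9 (by decide)) (E 9 10 (by decide)) (E 3 10 (by decide))
    (E 3 1 (by decide)) (E 0 1 (by decide)) (D 2 10 (by decide)) (D 2 1 (by decide))
    (D 9 0 (by decide)) (D 3 5 (by decide)) (D 9 3 (by decide)) (D 3 0 (by decide))
  have v3 := h.vert2
    (E 3 1 (by decide)) (E 3 6 (by decide)) (E 3 10 (by decide)) (E 3 2 (by decide))
    (E 1 6 (by decide)) (E 6 10 (by decide)) (E 10 9 (by decide)) (E 2 9 (by decide))
    (E 2 0 (by decide)) (E 1 0 (by decide)) (D 3 9 (by decide)) (D 3 0 (by decide))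
    (D 10 1 (by decide)) (D 2 6 (by decide)) (D 10 2 (by decide)) (D 2 1 (by decide))
  have v4 := h.vert1
    (E 4 0 (by decide)) (E 4 1 (by decide)) (E 4 8 (by decide)) (E 4 7 (by decide))
    (E 0 1 (by decide)) (E 8 7 (by decide)) (E 1 6 (by decide)) (E 8 6 (by decide))
    (E 7 5 (by decide)) (E 0 5 (by decide)) (D 4 6 (by decide)) (D 4 5 (by decide))
    (D 0 8 (by decide)) (D 7 1 (by decide)) (D 1 8 (by decide)) (D 7 0 (by decide))
    (D 0 6 (by decide)) (D 7 6 (by decide)) (D 8 5 (by decide)) (D 0 4 (by decide))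
    (D 8 4 (by decide)) (D 7 4 (by decide))
  have v5 := h.vert2
    (E 5 0 (by decide)) (E 5 2 (by decide)) (E 5 9 (by decide)) (E 5 7 (by decide))
    (E 0 2 (by decide)) (E 2 9 (by decide)) (E 9 11 (by decide)) (E 7 11 (by decide))
    (E 7 4 (by decide)) (E 0 4 (by decide)) (D 5 11 (by decide)) (D 5 4 (by decide))
    (D 9 0 (by decide)) (D 7 2 (by decide)) (D 9 7 (by decide)) (D 7 0 (by decide))
  have v6 := h.vert2
    (E 6 1 (by decide)) (E 6 3 (by decide)) (E 6 10 (by decide)) (E 6 8 (by decide))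
    (E 1 3 (by decide)) (E 3 10 (by decide)) (E 10 11 (by decide)) (E 8 11 (by decide))
    (E 8 4 (by decide)) (E 1 4 (by decide)) (D 6 11 (by decide)) (D 6 4 (by decide))
    (D 10 1 (by decide)) (D 8 3 (by decide)) (D 10 8 (by decide)) (D 8 1 (by decide))
  have v7 := h.vert2
    (E 7 4 (by decide)) (E 7 8 (by decide)) (E 7 11 (by decide)) (E 7 5 (by decide))
    (E 4 8 (by decide)) (E 8 11 (by decide)) (E 11 9 (by decide)) (E 5 9 (by decide))
    (E 5 0 (by decide)) (E 4 0 (by decide)) (D 7 9 (by decide)) (D 7 0 (by decide))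
    (D 11 4 (by decide)) (D 5 8 (by decide)) (D 11 5 (by decide)) (D 5 4 (by decide))
  have v8 := h.vert2
    (E 8 4 (by decide)) (E 8 7 (by decide)) (E 8 11 (by decide)) (E 8 6 (by decide))
    (E 4 7 (by decide)) (E 7 11 (by decide)) (E 11 10 (by decide)) (E 6 10 (by decide))
    (E 6 1 (by decide)) (E 4 1 (by decide)) (D 8 10 (by decide)) (D 8 1 (by decide))
    (D 11 4 (by decide)) (D 6 7 (by decide)) (D 11 6 (by decide)) (D 6 4 (by decide))
  have v9 := h.vert1
    (E 9 2 (by decide)) (E 9 5 (by decide)) (E 9 11 (by decide)) (E 9 10 (by decide))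
    (E 2 5 (by decide)) (E 11 10 (by decide)) (E 5 7 (by decide)) (E 11 7 (by decide))
    (E 10 3 (by decide)) (E 2 3 (by decide)) (D 9 7 (by decide)) (D 9 3 (by decide))
    (D 2 11 (by decide)) (D 10 5 (by decide)) (D 5 11 (by decide)) (D 10 2 (by decide))
    (D 2 7 (by decide)) (D 10 7 (by decide)) (D 11 3 (by decide)) (D 2 9 (by decide))
    (D 11 9 (by decide)) (D 10 9 (by decide))
  have v10 := h.vert1
    (E 10 3 (by decide)) (E 10 6 (by decide)) (E 10 11 (by decide)) (E 10 9 (by decide))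
    (E 3 6 (by decide)) (E 11 9 (by decide)) (E 6 8 (by decide)) (E 11 8 (by decide))
    (E 9 2 (by decide)) (E 3 2 (by decide)) (D 10 8 (by decide)) (D 10 2 (by decide))
    (D 3 11 (by decide)) (D 9 6 (by decide)) (D 6 11 (by decide)) (D 9 3 (by decide))
    (D 3 8 (by decide)) (D 9 8 (by decide)) (D 11 2 (by decide)) (D 3 10 (by decide))
    (D 11 10 (by decide)) (D 9 10 (by decide))
  have v11 := h.vert1
    (E 11 7 (by decide)) (E 11 8 (by decide)) (E 11 10 (by decide)) (E 11 9 (by decide))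
    (E 7 8 (by decide)) (E 10 9 (by decide)) (E 8 6 (by decide)) (E 10 6 (by decide))
    (E 9 5 (by decide)) (E 7 5 (by decide)) (D 11 6 (by decide)) (D 11 5 (by decide))
    (D 7 10 (by decide)) (D 9 8 (by decide)) (D 8 10 (by decide)) (D 9 7 (by decide))
    (D 7 6 (by decide)) (D 9 6 (by decide)) (D 10 5 (by decide)) (D 7 11 (by decide))
    (D 10 11 (by decide)) (D 9 11 (by decide))
  simp only [C 2 1, C 3 0, C 5 4, C 6 4, C 7 0, C 8 1, C 9 3, C 9 7, C 10 2, C 10 8, C 11 5, C 11 6]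
    at v0 v1 v2 v3 v4 v5 v6 v7 v8 v9 v10 v11
  obtain ⟨o0, p0⟩ := v0.2 (by linarith only [q0, q1, q2, q3, q4, q5, v0.1, v1.1, v2, v3, v4.1, v5, v6, v7, v8, v9.1, v10.1, v11.1])
  obtain ⟨o1, p1⟩ := v1.2 (by linarith only [q0, q1, q2, q3, q4, q5, v0.1, v1.1, v2, v3, v4.1, v5, v6, v7, v8, v9.1, v10.1, v11.1])
  obtain ⟨o4, p4⟩ := v4.2 (by linarith only [q0, q1, q2, q3, q4, q5, v0.1, v1.1, v2, v3, v4.1, v5, v6, v7, v8, v9.1, v10.1, v11.1])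
  have e2 : f 2 = f 0 - f 4 := eq_sub_of_add_eq p0
  have e3 : f 3 = f 1 - f 4 := eq_sub_of_add_eq p1
  have e5 : f 5 = f 0 - f 1 := eq_sub_of_add_eq' o0
  have e6 : f 6 = f 1 - f 0 := eq_sub_of_add_eq' o1
  have e7 : f 7 = f 4 - f 1 := eq_sub_of_add_eq p4
  have e8 : f 8 = f 4 - f 0 := eq_sub_of_add_eq' o4
  have e9 := h.strip (E 2 5 (by decide)) (E 2 0 (by decide)) (E 5 0 (by decide))
    (E 9 2 (by decide)) (E 9 5 (by decide)) (D 9 0 (by decide))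
  have e10 := h.strip (E 3 6 (by decide)) (E 3 1 (by decide)) (E 6 1 (by decide))
    (E 10 3 (by decide)) (E 10 6 (by decide)) (D 10 1 (by decide))
  have e11 := h.strip (E 7 8 (by decide)) (E 7 4 (by decide)) (E 8 4 (by decide))
    (E 11 7 (by decide)) (E 11 8 (by decide)) (D 11 4 (by decide))
  exact ⟨e2, e3, e5, e6, e7, e8, e9, e10, e11⟩

end Cfg

/-! ### Positive definiteness of Legendre kernels -/

/-- The kernel `Re ((ζ i * conj (ζ j)) ^ m)`, weighted by a product `q i * q j`, is positive
semidefinite: its total sum is the square of `‖∑ q i * ζ i ^ m‖`. -/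
lemma psd_term {ι : Type*} (s : Finset ι) (q : ι → ℝ) (ζ : ι → ℂ) (m : ℕ) :
    0 ≤ ∑ i ∈ s, ∑ j ∈ s, q i * q j * ((ζ i * (starRingEnd ℂ) (ζ j)) ^ m).re := by
  have h : ∑ i ∈ s, ∑ j ∈ s, q i * q j * ((ζ i * (starRingEnd ℂ) (ζ j)) ^ m).re
      = Complex.normSq (∑ i ∈ s, (q i : ℂ) * ζ i ^ m) := by
    have h2 : ((Complex.normSq (∑ i ∈ s, (q i : ℂ) * ζ i ^ m) : ℝ) : ℂ)
        = ∑ i ∈ s, ∑ j ∈ s, (q i : ℂ) * q j * ((ζ i * (starRingEnd ℂ) (ζ j)) ^ m) := by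
      rw [← Complex.mul_conj, map_sum, Finset.sum_mul_sum]
      refine Finset.sum_congr rfl fun i _ => Finset.sum_congr rfl fun j _ => ?_
      rw [map_mul, map_pow, Complex.conj_ofReal, mul_pow]
      ring
    have h3 := congrArg Complex.re h2
    rw [Complex.ofReal_re] at h3
    rw [h3, Complex.re_sum]
    refine Finset.sum_congr rfl fun i _ => ?_
    rw [Complex.re_sum]
    refine Finset.sum_congr rfl fun j _ => ?_
    rw [← Complex.ofReal_mul, Complex.re_ofReal_mul]
  rw [h]
  exact Complex.normSq_nonneg _

/-- The Chebyshev recursion for the real parts of the powers of a complex number. -/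
lemma re_pow_rec (ω : ℂ) (m : ℕ) :
    (ω ^ (m + 2)).re = 2 * ω.re * (ω ^ (m + 1)).re - Complex.normSq ω * (ω ^ m).re := by
  simp only [pow_succ, Complex.mul_re, Complex.mul_im, Complex.normSq_apply]
  ring

/-- The horizontal part of a vector, as a complex number. -/
def hor (v : E3) : ℂ := ⟨v 0, v 1⟩

lemma hor_mul_re (v w : E3) :
    (hor v * (starRingEnd ℂ) (hor w)).re = v 0 * w 0 + v 1 * w 1 := by
  simp [hor, Complex.mul_re]

lemma hor_normSq {v w : E3} (hv : ⟪v, v⟫ = 1) (hw : ⟪w, w⟫ = 1) :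
    Complex.normSq (hor v * (starRingEnd ℂ) (hor w)) = (1 - v 2 ^ 2) * (1 - w 2 ^ 2) := by
  rw [ip_coord] at hv hw
  rw [Complex.normSq_mul, Complex.normSq_conj]
  simp only [hor, Complex.normSq_mk]
  rw [show v 0 * v 0 + v 1 * v 1 = 1 - v 2 ^ 2 by linarith,
    show w 0 * w 0 + w 1 * w 1 = 1 - w 2 ^ 2 by linarith]

/-- `re_pow_rec` for `hor v * conj (hor w)` with `v` and `w` on the unit sphere. -/
lemma hor_seq {v w : E3} (hv : ⟪v, v⟫ = 1) (hw : ⟪w, w⟫ = 1) (m : ℕ) :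
    ((hor v * (starRingEnd ℂ) (hor w)) ^ (m + 2)).re
      = 2 * (v 0 * w 0 + v 1 * w 1) * ((hor v * (starRingEnd ℂ) (hor w)) ^ (m + 1)).re
        - (1 - v 2 ^ 2) * (1 - w 2 ^ 2) * ((hor v * (starRingEnd ℂ) (hor w)) ^ m).re := by
  rw [re_pow_rec, hor_mul_re, hor_normSq hv hw]

/-- The Legendre polynomial of degree 1. -/
def leg1 (t : ℝ) : ℝ := t

/-- The addition theorem for the Legendre polynomial of degree 1. -/
lemma leg1_add (z z' w : ℝ) (C : ℕ → ℝ) (h0 : C 0 = 1) (h1 : C 1 = w)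
    (_hC : ∀ m, C (m + 2) = 2 * w * C (m + 1) - (1 - z ^ 2) * (1 - z' ^ 2) * C m) :
    leg1 (w + z * z') =
      1 * ((z) * (z') * C 0)
      + 1 * ((1) * (1) * C 1) := by
  simp only [h1, h0, leg1]
  ring

lemma leg1_psd {ι : Type*} (s : Finset ι) (v : ι → E3) (hv : ∀ i ∈ s, ⟪v i, v i⟫ = 1) :
    0 ≤ ∑ i ∈ s, ∑ j ∈ s, leg1 ⟪v i, v j⟫ := by
  have p0 := psd_term s (fun i => (v i 2)) (fun i => hor (v i)) 0
  have p1 := psd_term s (fun i => 1) (fun i => hor (v i)) 1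
  have key : ∑ i ∈ s, ∑ j ∈ s, leg1 ⟪v i, v j⟫ = _ :=
    Finset.sum_congr rfl fun i hi => Finset.sum_congr rfl fun j hj =>
      (congrArg leg1 (ip_coord (v i) (v j))).trans
        (leg1_add (v i 2) (v j 2) (v i 0 * v j 0 + v i 1 * v j 1)
          (fun m => ((hor (v i) * (starRingEnd ℂ) (hor (v j))) ^ m).re) (by simp)
          (by simp only [pow_one, hor_mul_re]) (hor_seq (hv i hi) (hv j hj)))
  rw [key]
  simp only [Finset.sum_add_distrib, ← Finset.mul_sum]
  simp only [← Finset.mul_sum] at p1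
  linarith only [p0, p1]

/-- The Legendre polynomial of degree 2. -/
def leg2 (t : ℝ) : ℝ := 3 / 2 * t ^ 2 - 1 / 2

/-- The addition theorem for the Legendre polynomial of degree 2. -/
lemma leg2_add (z z' w : ℝ) (C : ℕ → ℝ) (h0 : C 0 = 1) (h1 : C 1 = w)
    (hC : ∀ m, C (m + 2) = 2 * w * C (m + 1) - (1 - z ^ 2) * (1 - z' ^ 2) * C m) :
    leg2 (w + z * z') =
      1 * ((3 / 2 * z ^ 2 - 1 / 2) * (3 / 2 * z' ^ 2 - 1 / 2) * C 0)
      + 1 / 3 * ((3 * z) * (3 * z') * C 1)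
      + 1 / 12 * ((3) * (3) * C 2) := by
  have h2 : C 2 = _ := hC 0
  simp only [h2, h1, h0, leg2]
  ring

lemma leg2_psd {ι : Type*} (s : Finset ι) (v : ι → E3) (hv : ∀ i ∈ s, ⟪v i, v i⟫ = 1) :
    0 ≤ ∑ i ∈ s, ∑ j ∈ s, leg2 ⟪v i, v j⟫ := by
  have p0 := psd_term s (fun i => 3 / 2 * (v i 2) ^ 2 - 1 / 2) (fun i => hor (v i)) 0
  have p1 := psd_term s (fun i => 3 * (v i 2)) (fun i => hor (v i)) 1
  have p2 := psd_term s (fun i => 3) (fun i => hor (v i)) 2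
  have key : ∑ i ∈ s, ∑ j ∈ s, leg2 ⟪v i, v j⟫ = _ :=
    Finset.sum_congr rfl fun i hi => Finset.sum_congr rfl fun j hj =>
      (congrArg leg2 (ip_coord (v i) (v j))).trans
        (leg2_add (v i 2) (v j 2) (v i 0 * v j 0 + v i 1 * v j 1)
          (fun m => ((hor (v i) * (starRingEnd ℂ) (hor (v j))) ^ m).re) (by simp)
          (by simp only [pow_one, hor_mul_re]) (hor_seq (hv i hi) (hv j hj)))
  rw [key]
  simp only [Finset.sum_add_distrib, ← Finset.mul_sum]
  simp only [← Finset.mul_sum] at p2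
  linarith only [p0, p1, p2]

/-- The Legendre polynomial of degree 3. -/
def leg3 (t : ℝ) : ℝ := 5 / 2 * t ^ 3 - 3 / 2 * t

/-- The addition theorem for the Legendre polynomial of degree 3. -/
lemma leg3_add (z z' w : ℝ) (C : ℕ → ℝ) (h0 : C 0 = 1) (h1 : C 1 = w)
    (hC : ∀ m, C (m + 2) = 2 * w * C (m + 1) - (1 - z ^ 2) * (1 - z' ^ 2) * C m) :
    leg3 (w + z * z') =
      1 * ((5 / 2 * z ^ 3 - 3 / 2 * z) * (5 / 2 * z' ^ 3 - 3 / 2 * z') * C 0)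
      + 1 / 6 * ((15 / 2 * z ^ 2 - 3 / 2) * (15 / 2 * z' ^ 2 - 3 / 2) * C 1)
      + 1 / 60 * ((15 * z) * (15 * z') * C 2)
      + 1 / 360 * ((15) * (15) * C 3) := by
  have h2 : C 2 = _ := hC 0
  have h3 : C 3 = _ := hC 1
  simp only [h3, h2, h1, h0, leg3]
  ring

lemma leg3_psd {ι : Type*} (s : Finset ι) (v : ι → E3) (hv : ∀ i ∈ s, ⟪v i, v i⟫ = 1) :
    0 ≤ ∑ i ∈ s, ∑ j ∈ s, leg3 ⟪v i, v j⟫ := by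
  have p0 := psd_term s (fun i => 5 / 2 * (v i 2) ^ 3 - 3 / 2 * (v i 2)) (fun i => hor (v i)) 0
  have p1 := psd_term s (fun i => 15 / 2 * (v i 2) ^ 2 - 3 / 2) (fun i => hor (v i)) 1
  have p2 := psd_term s (fun i => 15 * (v i 2)) (fun i => hor (v i)) 2
  have p3 := psd_term s (fun i => 15) (fun i => hor (v i)) 3
  have key : ∑ i ∈ s, ∑ j ∈ s, leg3 ⟪v i, v j⟫ = _ :=
    Finset.sum_congr rfl fun i hi => Finset.sum_congr rfl fun j hj =>
      (congrArg leg3 (ip_coord (v i) (v j))).trans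
        (leg3_add (v i 2) (v j 2) (v i 0 * v j 0 + v i 1 * v j 1)
          (fun m => ((hor (v i) * (starRingEnd ℂ) (hor (v j))) ^ m).re) (by simp)
          (by simp only [pow_one, hor_mul_re]) (hor_seq (hv i hi) (hv j hj)))
  rw [key]
  simp only [Finset.sum_add_distrib, ← Finset.mul_sum]
  simp only [← Finset.mul_sum] at p3
  linarith only [p0, p1, p2, p3]

/-- The Legendre polynomial of degree 4. -/
def leg4 (t : ℝ) : ℝ := 35 / 8 * t ^ 4 - 15 / 4 * t ^ 2 + 3 / 8

/-- The addition theorem for the Legendre polynomial of degree 4. -/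
lemma leg4_add (z z' w : ℝ) (C : ℕ → ℝ) (h0 : C 0 = 1) (h1 : C 1 = w)
    (hC : ∀ m, C (m + 2) = 2 * w * C (m + 1) - (1 - z ^ 2) * (1 - z' ^ 2) * C m) :
    leg4 (w + z * z') =
      1 * ((35 / 8 * z ^ 4 - 15 / 4 * z ^ 2 + 3 / 8) * (35 / 8 * z' ^ 4 - 15 / 4 * z' ^ 2 + 3 / 8) * C 0)
      + 1 / 10 * ((35 / 2 * z ^ 3 - 15 / 2 * z) * (35 / 2 * z' ^ 3 - 15 / 2 * z') * C 1)
      + 1 / 180 * ((105 / 2 * z ^ 2 - 15 / 2) * (105 / 2 * z' ^ 2 - 15 / 2) * C 2)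
      + 1 / 2520 * ((105 * z) * (105 * z') * C 3)
      + 1 / 20160 * ((105) * (105) * C 4) := by
  have h2 : C 2 = _ := hC 0
  have h3 : C 3 = _ := hC 1
  have h4 : C 4 = _ := hC 2
  simp only [h4, h3, h2, h1, h0, leg4]
  ring

lemma leg4_psd {ι : Type*} (s : Finset ι) (v : ι → E3) (hv : ∀ i ∈ s, ⟪v i, v i⟫ = 1) :
    0 ≤ ∑ i ∈ s, ∑ j ∈ s, leg4 ⟪v i, v j⟫ := by
  have p0 := psd_term s (fun i => 35 / 8 * (v i 2) ^ 4 - 15 / 4 * (v i 2) ^ 2 + 3 / 8) (fun i => hor (v i)) 0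
  have p1 := psd_term s (fun i => 35 / 2 * (v i 2) ^ 3 - 15 / 2 * (v i 2)) (fun i => hor (v i)) 1
  have p2 := psd_term s (fun i => 105 / 2 * (v i 2) ^ 2 - 15 / 2) (fun i => hor (v i)) 2
  have p3 := psd_term s (fun i => 105 * (v i 2)) (fun i => hor (v i)) 3
  have p4 := psd_term s (fun i => 105) (fun i => hor (v i)) 4
  have key : ∑ i ∈ s, ∑ j ∈ s, leg4 ⟪v i, v j⟫ = _ :=
    Finset.sum_congr rfl fun i hi => Finset.sum_congr rfl fun j hj =>
      (congrArg leg4 (ip_coord (v i) (v j))).trans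
        (leg4_add (v i 2) (v j 2) (v i 0 * v j 0 + v i 1 * v j 1)
          (fun m => ((hor (v i) * (starRingEnd ℂ) (hor (v j))) ^ m).re) (by simp)
          (by simp only [pow_one, hor_mul_re]) (hor_seq (hv i hi) (hv j hj)))
  rw [key]
  simp only [Finset.sum_add_distrib, ← Finset.mul_sum]
  simp only [← Finset.mul_sum] at p4
  linarith only [p0, p1, p2, p3, p4]

/-- The Legendre polynomial of degree 5. -/
def leg5 (t : ℝ) : ℝ := 63 / 8 * t ^ 5 - 35 / 4 * t ^ 3 + 15 / 8 * t

/-- The addition theorem for the Legendre polynomial of degree 5. -/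
lemma leg5_add (z z' w : ℝ) (C : ℕ → ℝ) (h0 : C 0 = 1) (h1 : C 1 = w)
    (hC : ∀ m, C (m + 2) = 2 * w * C (m + 1) - (1 - z ^ 2) * (1 - z' ^ 2) * C m) :
    leg5 (w + z * z') =
      1 * ((63 / 8 * z ^ 5 - 35 / 4 * z ^ 3 + 15 / 8 * z) * (63 / 8 * z' ^ 5 - 35 / 4 * z' ^ 3 + 15 / 8 * z') * C 0)
      + 1 / 15 * ((315 / 8 * z ^ 4 - 105 / 4 * z ^ 2 + 15 / 8) * (315 / 8 * z' ^ 4 - 105 / 4 * z' ^ 2 + 15 / 8) * C 1)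
      + 1 / 420 * ((315 / 2 * z ^ 3 - 105 / 2 * z) * (315 / 2 * z' ^ 3 - 105 / 2 * z') * C 2)
      + 1 / 10080 * ((945 / 2 * z ^ 2 - 105 / 2) * (945 / 2 * z' ^ 2 - 105 / 2) * C 3)
      + 1 / 181440 * ((945 * z) * (945 * z') * C 4)
      + 1 / 1814400 * ((945) * (945) * C 5) := by
  have h2 : C 2 = _ := hC 0
  have h3 : C 3 = _ := hC 1
  have h4 : C 4 = _ := hC 2
  have h5 : C 5 = _ := hC 3
  simp only [h5, h4, h3, h2, h1, h0, leg5]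
  ring

lemma leg5_psd {ι : Type*} (s : Finset ι) (v : ι → E3) (hv : ∀ i ∈ s, ⟪v i, v i⟫ = 1) :
    0 ≤ ∑ i ∈ s, ∑ j ∈ s, leg5 ⟪v i, v j⟫ := by
  have p0 := psd_term s (fun i => 63 / 8 * (v i 2) ^ 5 - 35 / 4 * (v i 2) ^ 3 + 15 / 8 * (v i 2)) (fun i => hor (v i)) 0
  have p1 := psd_term s (fun i => 315 / 8 * (v i 2) ^ 4 - 105 / 4 * (v i 2) ^ 2 + 15 / 8) (fun i => hor (v i)) 1
  have p2 := psd_term s (fun i => 315 / 2 * (v i 2) ^ 3 - 105 / 2 * (v i 2)) (fun i => hor (v i)) 2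
  have p3 := psd_term s (fun i => 945 / 2 * (v i 2) ^ 2 - 105 / 2) (fun i => hor (v i)) 3
  have p4 := psd_term s (fun i => 945 * (v i 2)) (fun i => hor (v i)) 4
  have p5 := psd_term s (fun i => 945) (fun i => hor (v i)) 5
  have key : ∑ i ∈ s, ∑ j ∈ s, leg5 ⟪v i, v j⟫ = _ :=
    Finset.sum_congr rfl fun i hi => Finset.sum_congr rfl fun j hj =>
      (congrArg leg5 (ip_coord (v i) (v j))).trans
        (leg5_add (v i 2) (v j 2) (v i 0 * v j 0 + v i 1 * v j 1)
          (fun m => ((hor (v i) * (starRingEnd ℂ) (hor (v j))) ^ m).re) (by simp)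
          (by simp only [pow_one, hor_mul_re]) (hor_seq (hv i hi) (hv j hj)))
  rw [key]
  simp only [Finset.sum_add_distrib, ← Finset.mul_sum]
  simp only [← Finset.mul_sum] at p5
  linarith only [p0, p1, p2, p3, p4, p5]

/-- The Legendre polynomial of degree 9. -/
def leg9 (t : ℝ) : ℝ := 12155 / 128 * t ^ 9 - 6435 / 32 * t ^ 7 + 9009 / 64 * t ^ 5 - 1155 / 32 * t ^ 3 + 315 / 128 * t

/-- The addition theorem for the Legendre polynomial of degree 9. -/
lemma leg9_add (z z' w : ℝ) (C : ℕ → ℝ) (h0 : C 0 = 1) (h1 : C 1 = w)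
    (hC : ∀ m, C (m + 2) = 2 * w * C (m + 1) - (1 - z ^ 2) * (1 - z' ^ 2) * C m) :
    leg9 (w + z * z') =
      1 * ((12155 / 128 * z ^ 9 - 6435 / 32 * z ^ 7 + 9009 / 64 * z ^ 5 - 1155 / 32 * z ^ 3 + 315 / 128 * z) * (12155 / 128 * z' ^ 9 - 6435 / 32 * z' ^ 7 + 9009 / 64 * z' ^ 5 - 1155 / 32 * z' ^ 3 + 315 / 128 * z') * C 0)
      + 1 / 45 * ((109395 / 128 * z ^ 8 - 45045 / 32 * z ^ 6 + 45045 / 64 * z ^ 4 - 3465 / 32 * z ^ 2 + 315 / 128) * (109395 / 128 * z' ^ 8 - 45045 / 32 * z' ^ 6 + 45045 / 64 * z' ^ 4 - 3465 / 32 * z' ^ 2 + 315 / 128) * C 1)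
      + 1 / 3960 * ((109395 / 16 * z ^ 7 - 135135 / 16 * z ^ 5 + 45045 / 16 * z ^ 3 - 3465 / 16 * z) * (109395 / 16 * z' ^ 7 - 135135 / 16 * z' ^ 5 + 45045 / 16 * z' ^ 3 - 3465 / 16 * z') * C 2)
      + 1 / 332640 * ((765765 / 16 * z ^ 6 - 675675 / 16 * z ^ 4 + 135135 / 16 * z ^ 2 - 3465 / 16) * (765765 / 16 * z' ^ 6 - 675675 / 16 * z' ^ 4 + 135135 / 16 * z' ^ 2 - 3465 / 16) * C 3)
      + 1 / 25945920 * ((2297295 / 8 * z ^ 5 - 675675 / 4 * z ^ 3 + 135135 / 8 * z) * (2297295 / 8 * z' ^ 5 - 675675 / 4 * z' ^ 3 + 135135 / 8 * z') * C 4)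
      + 1 / 1816214400 * ((11486475 / 8 * z ^ 4 - 2027025 / 4 * z ^ 2 + 135135 / 8) * (11486475 / 8 * z' ^ 4 - 2027025 / 4 * z' ^ 2 + 135135 / 8) * C 5)
      + 1 / 108972864000 * ((11486475 / 2 * z ^ 3 - 2027025 / 2 * z) * (11486475 / 2 * z' ^ 3 - 2027025 / 2 * z') * C 6)
      + 1 / 5230697472000 * ((34459425 / 2 * z ^ 2 - 2027025 / 2) * (34459425 / 2 * z' ^ 2 - 2027025 / 2) * C 7)
      + 1 / 177843714048000 * ((34459425 * z) * (34459425 * z') * C 8)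
      + 1 / 3201186852864000 * ((34459425) * (34459425) * C 9) := by
  have h2 : C 2 = _ := hC 0
  have h3 : C 3 = _ := hC 1
  have h4 : C 4 = _ := hC 2
  have h5 : C 5 = _ := hC 3
  have h6 : C 6 = _ := hC 4
  have h7 : C 7 = _ := hC 5
  have h8 : C 8 = _ := hC 6
  have h9 : C 9 = _ := hC 7
  simp only [h9, h8, h7, h6, h5, h4, h3, h2, h1, h0, leg9]
  ring

lemma leg9_psd {ι : Type*} (s : Finset ι) (v : ι → E3) (hv : ∀ i ∈ s, ⟪v i, v i⟫ = 1) :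
    0 ≤ ∑ i ∈ s, ∑ j ∈ s, leg9 ⟪v i, v j⟫ := by
  have p0 := psd_term s (fun i => 12155 / 128 * (v i 2) ^ 9 - 6435 / 32 * (v i 2) ^ 7 + 9009 / 64 * (v i 2) ^ 5 - 1155 / 32 * (v i 2) ^ 3 + 315 / 128 * (v i 2)) (fun i => hor (v i)) 0
  have p1 := psd_term s (fun i => 109395 / 128 * (v i 2) ^ 8 - 45045 / 32 * (v i 2) ^ 6 + 45045 / 64 * (v i 2) ^ 4 - 3465 / 32 * (v i 2) ^ 2 + 315 / 128) (fun i => hor (v i)) 1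
  have p2 := psd_term s (fun i => 109395 / 16 * (v i 2) ^ 7 - 135135 / 16 * (v i 2) ^ 5 + 45045 / 16 * (v i 2) ^ 3 - 3465 / 16 * (v i 2)) (fun i => hor (v i)) 2
  have p3 := psd_term s (fun i => 765765 / 16 * (v i 2) ^ 6 - 675675 / 16 * (v i 2) ^ 4 + 135135 / 16 * (v i 2) ^ 2 - 3465 / 16) (fun i => hor (v i)) 3
  have p4 := psd_term s (fun i => 2297295 / 8 * (v i 2) ^ 5 - 675675 / 4 * (v i 2) ^ 3 + 135135 / 8 * (v i 2)) (fun i => hor (v i)) 4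
  have p5 := psd_term s (fun i => 11486475 / 8 * (v i 2) ^ 4 - 2027025 / 4 * (v i 2) ^ 2 + 135135 / 8) (fun i => hor (v i)) 5
  have p6 := psd_term s (fun i => 11486475 / 2 * (v i 2) ^ 3 - 2027025 / 2 * (v i 2)) (fun i => hor (v i)) 6
  have p7 := psd_term s (fun i => 34459425 / 2 * (v i 2) ^ 2 - 2027025 / 2) (fun i => hor (v i)) 7
  have p8 := psd_term s (fun i => 34459425 * (v i 2)) (fun i => hor (v i)) 8
  have p9 := psd_term s (fun i => 34459425) (fun i => hor (v i)) 9
  have key : ∑ i ∈ s, ∑ j ∈ s, leg9 ⟪v i, v j⟫ = _ :=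
    Finset.sum_congr rfl fun i hi => Finset.sum_congr rfl fun j hj =>
      (congrArg leg9 (ip_coord (v i) (v j))).trans
        (leg9_add (v i 2) (v j 2) (v i 0 * v j 0 + v i 1 * v j 1)
          (fun m => ((hor (v i) * (starRingEnd ℂ) (hor (v j))) ^ m).re) (by simp)
          (by simp only [pow_one, hor_mul_re]) (hor_seq (hv i hi) (hv j hj)))
  rw [key]
  simp only [Finset.sum_add_distrib, ← Finset.mul_sum]
  simp only [← Finset.mul_sum] at p9
  linarith only [p0, p1, p2, p3, p4, p5, p6, p7, p8, p9]

/-! ### At most twelve points on the sphere -/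

/-- A combination of Legendre polynomials with nonnegative coefficients which is nonpositive on
`[-59/100, 1/2]`; its values on `[-1, -59/100]` are controlled by `mus_line`. -/
def mus (t : ℝ) : ℝ :=
  1 + 8 / 5 * leg1 t + 87 / 25 * leg2 t + 33 / 20 * leg3 t + 49 / 25 * leg4 t + 1 / 10 * leg5 t
    + 8 / 25 * leg9 t

lemma mus_one : mus 1 = 1011 / 100 := by
  norm_num [mus, leg1, leg2, leg3, leg4, leg5, leg9]

lemma mus_neg (t : ℝ) : mus (-t) = -(2431 / 80) * t ^ 9 + 1287 / 20 * t ^ 7 - 18333 / 400 * t ^ 5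
    + 343 / 40 * t ^ 4 + 83 / 10 * t ^ 3 - 213 / 100 * t ^ 2 - t / 10 - 1 / 200 := by
  unfold mus leg1 leg2 leg3 leg4 leg5 leg9
  ring

lemma mus_sum {ι : Type*} (s : Finset ι) (v : ι → E3) (hv : ∀ i ∈ s, ⟪v i, v i⟫ = 1) :
    (s.card : ℝ) ^ 2 ≤ ∑ i ∈ s, ∑ j ∈ s, mus ⟪v i, v j⟫ := by
  have h1 := leg1_psd s v hv
  have h2 := leg2_psd s v hv
  have h3 := leg3_psd s v hv
  have h4 := leg4_psd s v hv
  have h5 := leg5_psd s v hv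
  have h9 := leg9_psd s v hv
  simp only [mus, Finset.sum_add_distrib, ← Finset.mul_sum, Finset.sum_const, nsmul_eq_mul,
    mul_one]
  nlinarith only [h1, h2, h3, h4, h5, h9]

/-- A polynomial of degree at most nine with nonnegative Bernstein coefficients on `[a, b]` is
nonnegative there. -/
lemma bernstein_form {a b t : ℝ} (ha : a ≤ t) (hb : t ≤ b) (c₀ c₁ c₂ c₃ c₄ c₅ c₆ c₇ c₈ c₉ : ℕ) :
    0 ≤ c₀ * (t - a) ^ 0 * (b - t) ^ 9 + c₁ * (t - a) ^ 1 * (b - t) ^ 8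
      + c₂ * (t - a) ^ 2 * (b - t) ^ 7 + c₃ * (t - a) ^ 3 * (b - t) ^ 6
      + c₄ * (t - a) ^ 4 * (b - t) ^ 5 + c₅ * (t - a) ^ 5 * (b - t) ^ 4
      + c₆ * (t - a) ^ 6 * (b - t) ^ 3 + c₇ * (t - a) ^ 7 * (b - t) ^ 2
      + c₈ * (t - a) ^ 8 * (b - t) ^ 1 + c₉ * (t - a) ^ 9 * (b - t) ^ 0 := by
  have h1 : 0 ≤ t - a := by linarith
  have h2 : 0 ≤ b - t := by linarith
  positivity

/-- This and the lemmas `piece2`, `piece3`, … bound `mus (-t)` above by an affine function on a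
short interval; the numbers are the Bernstein coefficients of the difference. -/
lemma piece1 {t : ℝ} (ha : -1 / 2 ≤ t) (hb : t ≤ -91 / 400) :
    mus (-t) ≤ 0 + 0 * t := by
  have h := bernstein_form ha hb
    3788800000000000000000 25094290944000000000000000 166529490216960000000000000 472953420325632000000000000
    749882074864055680000000000 725857510750244224640000000 439301763882203214880000000 162384574585867241446240000
    33530654436820257386568200 2963255466858010434452859
  push_cast at h
  rw [mus_neg]
  linear_combination (exp := 1) 1 / 173751462355384751120 * h

lemma piece2 {t : ℝ} (ha : -91 / 400 ≤ t) (hb : t ≤ -73 / 800) :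
    mus (-t) ≤ 0 + 0 * t := by
  have h := bernstein_form ha hb
    1517186799031301342439863808 11898174251096582231976702208 40671185838614584951210178048 79469618123281386202556019968
    97719876604163850101571857728 78332970774790735163723885792 40893017090319215761804864992 13400396798856290817900465552
    2504283748569764505864727782 204395412546284570988543497
  push_cast at h
  rw [mus_neg]
  linear_combination (exp := 1) 1 / 173751462355384751120 * h

lemma piece3 {t : ℝ} (ha : -73 / 800 ≤ t) (hb : t ≤ 9 / 200) :
    mus (-t) ≤ 0 + 0 * t := by
  have h := bernstein_form ha hb
    204395412546284570988543497 1174833677263357771929055164 2764796228405036946415084608 3586475484958462736253371136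
    3392129128943771211210255872 3464414392835128496817719296 3522169601856187199236554752 2427277115477098325873721344
    909415543560144410417102848 139910524649939331647799296
  push_cast at h
  rw [mus_neg]
  linear_combination (exp := 1) 1 / 173751462355384751120 * h

lemma piece4 {t : ℝ} (ha : 9 / 200 ≤ t) (hb : t ≤ 127 / 400) :
    mus (-t) ≤ 0 + 0 * t := by
  have h := bernstein_form ha hb
    273262743456912757124608 3825689606304830339172608 22242524135941025502658048 67745228197219498254861568
    119363120644846787725924928 127116852368719725326336992 82364911382577068382506592 31512171580522968366897552
    6509114805062690320153182 558271831679786655223297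
  push_cast at h
  rw [mus_neg]
  linear_combination (exp := 1) 1 / 173751462355384751120 * h

lemma piece5 {t : ℝ} (ha : 127 / 400 ≤ t) (hb : t ≤ 363 / 800) :
    mus (-t) ≤ 0 + 0 * t := by
  have h := bernstein_form ha hb
    285835177820050767474328064 2192441510474636638944214272 7190206684578467452872884736 13136273611671260204171374848
    14601267362249227357510837184 10137836311976058585716676448 4369267162281259688995251104 1145827403290125501234819152
    182182849795710100870130386 16385679185196761910471413
  push_cast at h
  rw [mus_neg]
  linear_combination (exp := 1) 1 / 173751462355384751120 * h

lemma piece6 {t : ℝ} (ha : 363 / 800 ≤ t) (hb : t ≤ 59 / 100) :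
    mus (-t) ≤ 0 + 0 * t := by
  have h := bernstein_form ha hb
    16385679185196761910471413 112759375537831613518355048 590439609227097602420616448 2279013719113190034674403328
    5371744769850031243190427648 7475005645388948554164928512 6037931535893806496430948352 2629362164488513644346212352
    481995646185861111319887872 2361615686071692822577152
  push_cast at h
  rw [mus_neg]
  linear_combination (exp := 1) 1 / 173751462355384751120 * h

lemma mus_nonpos {t : ℝ} (ha : -1 / 2 ≤ t) (hb : t ≤ 59 / 100) : mus (-t) ≤ 0 := by
  suffices mus (-t) ≤ 0 + 0 * t by linarith
  rcases le_total t (-91 / 400) with h | h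
  · exact piece1 ha h
  clear ha
  rename' h => ha
  rcases le_total t (-73 / 800) with h | h
  · exact piece2 ha h
  clear ha
  rename' h => ha
  rcases le_total t (9 / 200) with h | h
  · exact piece3 ha h
  clear ha
  rename' h => ha
  rcases le_total t (127 / 400) with h | h
  · exact piece4 ha h
  clear ha
  rename' h => ha
  rcases le_total t (363 / 800) with h | h
  · exact piece5 ha h
  clear ha
  rename' h => ha
  exact piece6 ha hb

lemma piece7 {t : ℝ} (ha : 59 / 100 ≤ t) (hb : t ≤ 69 / 100) :
    mus (-t) ≤ -19 / 25 + 13 / 10 * t := by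
  have h := bernstein_form ha hb
    577595408008036709 13078880699814121971 79255925268473614644 234361678799021734876
    400938324138057646774 420510699613409410634 269855731547151106596 99422793719647114444
    17440982488546069901 694508449344092699
  push_cast at h
  rw [mus_neg]
  linear_combination (exp := 1) 1 / 80000000000 * h

/-- For each of the four cells in `[59/100, 1]`, the lemmas `lineK_1` and `lineK_2` give two affine
majorants of `mus (-t)`. -/
lemma line1_1 {t : ℝ} (ha : 59 / 100 ≤ t) (hb : t ≤ 69 / 100) :
    mus (-t) ≤ -19 / 25 + 13 / 10 * t := by
  exact piece7 ha hb

lemma piece8 {t : ℝ} (ha : 59 / 100 ≤ t) (hb : t ≤ 69 / 100) :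
    mus (-t) ≤ -2831 / 200 + 24 * t := by
  have h := bernstein_form ha hb
    417595408008036709 193238880699814121971 1526295925268473614644 5305721678799021734876
    10550378324138057646774 13112350699613409410634 10426015731547151106596 5178462793719647114444
    1468800982488546069901 182134508449344092699
  push_cast at h
  rw [mus_neg]
  linear_combination (exp := 1) 1 / 80000000000 * h

lemma line1_2 {t : ℝ} (ha : 59 / 100 ≤ t) (hb : t ≤ 69 / 100) :
    mus (-t) ≤ -2831 / 200 + 24 * t := by
  exact piece8 ha hb

lemma piece9 {t : ℝ} (ha : 69 / 100 ≤ t) (hb : t ≤ 79 / 100) :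
    mus (-t) ≤ -331 / 100 + 5 * t := by
  have h := bernstein_form ha hb
    934508449344092699 26820169599647598681 165816290608459344684 484343019769978960436
    808165472507005310314 819804701251945581374 504327309888429106556 175486460674643340484
    27877450235597440211 666682823619813489
  push_cast at h
  rw [mus_neg]
  linear_combination (exp := 1) 1 / 80000000000 * h

lemma line2_1 {t : ℝ} (ha : 69 / 100 ≤ t) (hb : t ≤ 79 / 100) :
    mus (-t) ≤ -331 / 100 + 5 * t := by
  exact piece9 ha hb

lemma piece10 {t : ℝ} (ha : 69 / 100 ≤ t) (hb : t ≤ 79 / 100) :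
    mus (-t) ≤ -2043 / 200 + 15 * t := by
  have h := bernstein_form ha hb
    534508449344092699 103220169599647598681 791416290608459344684 2690743019769978960436
    5237765472507005310314 6369404701251945581374 4950727309888429106556 2401086460674643340484
    664277450235597440211 80266682823619813489
  push_cast at h
  rw [mus_neg]
  linear_combination (exp := 1) 1 / 80000000000 * h

lemma line2_2 {t : ℝ} (ha : 69 / 100 ≤ t) (hb : t ≤ 79 / 100) :
    mus (-t) ≤ -2043 / 200 + 15 * t := by
  exact piece10 ha hb

lemma piece11 {t : ℝ} (ha : 79 / 100 ≤ t) (hb : t ≤ 87 / 100) :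
    mus (-t) ≤ -221 / 25 + 12 * t := by
  have h := bernstein_form ha hb
    666682823619813489 33298301554163026353 227324992664704272036 714673323016191564852
    1295704923715247629534 1468102315263605246702 1061174200777873899604 477332124230652351748
    122177574069239218361 13642310312355940137
  push_cast at h
  rw [mus_neg]
  linear_combination (exp := 1) 1 / 10737418240 * h

lemma line3_1 {t : ℝ} (ha : 79 / 100 ≤ t) (hb : t ≤ 87 / 100) :
    mus (-t) ≤ -221 / 25 + 12 * t := by
  exact piece11 ha hb

lemma piece12 {t : ℝ} (ha : 79 / 100 ≤ t) (hb : t ≤ 87 / 100) :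
    mus (-t) ≤ -363 / 50 + 10 * t := by
  have h := bernstein_form ha hb
    666682823619813489 20498301554163026353 124924992664704272036 356273323016191564852
    578904923715247629534 572102315263605246702 344374200777873899604 118932124230652351748
    19777574069239218361 842310312355940137
  push_cast at h
  rw [mus_neg]
  linear_combination (exp := 1) 1 / 10737418240 * h

lemma line3_2 {t : ℝ} (ha : 79 / 100 ≤ t) (hb : t ≤ 87 / 100) :
    mus (-t) ≤ -363 / 50 + 10 * t := by
  exact piece12 ha hb

lemma piece13 {t : ℝ} (ha : 87 / 100 ≤ t) (hb : t ≤ 187 / 200) :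
    mus (-t) ≤ -16 / 5 + 6 * t := by
  have h := bernstein_form ha hb
    24188062879926241350144 201969104915993297186048 741952305238086416912896 1571738037997041601069312
    2112454202127136084085184 1864447518508281180324192 1078154704584097194415264 392884343387144024200528
    81646004249138464776866 7356274295703836736037
  push_cast at h
  rw [mus_neg]
  linear_combination (exp := 1) 1 / 848359949840 * h

lemma piece14 {t : ℝ} (ha : 187 / 200 ≤ t) (hb : t ≤ 387 / 400) :
    mus (-t) ≤ -16 / 5 + 6 * t := by
  have h := bernstein_form ha hb
    3766412439400364408850944 29945190844125472536610048 104552078491630588420061696 210025826458837498070880512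
    266949784749464039683886784 222090244011840658293866592 120608994038411649038783264 41115121879855413186670928
    7969538061204601405437466 670424585477980406967837
  push_cast at h
  rw [mus_neg]
  linear_combination (exp := 1) 1 / 848359949840 * h

lemma piece15 {t : ℝ} (ha : 387 / 400 ≤ t) (hb : t ≤ 1) :
    mus (-t) ≤ -16 / 5 + 6 * t := by
  have h := bernstein_form ha hb
    670424585477980406967837 4098104477399045919983600 10143653209410969303040000 12939770865851611648000000
    9675466362702648320000000 6916439521822720000000000 7856881360896000000000000 7135185469440000000000000
    3372220416000000000000000 629145600000000000000000
  push_cast at h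
  rw [mus_neg]
  linear_combination (exp := 1) 1 / 848359949840 * h

lemma line4_1 {t : ℝ} (ha : 87 / 100 ≤ t) (hb : t ≤ 1) :
    mus (-t) ≤ -16 / 5 + 6 * t := by
  rcases le_total t (187 / 200) with h | h
  · exact piece13 ha h
  clear ha
  rename' h => ha
  rcases le_total t (387 / 400) with h | h
  · exact piece14 ha h
  clear ha
  rename' h => ha
  exact piece15 ha hb

lemma piece16 {t : ℝ} (ha : 87 / 100 ≤ t) (hb : t ≤ 187 / 200) :
    mus (-t) ≤ -449 / 50 + 12 * t := by
  have h := bernstein_form ha hb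
    1250462879926241350144 11505104915993297186048 43993905238086416912896 92262837997041601069312
    116883002127136084085184 92517918508281180324192 45962704584097194415264 14413943387144024200528
    3002804249138464776866 393074295703836736037
  push_cast at h
  rw [mus_neg]
  linear_combination (exp := 1) 1 / 848359949840 * h

lemma piece17 {t : ℝ} (ha : 187 / 200 ≤ t) (hb : t ≤ 1) :
    mus (-t) ≤ -449 / 50 + 12 * t := by
  have h := bernstein_form ha hb
    393074295703836736037 4072533073530596471800 22971773982281077760000 83664353645389376000000
    198918184544115520000000 308172857552960000000000 307833323904000000000000 191206548480000000000000
    67239936000000000000000 10240000000000000000000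
  push_cast at h
  rw [mus_neg]
  linear_combination (exp := 1) 1 / 848359949840 * h

lemma line4_2 {t : ℝ} (ha : 87 / 100 ≤ t) (hb : t ≤ 1) :
    mus (-t) ≤ -449 / 50 + 12 * t := by
  rcases le_total t (187 / 200) with h | h
  · exact piece16 ha h
  clear ha
  rename' h => ha
  exact piece17 ha hb

/-- Affine majorants `(A + B t) / 200` of `mus (-t)`, as pairs `(A, B)`, on the four cells
`[0.59, 0.69]`, `[0.69, 0.79]`, `[0.79, 0.87]`, `[0.87, 1]`. Cell `0` stands for an absent point. -/
def majorants : ℕ → List (ℤ × ℤ)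
  | 1 => [(-152, 260), (-2831, 4800)]
  | 2 => [(-662, 1000), (-2043, 3000)]
  | 3 => [(-1768, 2400), (-1452, 2000)]
  | 4 => [(-640, 1200), (-1796, 2400)]
  | _ => [(0, 0)]

lemma mus_line {t : ℝ} (ha : 59 / 100 ≤ t) (hb : t ≤ 1) :
    ∃ c ∈ [0, 1, 2, 3, 4], ∀ l ∈ majorants c, mus (-t) ≤ ((l.1 : ℝ) + l.2 * t) / 200 := by
  rcases le_total t (69 / 100) with h | h
  · refine ⟨1, by simp, ?_⟩
    have e1 := line1_1 ha h
    have e2 := line1_2 ha h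
    simp only [majorants, List.mem_cons, List.not_mem_nil, or_false, forall_eq_or_imp, forall_eq]
    constructor <;> push_cast <;> linarith
  clear ha
  rename' h => ha
  rcases le_total t (79 / 100) with h | h
  · refine ⟨2, by simp, ?_⟩
    have e1 := line2_1 ha h
    have e2 := line2_2 ha h
    simp only [majorants, List.mem_cons, List.not_mem_nil, or_false, forall_eq_or_imp, forall_eq]
    constructor <;> push_cast <;> linarith
  clear ha
  rename' h => ha
  rcases le_total t (87 / 100) with h | h
  · refine ⟨3, by simp, ?_⟩
    have e1 := line3_1 ha h
    have e2 := line3_2 ha h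
    simp only [majorants, List.mem_cons, List.not_mem_nil, or_false, forall_eq_or_imp, forall_eq]
    constructor <;> push_cast <;> linarith
  clear ha
  rename' h => ha
  refine ⟨4, by simp, ?_⟩
  have e1 := line4_1 ha hb
  have e2 := line4_2 ha hb
  simp only [majorants, List.mem_cons, List.not_mem_nil, or_false, forall_eq_or_imp, forall_eq]
  constructor <;> push_cast <;> linarith

/-- For every distribution of four points to the cells, some choice of majorants bounds the sum of
the values of `mus` by `578 / 200`, in view of `four_aux`. -/
lemma majorants_check : ∀ c₁ ∈ [0, 1, 2, 3, 4], ∀ c₂ ∈ [0, 1, 2, 3, 4], ∀ c₃ ∈ [0, 1, 2, 3, 4],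
    ∀ c₄ ∈ [0, 1, 2, 3, 4], ∃ l₁ ∈ majorants c₁, ∃ l₂ ∈ majorants c₂, ∃ l₃ ∈ majorants c₃,
    ∃ l₄ ∈ majorants c₄, l₁.1 + l₂.1 + l₃.1 + l₄.1 < 578 ∧
      (l₁.2 + l₂.2 + l₃.2 + l₄.2) ^ 2 + (l₁.2 ^ 2 + l₂.2 ^ 2 + l₃.2 ^ 2 + l₄.2 ^ 2)
        < 2 * (578 - (l₁.1 + l₂.1 + l₃.1 + l₄.1)) ^ 2 := by
  decide +kernel

lemma majorants_nonneg : ∀ c ∈ [0, 1, 2, 3, 4], ∀ l ∈ majorants c, 0 ≤ l.2 := by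
  decide

/-- If `w₁, …, w₄` have norm at most one and pairwise inner products at most `1/2`, nonnegative
combinations of their heights `tᵢ` over the direction `-x` are bounded by the norm of the
corresponding combination of the vectors. -/
lemma four_aux {x w₁ w₂ w₃ w₄ : E3} {t₁ t₂ t₃ t₄ b₁ b₂ b₃ b₄ : ℝ} (hx : ⟪x, x⟫ = 1)
    (e₁ : ⟪x, w₁⟫ = -t₁) (e₂ : ⟪x, w₂⟫ = -t₂) (e₃ : ⟪x, w₃⟫ = -t₃) (e₄ : ⟪x, w₄⟫ = -t₄)
    (n₁ : ⟪w₁, w₁⟫ ≤ 1) (n₂ : ⟪w₂, w₂⟫ ≤ 1) (n₃ : ⟪w₃, w₃⟫ ≤ 1) (n₄ : ⟪w₄, w₄⟫ ≤ 1)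
    (h₁₂ : ⟪w₁, w₂⟫ ≤ 1 / 2) (h₁₃ : ⟪w₁, w₃⟫ ≤ 1 / 2) (h₁₄ : ⟪w₁, w₄⟫ ≤ 1 / 2)
    (h₂₃ : ⟪w₂, w₃⟫ ≤ 1 / 2) (h₂₄ : ⟪w₂, w₄⟫ ≤ 1 / 2) (h₃₄ : ⟪w₃, w₄⟫ ≤ 1 / 2)
    (p₁ : 0 ≤ b₁) (p₂ : 0 ≤ b₂) (p₃ : 0 ≤ b₃) (p₄ : 0 ≤ b₄) :
    2 * (b₁ * t₁ + b₂ * t₂ + b₃ * t₃ + b₄ * t₄) ^ 2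
      ≤ (b₁ + b₂ + b₃ + b₄) ^ 2 + (b₁ ^ 2 + b₂ ^ 2 + b₃ ^ 2 + b₄ ^ 2) := by
  have h := real_inner_mul_inner_self_le x (b₁ • w₁ + b₂ • w₂ + b₃ • w₃ + b₄ • w₄)
  simp only [inner_add_left, inner_add_right, inner_smul_left, inner_smul_right, hx, e₁, e₂, e₃,
    e₄, real_inner_comm w₁ w₂, real_inner_comm w₁ w₃, real_inner_comm w₁ w₄,
    real_inner_comm w₂ w₃, real_inner_comm w₂ w₄, real_inner_comm w₃ w₄] at h
  simp only [RCLike.conj_to_real, one_mul] at h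
  have q₁ := mul_le_mul_of_nonneg_left n₁ (mul_nonneg p₁ p₁)
  have q₂ := mul_le_mul_of_nonneg_left n₂ (mul_nonneg p₂ p₂)
  have q₃ := mul_le_mul_of_nonneg_left n₃ (mul_nonneg p₃ p₃)
  have q₄ := mul_le_mul_of_nonneg_left n₄ (mul_nonneg p₄ p₄)
  have r₁₂ := mul_le_mul_of_nonneg_left h₁₂ (mul_nonneg p₁ p₂)
  have r₁₃ := mul_le_mul_of_nonneg_left h₁₃ (mul_nonneg p₁ p₃)
  have r₁₄ := mul_le_mul_of_nonneg_left h₁₄ (mul_nonneg p₁ p₄)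
  have r₂₃ := mul_le_mul_of_nonneg_left h₂₃ (mul_nonneg p₂ p₃)
  have r₂₄ := mul_le_mul_of_nonneg_left h₂₄ (mul_nonneg p₂ p₄)
  have r₃₄ := mul_le_mul_of_nonneg_left h₃₄ (mul_nonneg p₃ p₄)
  linarith only [h, q₁, q₂, q₃, q₄, r₁₂, r₁₃, r₁₄, r₂₃, r₂₄, r₃₄]

/-- A vector which may enter the cap sum around `-x`: `w` is either absent (zero, contributing
`m = 0`) or a unit vector in the cap, contributing `m = mus ⟪x, w⟫`. -/
def CapPt (x w : E3) (m : ℝ) : Prop :=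
  (w = 0 ∧ m = 0) ∨ (⟪w, w⟫ = 1 ∧ ⟪x, w⟫ ≤ -(59 / 100) ∧ m = mus ⟪x, w⟫)

lemma CapPt.le_one {x w : E3} {m : ℝ} (h : CapPt x w m) : ⟪w, w⟫ ≤ 1 := by
  rcases h with ⟨rfl, -⟩ | ⟨h, -⟩
  · simp
  · exact h.le

lemma CapPt.line {x w : E3} {m : ℝ} (hx : ⟪x, x⟫ = 1) (h : CapPt x w m) :
    ∃ t : ℝ, ⟪x, w⟫ = -t ∧
      ∃ c ∈ [0, 1, 2, 3, 4], ∀ l ∈ majorants c, m ≤ ((l.1 : ℝ) + l.2 * t) / 200 := by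
  rcases h with ⟨rfl, rfl⟩ | ⟨h1, h2, h3⟩
  · exact ⟨0, by simp, 0, by simp, by simp [majorants]⟩
  · refine ⟨-⟪x, w⟫, by ring, ?_⟩
    have hb : -⟪x, w⟫ ≤ 1 := by
      have := real_inner_mul_inner_self_le x w
      rw [hx, h1] at this
      nlinarith only [this, h2]
    obtain ⟨c, hc, hl⟩ := mus_line (t := -⟪x, w⟫) (by linarith) hb
    rw [neg_neg] at hl
    exact ⟨c, hc, by rw [h3]; exact hl⟩

lemma four_cap {x w₁ w₂ w₃ w₄ : E3} {m₁ m₂ m₃ m₄ : ℝ} (hx : ⟪x, x⟫ = 1)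
    (c₁ : CapPt x w₁ m₁) (c₂ : CapPt x w₂ m₂) (c₃ : CapPt x w₃ m₃) (c₄ : CapPt x w₄ m₄)
    (h₁₂ : ⟪w₁, w₂⟫ ≤ 1 / 2) (h₁₃ : ⟪w₁, w₃⟫ ≤ 1 / 2) (h₁₄ : ⟪w₁, w₄⟫ ≤ 1 / 2)
    (h₂₃ : ⟪w₂, w₃⟫ ≤ 1 / 2) (h₂₄ : ⟪w₂, w₄⟫ ≤ 1 / 2) (h₃₄ : ⟪w₃, w₄⟫ ≤ 1 / 2) :
    m₁ + m₂ + m₃ + m₄ < 289 / 100 := by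
  obtain ⟨t₁, e₁, k₁, hk₁, f₁⟩ := c₁.line hx
  obtain ⟨t₂, e₂, k₂, hk₂, f₂⟩ := c₂.line hx
  obtain ⟨t₃, e₃, k₃, hk₃, f₃⟩ := c₃.line hx
  obtain ⟨t₄, e₄, k₄, hk₄, f₄⟩ := c₄.line hx
  obtain ⟨l₁, g₁, l₂, g₂, l₃, g₃, l₄, g₄, hlt, hsq⟩ :=
    majorants_check k₁ hk₁ k₂ hk₂ k₃ hk₃ k₄ hk₄
  have b₁ := majorants_nonneg k₁ hk₁ l₁ g₁
  have b₂ := majorants_nonneg k₂ hk₂ l₂ g₂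
  have b₃ := majorants_nonneg k₃ hk₃ l₃ g₃
  have b₄ := majorants_nonneg k₄ hk₄ l₄ g₄
  have key := four_aux (b₁ := l₁.2) (b₂ := l₂.2) (b₃ := l₃.2) (b₄ := l₄.2) hx e₁ e₂ e₃ e₄
    c₁.le_one c₂.le_one c₃.le_one c₄.le_one h₁₂ h₁₃ h₁₄ h₂₃ h₂₄ h₃₄
    (by exact_mod_cast b₁) (by exact_mod_cast b₂) (by exact_mod_cast b₃) (by exact_mod_cast b₄)
  have hlt' : (l₁.1 + l₂.1 + l₃.1 + l₄.1 : ℝ) < 578 := by exact_mod_cast hlt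
  have hsq' : ((l₁.2 + l₂.2 + l₃.2 + l₄.2) ^ 2 + (l₁.2 ^ 2 + l₂.2 ^ 2 + l₃.2 ^ 2 + l₄.2 ^ 2) : ℝ)
      < 2 * (578 - (l₁.1 + l₂.1 + l₃.1 + l₄.1)) ^ 2 := by exact_mod_cast hsq
  have hT := abs_lt_of_sq_lt_sq
    (show (l₁.2 * t₁ + l₂.2 * t₂ + l₃.2 * t₃ + l₄.2 * t₄ : ℝ) ^ 2
      < (578 - (l₁.1 + l₂.1 + l₃.1 + l₄.1)) ^ 2 by linarith) (by linarith)
  have hT' := (abs_lt.1 hT).2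
  linarith [f₁ l₁ g₁, f₂ l₂ g₂, f₃ l₃ g₃, f₄ l₄ g₄]

/-- The sum of `mus` over at most four points of the cap around `-x`. -/
lemma cap_sum_lt {ι : Type*} {J : Finset ι} {v : ι → E3} {x : E3} (hx : ⟪x, x⟫ = 1)
    (hv : ∀ i ∈ J, ⟪v i, v i⟫ = 1) (hs : ∀ i ∈ J, ∀ j ∈ J, i ≠ j → ⟪v i, v j⟫ ≤ 1 / 2)
    (hJ : ∀ i ∈ J, ⟪x, v i⟫ ≤ -(59 / 100)) (hc : J.card ≤ 4) :
    ∑ j ∈ J, mus ⟪x, v j⟫ < 289 / 100 := by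
  have z0 : CapPt x 0 0 := Or.inl ⟨rfl, rfl⟩
  have zr : ∀ w : E3, ⟪w, (0 : E3)⟫ ≤ 1 / 2 := fun w => by simp
  have cp : ∀ i ∈ J, CapPt x (v i) (mus ⟪x, v i⟫) := fun i hi => Or.inr ⟨hv i hi, hJ i hi, rfl⟩
  have hcc : J.card = 0 ∨ J.card = 1 ∨ J.card = 2 ∨ J.card = 3 ∨ J.card = 4 := by omega
  rcases hcc with h | h | h | h | h
  · rw [Finset.card_eq_zero.1 h]
    norm_num
  · obtain ⟨a, rfl⟩ := Finset.card_eq_one.1 h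
    have := four_cap hx (cp a (by simp)) z0 z0 z0 (zr _) (zr _) (zr _) (zr _) (zr _) (zr _)
    simpa using this
  · obtain ⟨a, b, hab, rfl⟩ := Finset.card_eq_two.1 h
    have := four_cap hx (cp a (by simp)) (cp b (by simp)) z0 z0 (hs a (by simp) b (by simp) hab)
      (zr _) (zr _) (zr _) (zr _) (zr _)
    rw [Finset.sum_pair hab]
    linarith
  · obtain ⟨a, b, c, hab, hac, hbc, rfl⟩ := Finset.card_eq_three.1 h
    have := four_cap hx (cp a (by simp)) (cp b (by simp)) (cp c (by simp)) z0
      (hs a (by simp) b (by simp) hab) (hs a (by simp) c (by simp) hac) (zr _)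
      (hs b (by simp) c (by simp) hbc) (zr _) (zr _)
    rw [Finset.sum_insert (by simp [hab, hac]), Finset.sum_pair hbc]
    linarith
  · obtain ⟨d, K, hdK, rfl, hK⟩ := Finset.card_eq_succ.1 h
    obtain ⟨a, b, c, hab, hac, hbc, rfl⟩ := Finset.card_eq_three.1 hK
    simp only [Finset.mem_insert, Finset.mem_singleton, not_or] at hdK
    obtain ⟨hda, hdb, hdc⟩ := hdK
    have := four_cap hx (cp a (by simp)) (cp b (by simp)) (cp c (by simp)) (cp d (by simp))
      (hs a (by simp) b (by simp) hab) (hs a (by simp) c (by simp) hac)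
      (hs a (by simp) d (by simp) (Ne.symm hda))
      (hs b (by simp) c (by simp) hbc) (hs b (by simp) d (by simp) (Ne.symm hdb))
      (hs c (by simp) d (by simp) (Ne.symm hdc))
    rw [Finset.sum_insert (by simp [hda, hdb, hdc]), Finset.sum_insert (by simp [hab, hac]),
      Finset.sum_pair hbc]
    linarith

/-- Five unit complex numbers cannot have all pairwise cosines at most `1/4`: linear programming
with the polynomial `(t - 1/4) * (t + 4/5) ^ 2`. -/
lemma planar_five {ι : Type*} {s : Finset ι} {ζ : ι → ℂ} (hn : ∀ i ∈ s, Complex.normSq (ζ i) = 1)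
    (hs : ∀ i ∈ s, ∀ j ∈ s, i ≠ j → (ζ i * (starRingEnd ℂ) (ζ j)).re ≤ 1 / 4) :
    s.card < 5 := by
  by_contra hcon
  obtain ⟨S, hS, h5⟩ := Finset.exists_subset_card_eq (not_lt.1 hcon)
  have k1 := psd_term S (fun _ => 1) ζ 1
  have k2 := psd_term S (fun _ => 1) ζ 2
  have k3 := psd_term S (fun _ => 1) ζ 3
  have e : ∀ i ∈ S, ∀ j ∈ S, 103 / 200 + 99 / 100 * (1 * 1 * ((ζ i * (starRingEnd ℂ) (ζ j)) ^ 1).re)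
      + 27 / 40 * (1 * 1 * ((ζ i * (starRingEnd ℂ) (ζ j)) ^ 2).re)
      + 1 / 4 * (1 * 1 * ((ζ i * (starRingEnd ℂ) (ζ j)) ^ 3).re)
      = ((ζ i * (starRingEnd ℂ) (ζ j)).re - 1 / 4) * ((ζ i * (starRingEnd ℂ) (ζ j)).re + 4 / 5) ^ 2 := by
    intro i hi j hj
    have r1 : Complex.normSq (ζ i * (starRingEnd ℂ) (ζ j)) = 1 := by
      rw [Complex.normSq_mul, Complex.normSq_conj, hn i (hS hi), hn j (hS hj), one_mul]
    have r2 := re_pow_rec (ζ i * (starRingEnd ℂ) (ζ j)) 0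
    have r3 := re_pow_rec (ζ i * (starRingEnd ℂ) (ζ j)) 1
    norm_num only [r1, pow_zero, pow_one, Complex.one_re] at r2 r3
    rw [pow_one, r3, r2]
    ring
  have tot : ∑ i ∈ S, ∑ j ∈ S, ((ζ i * (starRingEnd ℂ) (ζ j)).re - 1 / 4)
      * ((ζ i * (starRingEnd ℂ) (ζ j)).re + 4 / 5) ^ 2 ≥ 25 * (103 / 200) := by
    rw [← Finset.sum_congr rfl fun i hi => Finset.sum_congr rfl fun j hj => e i hi j hj]
    simp only [Finset.sum_add_distrib, ← Finset.mul_sum, Finset.sum_const, h5, nsmul_eq_mul]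
    simp only [← Finset.mul_sum] at k1 k2 k3
    push_cast
    linarith
  have up : ∀ i ∈ S, ∑ j ∈ S, ((ζ i * (starRingEnd ℂ) (ζ j)).re - 1 / 4)
      * ((ζ i * (starRingEnd ℂ) (ζ j)).re + 4 / 5) ^ 2 ≤ 243 / 100 := by
    intro i hi
    rw [← Finset.add_sum_erase _ _ hi]
    have d : (ζ i * (starRingEnd ℂ) (ζ i)).re = 1 := by
      rw [Complex.mul_conj, Complex.ofReal_re, hn i (hS hi)]
    have o : ∑ j ∈ S.erase i, ((ζ i * (starRingEnd ℂ) (ζ j)).re - 1 / 4)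
      * ((ζ i * (starRingEnd ℂ) (ζ j)).re + 4 / 5) ^ 2 ≤ 0 := by
      refine Finset.sum_nonpos fun j hj => ?_
      have := hs i (hS hi) j (hS (Finset.mem_of_mem_erase hj)) (Finset.ne_of_mem_erase hj).symm
      exact mul_nonpos_of_nonpos_of_nonneg (by linarith) (sq_nonneg _)
    rw [d]
    linarith
  have up' := Finset.sum_le_sum up
  rw [Finset.sum_const, h5, nsmul_eq_mul] at up'
  push_cast at up'
  linarith

lemma cap_cos_aux {a b : ℝ} (ha : 59 / 100 ≤ a) (hb : 59 / 100 ≤ b) (hab : a * b ≤ 1 / 2) :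
    (4 * (1 / 2 - a * b)) ^ 2 ≤ (1 - a ^ 2) * (1 - b ^ 2) := by
  have h1 : a ^ 2 + b ^ 2 ≤ (100 / 59 * (a * b)) ^ 2 + (59 / 100) ^ 2 := by
    have h2 : 0 ≤ (a ^ 2 - (59 / 100) ^ 2) * (b ^ 2 - (59 / 100) ^ 2) :=
      mul_nonneg (by nlinarith) (by nlinarith)
    nlinarith
  have h3 : (59 / 100) ^ 2 ≤ a * b := by nlinarith
  nlinarith [mul_nonneg (sub_nonneg.2 h3) (sub_nonneg.2 hab)]

lemma cap_card {ι : Type*} {J : Finset ι} {v : ι → E3} {x : E3} (hx : ⟪x, x⟫ = 1)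
    (hv : ∀ i ∈ J, ⟪v i, v i⟫ = 1) (hs : ∀ i ∈ J, ∀ j ∈ J, i ≠ j → ⟪v i, v j⟫ ≤ 1 / 2)
    (hJ : ∀ i ∈ J, ⟪x, v i⟫ ≤ -(59 / 100)) : J.card ≤ 4 := by
  by_contra hcon
  have h1 : 1 < J.card := by omega
  have hlt : ∀ i ∈ J, 0 < 1 - ⟪x, v i⟫ ^ 2 := by
    intro i hi
    obtain ⟨j, hj, hji⟩ := Finset.exists_mem_ne h1 i
    have hd := det3_sq x (v i) (v j)
    have h0 := sq_nonneg (det3 x (v i) (v j))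
    rw [hd, hx, hv i hi, hv j hj] at h0
    have hij := hs i hi j hj hji.symm
    have hi' := hJ i hi
    have hj' := hJ j hj
    have hle : ⟪x, v i⟫ ^ 2 ≤ 1 := by
      have := real_inner_mul_inner_self_le x (v i)
      rw [hx, hv i hi] at this
      nlinarith only [this]
    rcases lt_or_eq_of_le hle with h | h
    · linarith
    · exfalso
      have he : ⟪x, v i⟫ = -1 := by nlinarith only [h, hi']
      rw [he] at h0
      nlinarith only [h0, hij, hj']
  obtain ⟨o, ho⟩ : J.Nonempty := Finset.card_pos.1 (by omega)
  -- the direction of the projection of `v o` to the plane orthogonal to `x` is the real axis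
  set u : E3 := v o - ⟪x, v o⟫ • x with hu
  have hxu : ⟪x, u⟫ = 0 := by
    rw [hu, inner_sub_right, inner_smul_right, hx]; ring
  have huu : ⟪u, u⟫ = 1 - ⟪x, v o⟫ ^ 2 := by
    have : ⟪u, u⟫ = ⟪u, v o⟫ - ⟪x, v o⟫ * ⟪x, u⟫ := by
      conv_lhs => rw [hu, inner_sub_right, inner_smul_right, ← hu]
      rw [real_inner_comm x u]
    rw [this, hxu, hu, inner_sub_left, inner_smul_left, hv o ho]
    simp only [RCLike.conj_to_real]
    ring
  have hpos : 0 < ⟪u, u⟫ := by rw [huu]; exact hlt o ho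
  have key : ∀ i j, ⟪u, v i⟫ * ⟪u, v j⟫ + det3 x u (v i) * det3 x u (v j)
      = ⟪u, u⟫ * (⟪v i, v j⟫ - ⟪x, v i⟫ * ⟪x, v j⟫) := by
    intro i j
    rw [det3_mul, hx, hxu, real_inner_comm x u, hxu, real_inner_comm u (v i),
      real_inner_comm x (v i)]
    ring
  set r : ι → ℝ := fun i => √(⟪u, u⟫ * (1 - ⟪x, v i⟫ ^ 2)) with hr
  have hrp : ∀ i ∈ J, 0 < r i := fun i hi => Real.sqrt_pos.2 (mul_pos hpos (hlt i hi))
  have hrs : ∀ i ∈ J, r i ^ 2 = ⟪u, u⟫ * (1 - ⟪x, v i⟫ ^ 2) := fun i hi =>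
    Real.sq_sqrt (mul_pos hpos (hlt i hi)).le
  set ζ : ι → ℂ := fun i => ⟨⟪u, v i⟫ / r i, det3 x u (v i) / r i⟩ with hζ
  have hre : ∀ i ∈ J, ∀ j ∈ J, (ζ i * (starRingEnd ℂ) (ζ j)).re * (r i * r j)
      = ⟪u, u⟫ * (⟪v i, v j⟫ - ⟪x, v i⟫ * ⟪x, v j⟫) := by
    intro i hi j hj
    rw [← key i j]
    have hi' := (hrp i hi).ne'
    have hj' := (hrp j hj).ne'
    simp only [hζ, Complex.mul_re, Complex.conj_re, Complex.conj_im]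
    field_simp
    ring
  refine hcon (Nat.lt_succ_iff.1 (planar_five (ζ := ζ) ?_ ?_))
  · intro i hi
    have h := hre i hi i hi
    rw [Complex.mul_conj, Complex.ofReal_re, hv i hi, ← sq, ← sq, hrs i hi] at h
    exact mul_right_cancel₀ (mul_pos hpos (hlt i hi)).ne' (by rw [h, one_mul])
  · intro i hi j hj hij
    have h := hre i hi j hj
    have hp := mul_pos (hrp i hi) (hrp j hj)
    have hij' := hs i hi j hj hij
    refine le_of_mul_le_mul_right ?_ hp
    rw [h]
    rcases le_or_gt (⟪x, v i⟫ * ⟪x, v j⟫) (1 / 2) with hab | hab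
    · have hc := cap_cos_aux (a := -⟪x, v i⟫) (b := -⟪x, v j⟫) (by linarith [hJ i hi])
        (by linarith [hJ j hj]) (by linarith)
      have hc2 : (⟪u, u⟫ * (4 * (1 / 2 - ⟪x, v i⟫ * ⟪x, v j⟫))) ^ 2 ≤ (r i * r j) ^ 2 := by
        rw [mul_pow (r i), hrs i hi, hrs j hj]
        nlinarith only [mul_le_mul_of_nonneg_left hc (sq_nonneg ⟪u, u⟫)]
      have hc3 := abs_le_of_sq_le_sq hc2 hp.le
      nlinarith only [(abs_le.1 hc3).2, mul_le_mul_of_nonneg_left hij' hpos.le]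
    · nlinarith only [mul_le_mul_of_nonneg_left hij' hpos.le, hp,
        mul_le_mul_of_nonneg_left hab.le hpos.le]

/-- The kissing number of the sphere: at most twelve unit vectors have pairwise inner products at
most `1/2`. -/
theorem kissing {ι : Type*} {s : Finset ι} {v : ι → E3} (hv : ∀ i ∈ s, ⟪v i, v i⟫ = 1)
    (hs : ∀ i ∈ s, ∀ j ∈ s, i ≠ j → ⟪v i, v j⟫ ≤ 1 / 2) : s.card ≤ 12 := by
  rcases s.eq_empty_or_nonempty with rfl | hne
  · simp
  have hrow : ∀ i ∈ s, ∑ j ∈ s, mus ⟪v i, v j⟫ < 13 := by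
    intro i hi
    rw [← Finset.add_sum_erase _ _ hi, hv i hi, mus_one,
      ← Finset.sum_filter_add_sum_filter_not (s.erase i) (fun j => ⟪v i, v j⟫ ≤ -(59 / 100))]
    set J := (s.erase i).filter (fun j => ⟪v i, v j⟫ ≤ -(59 / 100)) with hJ
    have hJs : ∀ j ∈ J, j ∈ s := fun j hj =>
      Finset.mem_of_mem_erase (Finset.mem_of_mem_filter j hj)
    have a1 : ∀ j ∈ J, ⟪v j, v j⟫ = 1 := fun j hj => hv j (hJs j hj)
    have a2 : ∀ j ∈ J, ∀ k ∈ J, j ≠ k → ⟪v j, v k⟫ ≤ 1 / 2 := fun j hj k hk =>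
      hs j (hJs j hj) k (hJs k hk)
    have a3 : ∀ j ∈ J, ⟪v i, v j⟫ ≤ -(59 / 100) := fun j hj => (Finset.mem_filter.1 hj).2
    have c := cap_sum_lt (hv i hi) a1 a2 a3 (cap_card (hv i hi) a1 a2 a3)
    have d : ∑ j ∈ (s.erase i).filter (fun j => ¬ ⟪v i, v j⟫ ≤ -(59 / 100)), mus ⟪v i, v j⟫ ≤ 0 := by
      refine Finset.sum_nonpos fun j hj => ?_
      obtain ⟨h1, h2⟩ := Finset.mem_filter.1 hj
      have h3 := hs i hi j (Finset.mem_of_mem_erase h1) (Finset.ne_of_mem_erase h1).symm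
      have := mus_nonpos (t := -⟪v i, v j⟫) (by linarith) (by linarith)
      rwa [neg_neg] at this
    linarith
  have h := mus_sum s v hv
  have h2 := Finset.sum_lt_sum_of_nonempty hne hrow
  rw [Finset.sum_const, nsmul_eq_mul] at h2
  have h3 : (s.card : ℝ) * s.card < s.card * 13 := by nlinarith
  have h4 : s.card * s.card < s.card * 13 := by exact_mod_cast h3
  have := lt_of_mul_lt_mul_left h4 (Nat.zero_le _)
  omega

/-! ### The two model configurations -/

/-- Three unit vectors which pairwise touch. -/
structure Frame (a b c : E3) : Prop where
  aa : ⟪a, a⟫ = 1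
  bb : ⟪b, b⟫ = 1
  cc : ⟪c, c⟫ = 1
  ab : ⟪a, b⟫ = 1 / 2
  ac : ⟪a, c⟫ = 1 / 2
  bc : ⟪b, c⟫ = 1 / 2

/-- The vector whose coordinates in the basis `a, b, c` are the thirds of the integers `n`. -/
def comb (a b c : E3) (n : ℤ × ℤ × ℤ) : E3 :=
  (1 / 3 : ℝ) • ((n.1 : ℝ) • a + (n.2.1 : ℝ) • b + (n.2.2 : ℝ) • c)

/-- Eighteen times the inner product of two vectors given by their coordinates in a frame. -/
def form (n m : ℤ × ℤ × ℤ) : ℤ :=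
  2 * (n.1 * m.1 + n.2.1 * m.2.1 + n.2.2 * m.2.2) + (n.1 * m.2.1 + n.2.1 * m.1)
    + (n.1 * m.2.2 + n.2.2 * m.1) + (n.2.1 * m.2.2 + n.2.2 * m.2.1)

lemma norm_one_iff (v : E3) : ‖v‖ = 1 ↔ ⟪v, v⟫ = 1 := by
  rw [real_inner_self_eq_norm_sq]
  constructor
  · intro h; rw [h]; norm_num
  · intro h; nlinarith [norm_nonneg v]

namespace Frame

variable {a b c a' b' c' : E3}

lemma comb_ip (h : Frame a b c) (n m : ℤ × ℤ × ℤ) :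
    18 * ⟪comb a b c n, comb a b c m⟫ = form n m := by
  simp only [comb, form, inner_add_left, inner_add_right, inner_smul_left, inner_smul_right,
    RCLike.conj_to_real, h.aa, h.bb, h.cc, h.ab, h.ac, h.bc, real_inner_comm a b,
    real_inner_comm a c, real_inner_comm b c]
  push_cast
  ring

lemma det_sq (h : Frame a b c) : det3 a b c ^ 2 = 1 / 2 := by
  rw [det3_sq, h.aa, h.bb, h.cc, h.ab, h.ac, h.bc]
  norm_num

/-- The orthonormal basis obtained from a frame by orthogonalization. -/
def gs (a b c : E3) : Fin 3 → E3 :=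
  ![a, (√3)⁻¹ • ((2 : ℝ) • b - a), (√6)⁻¹ • ((3 : ℝ) • c - a - b)]

lemma orthonormal (h : Frame a b c) : Orthonormal ℝ (gs a b c) := by
  have h3 : √3 ^ 2 = 3 := Real.sq_sqrt (by norm_num)
  have h6 : √6 ^ 2 = 6 := Real.sq_sqrt (by norm_num)
  have p3 : √3 ≠ 0 := by positivity
  have p6 : √6 ≠ 0 := by positivity
  rw [orthonormal_iff_ite]
  intro i j
  have h3' : √3 * √3 = 3 := Real.mul_self_sqrt (by norm_num)
  have h6' : √6 * √6 = 6 := Real.mul_self_sqrt (by norm_num)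
  fin_cases i <;> fin_cases j <;>
    simp [gs, -inner_self_eq_norm_sq_to_K, inner_sub_left, inner_sub_right, inner_smul_left, inner_smul_right,
      h.aa, h.bb, h.cc, h.ab, h.ac, h.bc, real_inner_comm a b, real_inner_comm a c,
      real_inner_comm b c] <;>
    field_simp <;> norm_num [h3, h6]

end Frame

lemma det_mul_det3 (f : E3 →ₗ[ℝ] E3) (a b c : E3) :
    det3 (f a) (f b) (f c) = LinearMap.det f * det3 a b c := by
  have e : ∀ x y z : E3, (EuclideanSpace.basisFun (Fin 3) ℝ).toBasis.det ![x, y, z]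
      = det3 x y z := by
    intro x y z
    rw [Module.Basis.det_apply, Matrix.det_fin_three]
    simp [Module.Basis.toMatrix_apply, det3]
    ring
  rw [← e, ← e, ← Module.Basis.det_comp]
  congr 1
  funext i
  fin_cases i <;> rfl

/-- Two frames of the same orientation differ by a rotation. -/
lemma Frame.exists_rotation {a b c a' b' c' : E3} (h : Frame a b c) (h' : Frame a' b' c')
    (hs : 0 < det3 a b c * det3 a' b' c') :
    ∃ R : E3 ≃ₗᵢ[ℝ] E3, LinearMap.det (R.toLinearEquiv : E3 →ₗ[ℝ] E3) = 1 ∧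
      R a = a' ∧ R b = b' ∧ R c = c' := by
  have mkB : ∀ {x y z : E3}, Frame x y z → ∃ B : OrthonormalBasis (Fin 3) ℝ E3,
      ⇑B = Frame.gs x y z := by
    intro x y z hf
    have := hf.orthonormal
    exact ⟨OrthonormalBasis.mk this
      (this.linearIndependent.span_eq_top_of_card_eq_finrank (by simp)).ge,
      OrthonormalBasis.coe_mk _ _⟩
  obtain ⟨B, hB⟩ := mkB h
  obtain ⟨B', hB'⟩ := mkB h'
  set R : E3 ≃ₗᵢ[ℝ] E3 := B.equiv B' (Equiv.refl _) with hR
  have hRB : ∀ i, R (Frame.gs a b c i) = Frame.gs a' b' c' i := by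
    intro i
    rw [← hB, ← hB', hR, OrthonormalBasis.equiv_apply_basis]
    rfl
  have p3 : √3 ≠ 0 := by positivity
  have p6 : √6 ≠ 0 := by positivity
  have ra : R a = a' := hRB 0
  have rb : R b = b' := by
    have h1 := hRB 1
    simp only [Frame.gs, Matrix.cons_val_one, Matrix.cons_val_zero, map_smul, map_sub, ra] at h1
    have h2 := smul_right_injective E3 (inv_ne_zero p3) h1
    have h3 := sub_left_injective h2
    exact smul_right_injective E3 (two_ne_zero (α := ℝ)) h3
  have rc : R c = c' := by
    have h1 := hRB 2
    simp only [Frame.gs, Matrix.cons_val, map_smul, map_sub, ra, rb] at h1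
    have h2 := smul_right_injective E3 (inv_ne_zero p6) h1
    have h3 := sub_left_injective (sub_left_injective h2)
    exact smul_right_injective E3 (three_ne_zero (α := ℝ)) h3
  refine ⟨R, ?_, ra, rb, rc⟩
  have hd := det_mul_det3 (R.toLinearEquiv : E3 →ₗ[ℝ] E3) a b c
  have hd' : det3 a' b' c' = LinearMap.det (R.toLinearEquiv : E3 →ₗ[ℝ] E3) * det3 a b c := by
    rw [← hd, ← ra, ← rb, ← rc]
    rfl
  have s1 := h.det_sq
  have s2 := h'.det_sq
  rw [hd'] at s2 hs
  have hsq : LinearMap.det (R.toLinearEquiv : E3 →ₗ[ℝ] E3) ^ 2 = 1 := by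
    rw [mul_pow, s1] at s2
    linarith
  have hpos : 0 < LinearMap.det (R.toLinearEquiv : E3 →ₗ[ℝ] E3) := by
    by_contra hneg
    nlinarith [sq_nonneg (det3 a b c)]
  nlinarith

/-- Coordinates of the points of the cuboctahedron, in the order of `codeCo`. -/
def coordCo : List (ℤ × ℤ × ℤ) :=
  [(3, 0, 0), (0, 3, 0), (3, 0, -3), (0, 3, -3), (0, 0, 3), (3, -3, 0), (-3, 3, 0), (0, -3, 3),
    (-3, 0, 3), (0, 0, -3), (0, -3, 0), (-3, 0, 0)]

/-- Coordinates of the points of the twisted cuboctahedron, in the order of `codeTco`. -/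
def coordTco : List (ℤ × ℤ × ℤ) :=
  [(3, 0, 0), (0, 3, 0), (3, 0, -3), (0, 3, -3), (0, 0, 3), (3, -3, 0), (-3, 3, 0), (0, -3, 3),
    (-3, 0, 3), (1, -2, -2), (-2, 1, -2), (-2, -2, 1)]

/-- `Model Q a b c cs Y`: the set `Q` consists of the twelve points with coordinates `cs` in the
frame `a, b, c`, and its contact graph is `Y`. -/
structure Model (Q : Set E3) (a b c : E3) (cs : List (ℤ × ℤ × ℤ)) (Y : ℕ) : Prop where
  frame : Frame a b c
  mem : ∀ η, η ∈ Q ↔ ∃ i < 12, η = comb a b c (cs.getD i 0)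
  unit : ∀ i < 12, form (cs.getD i 0) (cs.getD i 0) = 18
  inj : ∀ i < 12, ∀ j < 12, form (cs.getD i 0) (cs.getD j 0) = 18 → i = j
  adj : ∀ i < 12, ∀ j < 12, (row Y i).testBit j = true ↔ form (cs.getD i 0) (cs.getD j 0) = 9

lemma ip_toE3 (r s : ℝ) (u v : Fin 3 → ℝ) :
    ⟪r • toE3 u, s • toE3 v⟫ = r * s * (u 0 * v 0 + u 1 * v 1 + u 2 * v 2) := by
  rw [ip_coord]
  simp [toE3]
  ring

lemma frame_fcc : Frame (fccB 0) (fccB 1) (fccB 2) := by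
  have h : (√2)⁻¹ * (√2)⁻¹ = 1 / 2 := by
    rw [← mul_inv, Real.mul_self_sqrt (by norm_num)]; norm_num
  have e0 : fccB 0 = (√2)⁻¹ • toE3 ![0, 1, 1] := rfl
  have e1 : fccB 1 = (√2)⁻¹ • toE3 ![1, 0, 1] := rfl
  have e2 : fccB 2 = (√2)⁻¹ • toE3 ![1, 1, 0] := rfl
  have e : ∀ r s t : ℝ, ![r, s, t] 2 = t := fun _ _ _ => rfl
  constructor <;> simp only [e0, e1, e2] <;> rw [ip_toE3, h] <;> simp only [e] <;> norm_num

lemma tb3_eq : tb3 = (2 / 3 : ℝ) • (fccB 2 + (fccB 2 - fccB 0) + (fccB 2 - fccB 1)) := by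
  have h : √2 * √2 = 2 := Real.mul_self_sqrt (by norm_num)
  have p2 : √2 ≠ 0 := by positivity
  ext i
  fin_cases i <;> simp [tb3, fccB, toE3] <;> field_simp <;> nlinarith

lemma frame_hcp : Frame (fccB 2) (fccB 2 - fccB 0) (fccB 2 - fccB 1) := by
  have h := frame_fcc
  constructor <;> simp only [inner_sub_left, inner_sub_right, h.aa, h.bb, h.cc, h.ab, h.ac, h.bc,
    real_inner_comm (fccB 0) (fccB 2), real_inner_comm (fccB 1) (fccB 2)] <;> norm_num

lemma Frame.norm_comb {a b c : E3} (h : Frame a b c) (n : ℤ × ℤ × ℤ) :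
    ‖comb a b c n‖ = 1 ↔ form n n = 18 := by
  rw [norm_one_iff]
  have := h.comb_ip n n
  constructor
  · intro h1; rw [h1] at this; norm_num at this; exact_mod_cast this.symm
  · intro h1; rw [h1] at this; push_cast at this; linarith

/-- An integer whose square is at most three is `-1`, `0` or `1`. -/
lemma int_small {n : ℤ} (h : n ^ 2 ≤ 3) : n ∈ [-1, 0, 1] := by
  have h1 : n < 2 := by nlinarith
  have h2 : -2 < n := by nlinarith
  simp only [List.mem_cons, List.not_mem_nil, or_false]
  omega

lemma model_co : Model Qco (fccB 0) (fccB 1) (fccB 2) coordCo codeCo := by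
  refine ⟨frame_fcc, ?_, by decide, by decide, by decide⟩
  have hc : ∀ a : Fin 3 → ℤ, ∑ i, (a i : ℝ) • fccB i
      = comb (fccB 0) (fccB 1) (fccB 2) (3 * a 0, 3 * a 1, 3 * a 2) := by
    intro a
    rw [Fin.sum_univ_three, comb]
    push_cast
    module
  intro η
  constructor
  · rintro ⟨⟨a, rfl⟩, h1⟩
    rw [hc] at h1 ⊢
    have h2 := (frame_fcc.norm_comb _).1 h1
    -- the norm condition, as a sum of three squares of integers
    have h3 : (a 0 + a 1) ^ 2 + (a 0 + a 2) ^ 2 + (a 1 + a 2) ^ 2 = 2 := by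
      simp only [form] at h2
      linarith
    have s0 : a 0 ∈ [-1, 0, 1] := int_small (by
      nlinarith [sq_nonneg (a 0 + a 1 + a 2),
        sq_nonneg (a 1), sq_nonneg (a 2), sq_nonneg (a 0 + 2 * a 1), sq_nonneg (a 0 + 2 * a 2),
        sq_nonneg (a 1 + a 2), sq_nonneg (2 * a 0 + a 1 + a 2)])
    have s1 : a 1 ∈ [-1, 0, 1] := int_small (by
      nlinarith [sq_nonneg (a 0 + a 1 + a 2),
        sq_nonneg (a 0 + a 2), sq_nonneg (2 * a 1 + a 0 + a 2)])
    have s2 : a 2 ∈ [-1, 0, 1] := int_small (by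
      nlinarith [sq_nonneg (a 0 + a 1 + a 2),
        sq_nonneg (a 0 + a 1), sq_nonneg (2 * a 2 + a 1 + a 0)])
    have key : ∀ p ∈ ([-1, 0, 1] : List ℤ), ∀ q ∈ ([-1, 0, 1] : List ℤ),
        ∀ r ∈ ([-1, 0, 1] : List ℤ), form (3 * p, 3 * q, 3 * r) (3 * p, 3 * q, 3 * r) = 18 →
        ∃ i < 12, (3 * p, 3 * q, 3 * r) = coordCo.getD i 0 := by decide
    obtain ⟨i, hi, e⟩ := key _ s0 _ s1 _ s2 h2
    exact ⟨i, hi, by rw [e]⟩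
  · rintro ⟨i, hi, rfl⟩
    refine ⟨?_, (frame_fcc.norm_comb _).2 ?_⟩
    · have key : ∀ i < 12, ∃ p ∈ ([-1, 0, 1] : List ℤ), ∃ q ∈ ([-1, 0, 1] : List ℤ),
          ∃ r ∈ ([-1, 0, 1] : List ℤ), (3 * p, 3 * q, 3 * r) = coordCo.getD i 0 := by decide
      obtain ⟨p, -, q, -, r, -, e⟩ := key i hi
      refine ⟨![p, q, r], ?_⟩
      rw [hc, ← e]
      rfl
    · have key : ∀ i < 12, form (coordCo.getD i 0) (coordCo.getD i 0) = 18 := by decide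
      exact key i hi

lemma model_tco : Model Qtco (fccB 2) (fccB 2 - fccB 0) (fccB 2 - fccB 1) coordTco codeTco := by
  refine ⟨frame_hcp, ?_, by decide, by decide, by decide⟩
  have hc : ∀ a : Fin 3 → ℤ,
      (a 0 : ℝ) • fccB 0 + (a 1 : ℝ) • fccB 1 + (a 2 : ℝ) • tb3
      = comb (fccB 2) (fccB 2 - fccB 0) (fccB 2 - fccB 1)
        (3 * a 0 + 3 * a 1 + 2 * a 2, -3 * a 0 + 2 * a 2, -3 * a 1 + 2 * a 2) := by
    intro a
    rw [tb3_eq, comb]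
    push_cast
    module
  have hc' : ∀ a : Fin 3 → ℤ,
      fccB 2 + ((a 0 : ℝ) • fccB 0 + (a 1 : ℝ) • fccB 1 + (a 2 : ℝ) • tb3)
      = comb (fccB 2) (fccB 2 - fccB 0) (fccB 2 - fccB 1)
        (3 + 3 * a 0 + 3 * a 1 + 2 * a 2, -3 * a 0 + 2 * a 2, -3 * a 1 + 2 * a 2) := by
    intro a
    rw [tb3_eq, comb]
    push_cast
    module
  intro η
  constructor
  · rintro ⟨⟨a, rfl | rfl⟩, h1⟩
    · rw [hc] at h1 ⊢
      have h2 := (frame_hcp.norm_comb _).1 h1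
      have h3 : 3 * (a 0 ^ 2 + a 0 * a 1 + a 1 ^ 2) + 8 * a 2 ^ 2 = 3 := by
        simp only [form] at h2
        linarith
      have s0 : a 0 ∈ [-1, 0, 1] := int_small (by
      nlinarith [sq_nonneg (a 0 + 2 * a 1)])
      have s1 : a 1 ∈ [-1, 0, 1] := int_small (by
      nlinarith [sq_nonneg (2 * a 0 + a 1)])
      have s2 : a 2 ∈ [-1, 0, 1] := int_small (by
        nlinarith [sq_nonneg (2 * a 0 + a 1), sq_nonneg (a 1)])
      have key : ∀ p ∈ ([-1, 0, 1] : List ℤ), ∀ q ∈ ([-1, 0, 1] : List ℤ),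
          ∀ r ∈ ([-1, 0, 1] : List ℤ),
          form (3 * p + 3 * q + 2 * r, -3 * p + 2 * r, -3 * q + 2 * r)
            (3 * p + 3 * q + 2 * r, -3 * p + 2 * r, -3 * q + 2 * r) = 18 →
          ∃ i < 12, (3 * p + 3 * q + 2 * r, -3 * p + 2 * r, -3 * q + 2 * r)
            = coordTco.getD i 0 := by decide
      obtain ⟨i, hi, e⟩ := key _ s0 _ s1 _ s2 h2
      exact ⟨i, hi, by rw [e]⟩
    · rw [hc'] at h1 ⊢
      have h2 := (frame_hcp.norm_comb _).1 h1
      have h3 : 3 * (a 0 ^ 2 + a 0 * a 1 + a 1 ^ 2 + a 0 + a 1) + 8 * (a 2 * (a 2 + 1)) = 0 := by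
        simp only [form] at h2
        linarith
      have h4 : 0 ≤ a 2 * (a 2 + 1) := by
        rcases le_or_gt 0 (a 2) with h | h <;> nlinarith
      have s0 : a 0 ∈ [-1, 0, 1] := int_small (by
        nlinarith [sq_nonneg (a 0 + 2 * a 1 + 1), sq_nonneg (a 0 + 1)])
      have s1 : a 1 ∈ [-1, 0, 1] := int_small (by
        nlinarith [sq_nonneg (2 * a 0 + a 1 + 1), sq_nonneg (a 1 + 1)])
      have s2 : a 2 ∈ [-1, 0, 1] := int_small (by
        nlinarith [sq_nonneg (2 * a 0 + a 1 + 1), sq_nonneg (3 * a 1 + 1), sq_nonneg (a 2 + 1)])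
      have key : ∀ p ∈ ([-1, 0, 1] : List ℤ), ∀ q ∈ ([-1, 0, 1] : List ℤ),
          ∀ r ∈ ([-1, 0, 1] : List ℤ),
          form (3 + 3 * p + 3 * q + 2 * r, -3 * p + 2 * r, -3 * q + 2 * r)
            (3 + 3 * p + 3 * q + 2 * r, -3 * p + 2 * r, -3 * q + 2 * r) = 18 →
          ∃ i < 12, (3 + 3 * p + 3 * q + 2 * r, -3 * p + 2 * r, -3 * q + 2 * r)
            = coordTco.getD i 0 := by decide
      obtain ⟨i, hi, e⟩ := key _ s0 _ s1 _ s2 h2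
      exact ⟨i, hi, by rw [e]⟩
  · rintro ⟨i, hi, rfl⟩
    refine ⟨?_, (frame_hcp.norm_comb _).2 ?_⟩
    · have key : ∀ i < 12, ∃ p ∈ ([-1, 0, 1] : List ℤ), ∃ q ∈ ([-1, 0, 1] : List ℤ),
          ∃ r ∈ ([-1, 0, 1] : List ℤ),
          (3 * p + 3 * q + 2 * r, -3 * p + 2 * r, -3 * q + 2 * r) = coordTco.getD i 0 ∨
          (3 + 3 * p + 3 * q + 2 * r, -3 * p + 2 * r, -3 * q + 2 * r) = coordTco.getD i 0 := by
        decide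
      obtain ⟨p, -, q, -, r, -, e | e⟩ := key i hi
      · refine ⟨![p, q, r], Or.inl ?_⟩
        rw [hc, ← e]
        rfl
      · refine ⟨![p, q, r], Or.inr ?_⟩
        rw [hc', ← e]
        rfl
    · have key : ∀ i < 12, form (coordTco.getD i 0) (coordTco.getD i 0) = 18 := by decide
      exact key i hi

/-! ### Twelve points with forty-eight contacts -/

section Core

variable {P : Set E3} {A : E3 → E3 → Prop}

/-- Relabelling a coded graph by an involutive automorphism of the code. -/
lemma Codes.perm {f : ℕ → E3} {Y : ℕ} (hc : Codes A f 12 Y) (p : ℕ → ℕ)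
    (hp : ∀ i < 12, p i < 12) (hpp : ∀ i < 12, p (p i) = i)
    (ha : ∀ i < 12, ∀ j < 12, (row Y (p i)).testBit (p j) = (row Y i).testBit j) :
    Codes A (f ∘ p) 12 Y := by
  constructor
  · intro i hi j hj e
    have := hc.inj (p i) (hp i hi) (p j) (hp j hj) e
    rw [← hpp i hi, this, hpp j hj]
  · intro i j
    constructor
    · intro hij
      obtain ⟨hi, hj, -⟩ := (hc.adj i j).1 hij
      rw [← ha i hi j hj] at hij
      exact ⟨hi, hj, ((hc.adj _ _).1 hij).2.2⟩
    · rintro ⟨hi, hj, hA⟩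
      rw [← ha i hi j hj]
      exact (hc.adj _ _).2 ⟨hp i hi, hp j hj, hA⟩

lemma image_perm {f : ℕ → E3} (p : ℕ → ℕ) (hp : ∀ i < 12, p i < 12)
    (hpp : ∀ i < 12, p (p i) = i) :
    (Finset.range 12).image (f ∘ p) = (Finset.range 12).image f := by
  ext v
  simp only [Finset.mem_image, Finset.mem_range, Function.comp]
  constructor
  · rintro ⟨i, hi, rfl⟩
    exact ⟨p i, hp i hi, rfl⟩
  · rintro ⟨i, hi, rfl⟩
    exact ⟨p i, hp i hi, by rw [hpp i hi]⟩

/-- The contact graph determines the vectors `f i` in terms of the frame `f 0, f 1, f 4`, with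
coordinates `cs`. -/
structure Rigid (f : ℕ → E3) (cs : List (ℤ × ℤ × ℤ)) : Prop where
  frame : Frame (f 0) (f 1) (f 4)
  pt : ∀ i < 12, f i = comb (f 0) (f 1) (f 4) (cs.getD i 0)

lemma Cfg.frame (h : Cfg P A) {a b c : E3} (hab : A a b) (hac : A a c) (hbc : A b c) :
    Frame a b c := by
  have t := h.tch _ _ hab
  have t' := h.tch _ _ hac
  have t'' := h.tch _ _ hbc
  exact ⟨h.unit _ t.1, h.unit _ t.2.1, h.unit _ t'.2.1, t.2.2, t'.2.2, t''.2.2⟩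

lemma Cfg.rigid_co (h : Cfg P A) {f : ℕ → E3} (hc : Codes A f 12 codeCo) :
    Rigid f coordCo := by
  have E : ∀ i j, (row codeCo i).testBit j = true → A (f i) (f j) := fun i j hij =>
    ((hc.adj i j).1 hij).2.2
  refine ⟨h.frame (E 0 1 (by decide)) (E 0 4 (by decide)) (E 1 4 (by decide)), ?_⟩
  obtain ⟨h2, h3, h5, h6, h7, h8, h9, h10, h11⟩ := h.points_co hc
  intro i hi
  interval_cases i <;> simp only [h2, h3, h5, h6, h7, h8, h9, h10, h11, coordCo, comb,
    List.getD_cons_zero, List.getD_cons_succ] <;> push_cast <;> module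

lemma Cfg.rigid_tco (h : Cfg P A) {f : ℕ → E3} (hc : Codes A f 12 codeTco) :
    Rigid f coordTco := by
  have E : ∀ i j, (row codeTco i).testBit j = true → A (f i) (f j) := fun i j hij =>
    ((hc.adj i j).1 hij).2.2
  refine ⟨h.frame (E 0 1 (by decide)) (E 0 4 (by decide)) (E 1 4 (by decide)), ?_⟩
  obtain ⟨h2, h3, h5, h6, h7, h8, h9, h10, h11⟩ := h.points_tco hc
  intro i hi
  interval_cases i <;> (try simp only [h9, h10, h11]) <;> simp only [h2, h3, h5, h6, h7, h8,
    coordTco, comb, List.getD_cons_zero, List.getD_cons_succ] <;> push_cast <;> module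

lemma map_comb (R : E3 ≃ₗᵢ[ℝ] E3) (a b c : E3) (n : ℤ × ℤ × ℤ) :
    R (comb a b c n) = comb (R a) (R b) (R c) n := by
  simp only [comb, map_smul, map_add]

/-- `Placed Q A T`: a rotation carries the set `Q` to `T`, and pairs of points at distance one to
pairs in contact. -/
def Placed (Q : Set E3) (A : E3 → E3 → Prop) (T : Finset E3) : Prop :=
  ∃ R : E3 ≃ₗᵢ[ℝ] E3, LinearMap.det (R.toLinearEquiv : E3 →ₗ[ℝ] E3) = 1 ∧
    Set.BijOn R Q T ∧ ∀ η ∈ Q, ∀ η' ∈ Q, (A (R η) (R η') ↔ ‖η - η'‖ = 1)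

lemma norm_sub_one_iff {u v : E3} (hu : ⟪u, u⟫ = 1) (hv : ⟪v, v⟫ = 1) :
    ‖u - v‖ = 1 ↔ ⟪u, v⟫ = 1 / 2 := by
  rw [norm_one_iff, inner_sub_left, inner_sub_right, inner_sub_right, real_inner_comm u v, hu, hv]
  constructor <;> intro h <;> linarith

/-- A configuration with the contact graph and the coordinates of a model, in a frame of the same
orientation, is a rotated copy of the model. -/
lemma Model.placed {Q : Set E3} {a b c : E3} {cs : List (ℤ × ℤ × ℤ)} {Y : ℕ}
    (m : Model Q a b c cs Y) {f : ℕ → E3} (hc : Codes A f 12 Y) (hr : Rigid f cs)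
    (hs : 0 < det3 a b c * det3 (f 0) (f 1) (f 4)) :
    Placed Q A ((Finset.range 12).image f) := by
  obtain ⟨R, hdet, ra, rb, rc⟩ := m.frame.exists_rotation hr.frame hs
  have hR : ∀ i < 12, R (comb a b c (cs.getD i 0)) = f i := by
    intro i hi
    rw [map_comb, ra, rb, rc, ← hr.pt i hi]
  have hu : ∀ i < 12, ⟪comb a b c (cs.getD i 0), comb a b c (cs.getD i 0)⟫ = 1 := by
    intro i hi
    have := m.frame.comb_ip (cs.getD i 0) (cs.getD i 0)
    rw [m.unit i hi] at this
    push_cast at this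
    linarith
  refine ⟨R, hdet, ⟨?_, R.injective.injOn, ?_⟩, ?_⟩
  · intro η hη
    obtain ⟨i, hi, rfl⟩ := (m.mem η).1 hη
    rw [hR i hi]
    exact Finset.mem_coe.2 (Finset.mem_image_of_mem f (Finset.mem_range.2 hi))
  · intro v hv
    obtain ⟨i, hi, rfl⟩ := Finset.mem_image.1 (Finset.mem_coe.1 hv)
    rw [Finset.mem_range] at hi
    exact ⟨_, (m.mem _).2 ⟨i, hi, rfl⟩, hR i hi⟩
  · intro η hη η' hη'
    obtain ⟨i, hi, rfl⟩ := (m.mem η).1 hη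
    obtain ⟨j, hj, rfl⟩ := (m.mem η').1 hη'
    rw [hR i hi, hR j hj, norm_sub_one_iff (hu i hi) (hu j hj)]
    have h1 : A (f i) (f j) ↔ (row Y i).testBit j = true := by
      rw [hc.adj]
      exact ⟨fun h => ⟨hi, hj, h⟩, fun h => h.2.2⟩
    rw [h1, m.adj i hi j hj]
    have h2 := m.frame.comb_ip (cs.getD i 0) (cs.getD j 0)
    constructor
    · intro h
      rw [h] at h2
      push_cast at h2
      linarith
    · intro h
      rw [h] at h2
      norm_num at h2
      exact_mod_cast h2.symm

/-- A graph automorphism of the cuboctahedron which swaps vertices `0` and `1` and fixes `4`. -/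
def flipCo (i : ℕ) : ℕ := [1, 0, 3, 2, 4, 6, 5, 8, 7, 9, 11, 10].getD i 0

/-- A graph automorphism of the twisted cuboctahedron which fixes vertex `0` and swaps `1`
and `4`. -/
def flipTco (i : ℕ) : ℕ := [0, 4, 5, 7, 1, 2, 8, 3, 6, 9, 11, 10].getD i 0

lemma Cfg.placed_co (h : Cfg P A) {f : ℕ → E3} (hc : Codes A f 12 codeCo) :
    Placed Qco A ((Finset.range 12).image f) := by
  have hp : ∀ i < 12, flipCo i < 12 := by decide
  have hpp : ∀ i < 12, flipCo (flipCo i) = i := by decide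
  have hc' := hc.perm flipCo hp hpp (by decide)
  have hr := h.rigid_co hc
  have d1 := model_co.frame.det_sq
  have d2 := hr.frame.det_sq
  rcases lt_trichotomy 0 (det3 (fccB 0) (fccB 1) (fccB 2) * det3 (f 0) (f 1) (f 4)) with hs | hs | hs
  · exact model_co.placed hc hr hs
  · have : (det3 (fccB 0) (fccB 1) (fccB 2) * det3 (f 0) (f 1) (f 4)) ^ 2 = 0 := by
      rw [← hs]; norm_num
    rw [mul_pow, d1, d2] at this
    norm_num at this
  · rw [← image_perm flipCo hp hpp]
    refine model_co.placed hc' (h.rigid_co hc') ?_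
    have e : det3 ((f ∘ flipCo) 0) ((f ∘ flipCo) 1) ((f ∘ flipCo) 4)
        = - det3 (f 0) (f 1) (f 4) := by
      change det3 (f 1) (f 0) (f 4) = _
      simp only [det3]
      ring
    rw [e]
    linarith

lemma Cfg.placed_tco (h : Cfg P A) {f : ℕ → E3} (hc : Codes A f 12 codeTco) :
    Placed Qtco A ((Finset.range 12).image f) := by
  have hp : ∀ i < 12, flipTco i < 12 := by decide
  have hpp : ∀ i < 12, flipTco (flipTco i) = i := by decide
  have hc' := hc.perm flipTco hp hpp (by decide)
  have hr := h.rigid_tco hc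
  have d1 := model_tco.frame.det_sq
  have d2 := hr.frame.det_sq
  rcases lt_trichotomy 0 (det3 (fccB 2) (fccB 2 - fccB 0) (fccB 2 - fccB 1)
    * det3 (f 0) (f 1) (f 4)) with hs | hs | hs
  · exact model_tco.placed hc hr hs
  · have : (det3 (fccB 2) (fccB 2 - fccB 0) (fccB 2 - fccB 1)
        * det3 (f 0) (f 1) (f 4)) ^ 2 = 0 := by
      rw [← hs]; norm_num
    rw [mul_pow, d1, d2] at this
    norm_num at this
  · rw [← image_perm flipTco hp hpp]
    refine model_tco.placed hc' (h.rigid_tco hc') ?_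
    have e : det3 ((f ∘ flipTco) 0) ((f ∘ flipTco) 1) ((f ∘ flipTco) 4)
        = - det3 (f 0) (f 1) (f 4) := by
      change det3 (f 0) (f 4) (f 1) = _
      simp only [det3]
      ring
    rw [e]
    linarith

lemma exists_of_mem_image {V : Type} {f : ℕ → V} {v : V} (hv : v ∈ (Finset.range 12).image f) :
    ∃ i < 12, f i = v := by
  simpa using hv

/-- Twelve points with forty-eight ordered contacts form, up to a rotation, one of the two
models; in particular they all belong to the configuration. -/
theorem Cfg.core (h : Cfg P A) {T : Finset E3} (hT : T.card = 12) (hE : dbl A T = 48) :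
    (∀ v ∈ T, v ∈ P) ∧ ∃ Q ∈ ({Qco, Qtco} : Set (Set E3)), Placed Q A T := by
  obtain ⟨f, hf, hfT⟩ := classify h.free hT hE
  clear hE hT
  subst hfT
  rcases hf with hc | hc
  · refine ⟨?_, Qco, by simp, by convert h.placed_co hc⟩
    intro v hv
    obtain ⟨i, hi, rfl⟩ := exists_of_mem_image hv
    have key : ∀ i < 12, ∃ j < 12, (row codeCo i).testBit j = true := by decide
    obtain ⟨j, -, hj⟩ := key i hi
    exact (h.tch _ _ ((hc.adj i j).1 hj).2.2).1
  · refine ⟨?_, Qtco, by simp, by convert h.placed_tco hc⟩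
    intro v hv
    obtain ⟨i, hi, rfl⟩ := exists_of_mem_image hv
    have key : ∀ i < 12, ∃ j < 12, (row codeTco i).testBit j = true := by decide
    obtain ⟨j, -, hj⟩ := key i hi
    exact (h.tch _ _ ((hc.adj i j).1 hj).2.2).1

end Core

/-! ### Exact configurations indexed by labels -/

/-- `Good C ε v`: up to an error `ε`, the vectors `v i` are a rotated copy of one of the two
models, with contacts `C`. -/
def Good {n : ℕ} (C : Fin n → Fin n → Prop) (ε : ℝ) (v : Fin n → E3) : Prop :=
  n = 12 ∧ ∃ Q ∈ ({Qco, Qtco} : Set (Set E3)), ∃ R : E3 ≃ₗᵢ[ℝ] E3, ∃ g : E3 → Fin n,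
    LinearMap.det (R.toLinearEquiv : E3 →ₗ[ℝ] E3) = 1 ∧ Set.BijOn g Q Set.univ ∧
    (∀ η ∈ Q, ∀ η' ∈ Q, (C (g η) (g η') ↔ ‖η - η'‖ = 1)) ∧ ∀ η ∈ Q, ‖R η - v (g η)‖ ≤ ε

lemma dbl_eq {A : E3 → E3 → Prop} {T : Finset E3} (h : ∀ a b, A a b → a ∈ T ∧ b ∈ T) :
    dbl A T = {q : E3 × E3 | A q.1 q.2}.ncard := by
  have : {q : E3 × E3 | A q.1 q.2} = ((T ×ˢ T).filter fun q => A q.1 q.2 : Finset _) := by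
    ext q
    simp only [Set.mem_ofPred_eq, Finset.coe_filter, Finset.mem_product]
    exact ⟨fun hq => ⟨h _ _ hq, hq⟩, fun hq => hq.2⟩
  rw [this, Set.ncard_coe_finset, Finset.card_filter, Finset.sum_product, dbl]
  refine Finset.sum_congr rfl fun u _ => ?_
  rw [dg, Finset.card_filter]

/-- At most twelve unit vectors with forty-eight ordered contacts form one of the two models.
Fewer than twelve vectors may be completed arbitrarily to twelve points, each of which must then
have a contact. -/
theorem exact_good {n : ℕ} (hn : n ≤ 12) {C : Fin n → Fin n → Prop} {p : Fin n → E3}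
    (hsymm : ∀ i j, C i j → C j i) (hC : {q : Fin n × Fin n | C q.1 q.2}.ncard = 48)
    (hu : ∀ i, ⟪p i, p i⟫ = 1) (hs : ∀ i j, i ≠ j → ⟪p i, p j⟫ ≤ 1 / 2)
    (ht : ∀ i j, C i j → ⟪p i, p j⟫ = 1 / 2) : Good C 0 p := by
  have hinj : Function.Injective p := by
    intro i j e
    by_contra hij
    have := hs i j hij
    rw [← e, hu i] at this
    norm_num at this
  set A : E3 → E3 → Prop := fun a b => ∃ i j, C i j ∧ p i = a ∧ p j = b with hA
  have hAp : ∀ i j, A (p i) (p j) ↔ C i j := by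
    intro i j
    constructor
    · rintro ⟨i', j', hc, e, e'⟩
      rwa [← hinj e, ← hinj e']
    · intro hc
      exact ⟨i, j, hc, rfl, rfl⟩
  have cfg : Cfg (Set.range p) A := by
    constructor
    · rintro _ ⟨i, rfl⟩
      exact hu i
    · rintro _ ⟨i, rfl⟩ _ ⟨j, rfl⟩ hij
      exact hs i j fun e => hij (by rw [e])
    · rintro _ _ ⟨i, j, hc, rfl, rfl⟩
      exact ⟨⟨i, rfl⟩, ⟨j, rfl⟩, ht i j hc⟩
    · rintro _ _ ⟨i, j, hc, rfl, rfl⟩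
      exact ⟨j, i, hsymm i j hc, rfl, rfl⟩
  have hcard : (Finset.univ.image p).card = n := by
    rw [Finset.card_image_of_injective _ hinj, Finset.card_univ, Fintype.card_fin]
  obtain ⟨T, hST, hT⟩ := Infinite.exists_superset_card_eq (Finset.univ.image p) 12 (by omega)
  have hpT : ∀ i, p i ∈ T := fun i => hST (Finset.mem_image_of_mem p (Finset.mem_univ i))
  have hE : dbl A T = 48 := by
    rw [dbl_eq, ← hC, ← Set.ncard_image_of_injective _ (hinj.prodMap hinj)]
    · congr 1
      ext ⟨a, b⟩
      simp only [Set.mem_ofPred_eq, Set.mem_image, Prod.exists, Prod.map, Prod.mk.injEq, hA]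
    · rintro _ _ ⟨i, j, -, rfl, rfl⟩
      exact ⟨hpT i, hpT j⟩
  obtain ⟨hTP, Q, hQ, R, hdet, hbij, hadj⟩ := cfg.core hT hE
  have hnn : n = 12 := by
    refine le_antisymm hn ?_
    rw [← hT, ← hcard]
    refine Finset.card_le_card fun v hv => ?_
    obtain ⟨i, rfl⟩ := hTP v hv
    exact Finset.mem_image_of_mem p (Finset.mem_univ i)
  have hg : ∀ η, ∃ i, η ∈ Q → p i = R η := by
    intro η
    by_cases hη : η ∈ Q
    · obtain ⟨i, hi⟩ := hTP _ (hbij.mapsTo hη)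
      exact ⟨i, fun _ => hi⟩
    · exact ⟨⟨0, by omega⟩, fun h => absurd h hη⟩
  choose g hg using hg
  refine ⟨hnn, Q, hQ, R, g, hdet, ⟨fun _ _ => Set.mem_univ _, ?_, ?_⟩, ?_, ?_⟩
  · intro η hη η' hη' e
    refine hbij.injOn hη hη' ?_
    rw [← hg η hη, ← hg η' hη', e]
  · intro i _
    obtain ⟨η, hη, e⟩ := hbij.surjOn (hpT i)
    exact ⟨η, hη, hinj ((hg η hη).trans e)⟩
  · intro η hη η' hη'
    rw [← hadj η hη η' hη', ← hg η hη, ← hg η' hη', hAp]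
  · intro η hη
    rw [hg η hη, sub_self, norm_zero]

/-! ### Compactness -/

open Filter Topology in
/-- A property that holds near every exact configuration with contacts `C` holds for all nearly
exact ones. -/
theorem eventually_of_exact {n : ℕ} (C : Fin n → Fin n → Prop) (G : (Fin n → E3) → Prop)
    (hG : ∀ p : Fin n → E3, (∀ i, ‖p i‖ = 1) → (∀ i j, i ≠ j → 1 ≤ ‖p i - p j‖) →
      (∀ i j, C i j → ‖p i - p j‖ = 1) → ∀ᶠ v in 𝓝 p, G v) :
    ∀ᶠ α in 𝓝[>] (0 : ℝ), ∀ v : Fin n → E3, (∀ i, |‖v i‖ - 1| ≤ α) →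
      (∀ i j, i ≠ j → 1 - α < ‖v i - v j‖) → (∀ i j, C i j → |‖v i - v j‖ - 1| ≤ α) → G v := by
  by_contra hcon
  rw [Filter.not_eventually] at hcon
  have hlt : ∀ᶠ α in 𝓝[>] (0 : ℝ), α < 1 :=
    mem_nhdsWithin_of_mem_nhds (Iio_mem_nhds one_pos)
  obtain ⟨a, ha, hbad⟩ := Filter.exists_seq_forall_of_frequently (hcon.and_eventually hlt)
  have ha0 : Tendsto a atTop (𝓝 0) := ha.mono_right nhdsWithin_le_nhds
  have hbad' : ∀ k, ∃ v : Fin n → E3, (∀ i, |‖v i‖ - 1| ≤ a k) ∧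
      (∀ i j, i ≠ j → 1 - a k < ‖v i - v j‖) ∧ (∀ i j, C i j → |‖v i - v j‖ - 1| ≤ a k) ∧
      ¬ G v := by
    intro k
    have := (hbad k).1
    push Not at this
    exact this
  choose v hv1 hv2 hv3 hv4 using hbad'
  have hK : IsCompact (Set.pi Set.univ fun _ : Fin n => Metric.closedBall (0 : E3) 2) :=
    isCompact_univ_pi fun _ => isCompact_closedBall _ _
  have hvK : ∀ k, v k ∈ Set.pi Set.univ fun _ : Fin n => Metric.closedBall (0 : E3) 2 := by
    intro k i _
    rw [mem_closedBall_zero_iff]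
    have h1 := abs_le.1 (hv1 k i)
    linarith [(hbad k).2]
  obtain ⟨p, -, φ, hφ, hlim⟩ := hK.tendsto_subseq hvK
  have hpt : ∀ i, Tendsto (fun k => v (φ k) i) atTop (𝓝 (p i)) := fun i =>
    (tendsto_pi_nhds.1 hlim) i
  have haφ : Tendsto (fun k => a (φ k)) atTop (𝓝 0) := ha0.comp hφ.tendsto_atTop
  have zero_of : ∀ {u : ℕ → ℝ} {l : ℝ}, Tendsto u atTop (𝓝 l) →
      (∀ k, |u k - 1| ≤ a (φ k)) → l = 1 := by
    intro u l hul hb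
    have h1 : Tendsto (fun k => |u k - 1|) atTop (𝓝 |l - 1|) := (hul.sub_const 1).abs
    have h2 : |l - 1| ≤ 0 := le_of_tendsto_of_tendsto' h1 haφ hb
    have h3 := abs_nonpos_iff.1 h2
    linarith
  have key := hG p (fun i => zero_of (hpt i).norm fun k => hv1 (φ k) i)
    (fun i j hij => by
      have h1 : Tendsto (fun k => 1 - a (φ k)) atTop (𝓝 (1 - 0)) := haφ.const_sub 1
      rw [sub_zero] at h1
      exact le_of_tendsto_of_tendsto' h1 ((hpt i).sub (hpt j)).norm
        fun k => (hv2 (φ k) i j hij).le)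
    (fun i j hij => zero_of ((hpt i).sub (hpt j)).norm fun k => hv3 (φ k) i j hij)
  obtain ⟨k, hk⟩ := (hlim.eventually key).exists
  exact hv4 _ hk

lemma ip_le_half {u v : E3} (hu : ‖u‖ = 1) (hv : ‖v‖ = 1) (h : 1 ≤ ‖u - v‖) :
    ⟪u, v⟫ ≤ 1 / 2 := by
  have := norm_sub_sq_real u v
  rw [hu, hv] at this
  nlinarith

open Filter Topology in
/-- A point has at most twelve nearest neighbours. -/
theorem eventually_card : ∀ᶠ α in 𝓝[>] (0 : ℝ), ∀ v : Fin 13 → E3, (∀ i, |‖v i‖ - 1| ≤ α) →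
    (∀ i j, i ≠ j → 1 - α < ‖v i - v j‖) → False := by
  have := eventually_of_exact (n := 13) (fun _ _ => False) (fun _ => False) (by
    intro p h1 h2 _
    exfalso
    have := kissing (s := Finset.univ) (v := p) (fun i _ => (norm_one_iff _).1 (h1 i))
      (fun i _ j _ hij => ip_le_half (h1 i) (h1 j) (h2 i j hij))
    simp at this)
  filter_upwards [this] with α hα v h1 h2
  exact hα v h1 h2 (fun _ _ h => h.elim)

open Filter Topology in
/-- Nearly exact configurations with at most twelve points and forty-eight contacts are near one of
the two models. -/
theorem eventually_good {n : ℕ} (hn : n ≤ 12) {C : Fin n → Fin n → Prop}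
    (hsymm : ∀ i j, C i j → C j i) (hC : {q : Fin n × Fin n | C q.1 q.2}.ncard = 48)
    {ε : ℝ} (hε : 0 < ε) :
    ∀ᶠ α in 𝓝[>] (0 : ℝ), ∀ v : Fin n → E3, (∀ i, |‖v i‖ - 1| ≤ α) →
      (∀ i j, i ≠ j → 1 - α < ‖v i - v j‖) → (∀ i j, C i j → |‖v i - v j‖ - 1| ≤ α) →
      Good C ε v := by
  refine eventually_of_exact C _ fun p h1 h2 h3 => ?_
  have h1' := fun i => (norm_one_iff _).1 (h1 i)
  obtain ⟨hnn, Q, hQ, R, g, hdet, hbij, hadj, hR⟩ := exact_good hn hsymm hC h1'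
    (fun i j hij => ip_le_half (h1 i) (h1 j) (h2 i j hij))
    (fun i j hij => (norm_sub_one_iff (h1' i) (h1' j)).1 (h3 i j hij))
  filter_upwards [Metric.ball_mem_nhds p hε] with v hv
  refine ⟨hnn, Q, hQ, R, g, hdet, hbij, hadj, fun η hη => ?_⟩
  have e : R η = p (g η) := by
    rw [← sub_eq_zero, ← norm_le_zero_iff]
    exact hR η hη
  rw [e, ← dist_eq_norm, dist_comm]
  exact (dist_le_pi_dist v p _).trans (Metric.mem_ball.1 hv).le

open Filter Topology in
/-- There are finitely many contact graphs, so the bound on `α` may be chosen uniformly. -/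
theorem exists_bound {ε : ℝ} (hε : 0 < ε) : ∃ α₀ > (0 : ℝ), ∀ α ∈ Set.Ioo 0 α₀,
    (∀ v : Fin 13 → E3, (∀ i, |‖v i‖ - 1| ≤ α) →
      (∀ i j, i ≠ j → 1 - α < ‖v i - v j‖) → False) ∧
    ∀ (n : Fin 13) (C : Fin n → Fin n → Prop), (∀ i j, C i j → C j i) →
      {q : Fin n × Fin n | C q.1 q.2}.ncard = 48 → ∀ v : Fin n → E3, (∀ i, |‖v i‖ - 1| ≤ α) →
      (∀ i j, i ≠ j → 1 - α < ‖v i - v j‖) → (∀ i j, C i j → |‖v i - v j‖ - 1| ≤ α) →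
      Good C ε v := by
  have h : ∀ᶠ α in 𝓝[>] (0 : ℝ), ∀ (n : Fin 13) (C : Fin n → Fin n → Prop),
      (∀ i j, C i j → C j i) →
      {q : Fin n × Fin n | C q.1 q.2}.ncard = 48 → ∀ v : Fin n → E3, (∀ i, |‖v i‖ - 1| ≤ α) →
      (∀ i j, i ≠ j → 1 - α < ‖v i - v j‖) → (∀ i j, C i j → |‖v i - v j‖ - 1| ≤ α) →
      Good C ε v := by
    rw [eventually_all]
    intro n
    rw [eventually_all]
    intro C
    by_cases hs : ∀ i j, C i j → C j i
    · by_cases hC : {q : Fin n × Fin n | C q.1 q.2}.ncard = 48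
      · filter_upwards [eventually_good (Nat.lt_succ_iff.1 n.2) hs hC hε] with α hα _ _
        exact hα
      · exact Eventually.of_forall fun α _ h => absurd h hC
    · exact Eventually.of_forall fun α h => absurd h hs
  obtain ⟨α₀, h0, hsub⟩ := (mem_nhdsGT_iff_exists_Ioo_subset).1 (eventually_card.and h)
  exact ⟨α₀, h0, fun α hα => hsub hα⟩

/-- Structure of maximal local neighborhoods: if `A(x)` has exactly 48 elements, then `N(x)`
has 12 elements and is, up to a small rotation error, a copy of the cuboctahedron or the
twisted cuboctahedron. -/
theorem maximal_neighborhood_structure (ε : ℝ) (hε : 0 < ε) :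
    ∃ α₀ > (0:ℝ), ∀ α ∈ Set.Ioo (0:ℝ) α₀, ∀ (ι : Type) (X : Finset ι) (y : ι → E3),
      (∀ x ∈ X, ∀ x' ∈ X, x ≠ x' → 1 - α < ‖y x - y x'‖) →
      ∀ x ∈ X, (nbhdEdges α X y x).ncard = 48 →
        (nbhd α X y x).ncard = 12 ∧
        ∃ Q ∈ ({Qco, Qtco} : Set (Set E3)), ∃ Φ : E3 → ι, ∃ R : E3 ≃ₗᵢ[ℝ] E3,
          LinearMap.det (R.toLinearEquiv : E3 →ₗ[ℝ] E3) = 1 ∧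
          Set.BijOn Φ (Q ∪ {0}) (nbhd α X y x ∪ {x}) ∧ Φ 0 = x ∧
          (∀ η ∈ Q ∪ ({0} : Set E3), ∀ η' ∈ Q ∪ ({0} : Set E3), η ≠ η' →
            (|‖y (Φ η) - y (Φ η')‖ - 1| ≤ α ↔ ‖η - η'‖ = 1)) ∧
          (∀ η ∈ Q ∪ ({0} : Set E3), ‖R η + y x - y (Φ η)‖ ≤ ε) := by
  obtain ⟨α₀, h0, hb⟩ := exists_bound hε
  refine ⟨α₀, h0, fun α hα ι X y hsep x hx hedges => ?_⟩
  obtain ⟨hb13, hbn⟩ := hb α hα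
  set N := nbhd α X y x with hN
  have hfin : N.Finite := X.finite_toSet.subset fun z hz => hz.1
  -- any injective labelling of neighbours of `x` gives a nearly exact configuration
  have near : ∀ {n : ℕ} (e : Fin n → ι), (∀ i, e i ∈ N) → Function.Injective e →
      (∀ i, |‖y (e i) - y x‖ - 1| ≤ α) ∧
      ∀ i j, i ≠ j → 1 - α < ‖(y (e i) - y x) - (y (e j) - y x)‖ := by
    intro n e he hinj
    refine ⟨fun i => (he i).2.2, fun i j hij => ?_⟩
    rw [sub_sub_sub_cancel_right]
    exact hsep _ (he i).1 _ (he j).1 fun h => hij (hinj h)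
  have hcard : N.ncard ≤ 12 := by
    by_contra hgt
    obtain ⟨S, hSN, hS⟩ := Set.exists_subset_card_eq (show 13 ≤ N.ncard by omega)
    have hSfin : S.Finite := hfin.subset hSN
    have : Fintype S := hSfin.fintype
    have hc : Fintype.card S = 13 := by rw [← Nat.card_eq_fintype_card, Nat.card_coe_set_eq, hS]
    let e := (Fintype.equivFinOfCardEq hc).symm
    obtain ⟨n1, n2⟩ := near (fun i => (e i : ι)) (fun i => hSN (e i).2)
      (Subtype.val_injective.comp e.injective)
    exact hb13 _ n1 n2
  have : Fintype N := hfin.fintype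
  have hc : Fintype.card N = N.ncard := by
    rw [← Nat.card_eq_fintype_card, Nat.card_coe_set_eq]
  set n : Fin 13 := ⟨N.ncard, by omega⟩ with hn
  let e : Fin n ≃ N := (Fintype.equivFinOfCardEq hc).symm
  have heN : ∀ i, (e i : ι) ∈ N := fun i => (e i).2
  have hinj : Function.Injective fun i => (e i : ι) := Subtype.val_injective.comp e.injective
  let C : Fin n → Fin n → Prop := fun i j => i ≠ j ∧ |‖y (e i) - y (e j)‖ - 1| ≤ α
  have hsymm : ∀ i j, C i j → C j i := fun i j h => ⟨h.1.symm, by rw [norm_sub_rev]; exact h.2⟩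
  have hC : {q : Fin n × Fin n | C q.1 q.2}.ncard = 48 := by
    rw [← hedges, ← Set.ncard_image_of_injective _ (hinj.prodMap hinj)]
    congr 1
    ext ⟨z, w⟩
    constructor
    · rintro ⟨⟨i, j⟩, ⟨hij, hd⟩, hzw⟩
      simp only [Prod.map, Prod.mk.injEq] at hzw
      obtain ⟨rfl, rfl⟩ := hzw
      exact ⟨heN i, heN j, fun h => hij (hinj h), hd⟩
    · rintro ⟨hz, hw, hzw, hd⟩
      refine ⟨(e.symm ⟨z, hz⟩, e.symm ⟨w, hw⟩), ⟨fun h => hzw ?_, ?_⟩, ?_⟩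
      · exact congrArg Subtype.val (e.symm.injective h)
      · simpa using hd
      · simp
  obtain ⟨n1, n2⟩ := near (fun i => (e i : ι)) heN hinj
  obtain ⟨hn12, Q, hQ, R, g, hdet, hbij, hadj, happ⟩ := hbn n C hsymm hC
    (fun i => y (e i) - y x) n1 n2 (fun i j hij => by
      rw [sub_sub_sub_cancel_right]
      exact hij.2)
  refine ⟨hn12, Q, hQ, fun η => if η = 0 then x else e (g η), R, hdet, ?_, if_pos rfl, ?_, ?_⟩
  all_goals
    have hQ1 : ∀ η ∈ Q, ‖η‖ = 1 := by
      rcases hQ with rfl | rfl <;> exact fun η hη => hη.2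
    have hQ0 : ∀ η ∈ Q, η ≠ 0 := by
      rintro η hη rfl
      simpa using hQ1 0 hη
  · refine ⟨?_, ?_, ?_⟩
    · rintro η (hη | rfl)
      · simp only [if_neg (hQ0 η hη)]
        exact Or.inl (heN _)
      · exact Or.inr (if_pos rfl)
    · rintro η (hη | rfl) η' (hη' | rfl) h
      · simp only [if_neg (hQ0 η hη), if_neg (hQ0 η' hη')] at h
        exact hbij.injOn hη hη' (hinj h)
      · simp only [if_neg (hQ0 η hη), if_true] at h
        exact absurd h (heN _).2.1
      · simp only [if_neg (hQ0 η' hη'), if_true] at h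
        exact absurd h.symm (heN _).2.1
      · rfl
    · rintro z (hz | rfl)
      · obtain ⟨η, hη, hg⟩ := hbij.surjOn (Set.mem_univ (e.symm ⟨z, hz⟩))
        refine ⟨η, Or.inl hη, ?_⟩
        simp only [if_neg (hQ0 η hη)]
        rw [hg, Equiv.apply_symm_apply]
      · exact ⟨0, Or.inr rfl, if_pos rfl⟩
  · rintro η (hη | rfl) η' (hη' | rfl) hne
    · simp only [if_neg (hQ0 η hη), if_neg (hQ0 η' hη')]
      rw [← hadj η hη η' hη']
      exact ⟨fun h => ⟨fun h' => hne (hbij.injOn hη hη' h'), h⟩, fun h => h.2⟩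
    · simp only [if_neg (hQ0 η hη), if_true, sub_zero]
      exact ⟨fun _ => hQ1 η hη, fun _ => n1 (g η)⟩
    · simp only [if_neg (hQ0 η' hη'), if_true, zero_sub, norm_neg]
      refine ⟨fun _ => hQ1 η' hη', fun _ => ?_⟩
      rw [norm_sub_rev]
      exact n1 (g η')
    · exact absurd rfl hne
  · rintro η (hη | rfl)
    · simp only [if_neg (hQ0 η hη)]
      have := happ η hη
      rwa [← sub_add, sub_add_eq_add_sub] at this
    · simp only [if_true, map_zero, zero_add, sub_self, norm_zero]
      exact hε.le

end
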